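/- arXiv:2310.14517 — 5 statements merged into one kernel-verified Lean document; each statement's English description precedes it below -/
import Mathlib

section
/- Let d ≥ 5. There exists a constant C > 0 such that for every measurable function f : ℝ^d → [0, ∞], ( ∫_{ℝ^d} ( ∫_{ℝ^d} |x − y|^{-(3d+4)/4} f(y) dy )⁴ dx )^{1/2} ≤ C ( ∫_{ℝ^d} ( ∫_{ℝ^d} |x − y|^{-(d+4)/2} f(y)² dy )² dx )^{1/2}; that is, the squared L⁴ norm of the Riesz potential of order (d−4)/4 of f is bounded by a constant times the L² norm of the Riesz potential of order (d−4)/2 of f². -/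
open MeasureTheory ENNReal

/-!
Write `d` for the dimension, `k_α(x) = |x|^(α - d)` and `I_α f = k_α ∗ f`. The estimate rests on the
scale-invariant kernel `|x|^p (R + |x|)^q`, whose integral is `R^(p + q + d)` times its value at
`R = 1`, and is used twice.

* Writing `k_α²` as the product of `|x|^(2α - β - d) (R + |x|)^(2β)` and
  `|x|^(β - d) (R + |x|)^(-2β)`, Cauchy–Schwarz bounds `(I_α f)²` by a constant times
  `R^β I_{2α-β}(f²) + R^(-β) I_{2α+β}(f²)`. Optimizing in `R` gives the Carlson-type inequality
  `(I_α f)⁴ ≤ c I_{2α-β}(f²) I_{2α+β}(f²)`.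
* With `R = |y - z|`, the triangle inequality compares `k_α(x - y) k_β(x - z)` with such kernels
  centred at `y` and `z`, so `∫ k_α(x - y) k_β(x - z) dx` is comparable to `k_{α+β}(y - z)`. By
  Tonelli, `∫ I_α g I_β g` is therefore controlled by `∫ I_γ g I_δ g` whenever `α + β = γ + δ`.

The theorem follows by taking `β = α` in the first step and `γ = δ = 2α` in the second.
-/

open Module Set Filter Asymptotics
open scoped NNReal Topology

section Inequalities

lemma add_rpow_le_two_rpow_mul_add {a b q : ℝ} (ha : 0 ≤ a) (hb : 0 ≤ b) (hq : 0 ≤ q) :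
    (a + b) ^ q ≤ 2 ^ q * (a ^ q + b ^ q) := by
  calc (a + b) ^ q ≤ (2 * max a b) ^ q := by
        gcongr
        linarith [le_max_left a b, le_max_right a b]
    _ = 2 ^ q * max a b ^ q := Real.mul_rpow zero_le_two (le_max_of_le_left ha)
    _ ≤ 2 ^ q * (a ^ q + b ^ q) := by
        gcongr
        rcases max_choice a b with h | h <;> rw [h]
        · exact le_add_of_nonneg_right (by positivity)
        · exact le_add_of_nonneg_left (by positivity)

lemma integrableOn_Ioi_rpow_mul_one_add_rpow {a q : ℝ} (ha : 0 < a) (haq : a + q < 0) :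
    IntegrableOn (fun s : ℝ => s ^ (a - 1) * (1 + s) ^ q) (Ioi 0) := by
  refine mellin_convergent_of_isBigO_scalar (f := fun s => (1 + s) ^ q) (a := -q) (b := 0)
    ?_ ?_ (by linarith) ?_ ha
  · refine ContinuousOn.locallyIntegrableOn (fun s hs => ?_) measurableSet_Ioi
    have hs_ne : 1 + s ≠ 0 := by linarith [mem_Ioi.1 hs]
    exact ContinuousAt.continuousWithinAt (by fun_prop (disch := simp [hs_ne]))
  · refine IsBigO.of_bound 1 ?_
    filter_upwards [eventually_gt_atTop 0] with s hs
    rw [neg_neg, one_mul, Real.norm_of_nonneg (by positivity), Real.norm_of_nonneg (by positivity)]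
    exact Real.rpow_le_rpow_of_nonpos hs (by linarith) (by linarith)
  · refine IsBigO.of_bound 1 ?_
    filter_upwards [self_mem_nhdsWithin] with s (hs : 0 < s)
    rw [neg_zero, Real.rpow_zero, norm_one, one_mul, Real.norm_of_nonneg (by positivity)]
    exact Real.rpow_le_one_of_one_le_of_nonpos (by linarith) (by linarith)

lemma sq_le_four_mul_of_forall_le_add {v P Q : ℝ≥0∞} (hP : P ≠ 0) (hQ : Q ≠ 0)
    (h : ∀ l : ℝ, 0 < l → v ≤ ENNReal.ofReal l * P + ENNReal.ofReal l⁻¹ * Q) :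
    v ^ 2 ≤ 4 * (P * Q) := by
  rcases eq_or_ne P ⊤ with rfl | hP_top
  · simp [hQ, ENNReal.top_mul, ENNReal.mul_top]
  rcases eq_or_ne Q ⊤ with rfl | hQ_top
  · simp [hP, ENNReal.mul_top]
  have hp : 0 < P.toReal := ENNReal.toReal_pos hP hP_top
  have hq : 0 < Q.toReal := ENNReal.toReal_pos hQ hQ_top
  rw [← ENNReal.ofReal_toReal hP_top, ← ENNReal.ofReal_toReal hQ_top] at h ⊢
  set p := P.toReal
  set q := Q.toReal
  have balanced : √(q / p) * p = √(p * q) ∧ (√(q / p))⁻¹ * q = √(p * q) := by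
    rw [Real.sqrt_div hq.le, Real.sqrt_mul hp.le]
    constructor
    · field_simp
      rw [Real.sq_sqrt hp.le]
    · field_simp
      rw [Real.sq_sqrt hq.le]
  have hv := h √(q / p) (by positivity)
  rw [← ENNReal.ofReal_mul (by positivity), ← ENNReal.ofReal_mul (by positivity), balanced.1,
    balanced.2, ← two_mul] at hv
  calc v ^ 2 ≤ (2 * ENNReal.ofReal √(p * q)) ^ 2 := by gcongr
    _ = 4 * (ENNReal.ofReal p * ENNReal.ofReal q) := by
      rw [mul_pow, ← ENNReal.ofReal_pow (by positivity), Real.sq_sqrt (by positivity),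
        ENNReal.ofReal_mul hp.le]
      norm_num

lemma sq_lintegral_le_mul_of_sq_le_mul {X : Type*} [MeasurableSpace X] {μ : Measure X}
    {F G H : X → ℝ≥0∞} (hF : AEMeasurable F μ) (hG : AEMeasurable G μ)
    (h : ∀ᵐ x ∂μ, H x ^ 2 ≤ F x * G x) :
    (∫⁻ x, H x ∂μ) ^ 2 ≤ (∫⁻ x, F x ∂μ) * ∫⁻ x, G x ∂μ := by
  have h_sqrt : ∫⁻ x, H x ∂μ ≤ ∫⁻ x, F x ^ (2⁻¹ : ℝ) * G x ^ (2⁻¹ : ℝ) ∂μ := by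
    refine lintegral_mono_ae (h.mono fun x hx => ?_)
    rw [← ENNReal.mul_rpow_of_nonneg _ _ (by positivity)]
    exact (ENNReal.le_rpow_inv_iff two_pos).2 (by simpa using hx)
  have h_holder := h_sqrt.trans (ENNReal.lintegral_mul_norm_pow_le hF hG (p := 2⁻¹) (q := 2⁻¹)
    (by positivity) (by positivity) (by norm_num))
  rw [← ENNReal.mul_rpow_of_nonneg _ _ (by positivity), ENNReal.le_rpow_inv_iff two_pos] at h_holder
  simpa using h_holder

end Inequalities

section Kernels

variable {E : Type*} [NormedAddCommGroup E]

/-- The kernel `|x|^p (R + |x|)^q`, which behaves like `R^q |x|^p` for `|x| ≪ R` and like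
`|x|^(p + q)` for `|x| ≫ R`. -/
noncomputable def twoScaleKernel (p q R : ℝ) (x : E) : ℝ≥0∞ :=
  ENNReal.ofReal (‖x‖ ^ p * (R + ‖x‖) ^ q)

@[fun_prop]
lemma measurable_twoScaleKernel [MeasurableSpace E] [OpensMeasurableSpace E] (p q R : ℝ) :
    Measurable (twoScaleKernel p q R : E → ℝ≥0∞) := by
  unfold twoScaleKernel
  fun_prop

lemma twoScaleKernel_le_add (p : ℝ) {q R : ℝ} (hq : 0 ≤ q) (hR : 0 ≤ R) {x : E} (hx : x ≠ 0) :
    twoScaleKernel p q R x ≤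
      ENNReal.ofReal (2 ^ q) * (ENNReal.ofReal (R ^ q) * ENNReal.ofReal (‖x‖ ^ p) +
        ENNReal.ofReal (‖x‖ ^ (p + q))) := by
  rw [twoScaleKernel, ← ENNReal.ofReal_mul (by positivity),
    ← ENNReal.ofReal_add (by positivity) (by positivity), ← ENNReal.ofReal_mul (by positivity)]
  refine ENNReal.ofReal_le_ofReal ?_
  calc ‖x‖ ^ p * (R + ‖x‖) ^ q ≤ ‖x‖ ^ p * (2 ^ q * (R ^ q + ‖x‖ ^ q)) := by
        gcongr
        exact add_rpow_le_two_rpow_mul_add hR (norm_nonneg x) hq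
    _ = 2 ^ q * (R ^ q * ‖x‖ ^ p + ‖x‖ ^ (p + q)) := by
        rw [Real.rpow_add (norm_pos_iff.2 hx)]
        ring

variable [NormedSpace ℝ E]

lemma twoScaleKernel_smul (p q : ℝ) {R : ℝ} (hR : 0 < R) (x : E) :
    twoScaleKernel p q R (R • x) = ENNReal.ofReal (R ^ (p + q)) * twoScaleKernel p q 1 x := by
  rw [twoScaleKernel, twoScaleKernel, ← ENNReal.ofReal_mul (by positivity), norm_smul,
    Real.norm_of_nonneg hR.le, ← mul_one_add, Real.mul_rpow hR.le (norm_nonneg x),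
    Real.mul_rpow hR.le (by positivity), Real.rpow_add hR]
  ring_nf

/-- The kernel `|x|^(α - d)`, `d = dim E`, of the Riesz potential of order `α`, without the
normalizing constant. -/
noncomputable def rieszKernel (α : ℝ) (x : E) : ℝ≥0∞ :=
  ENNReal.ofReal (‖x‖ ^ (α - finrank ℝ E))

@[fun_prop]
lemma measurable_rieszKernel [MeasurableSpace E] [OpensMeasurableSpace E] (α : ℝ) :
    Measurable (rieszKernel α : E → ℝ≥0∞) := by
  unfold rieszKernel
  fun_prop

lemma rieszKernel_pos (α : ℝ) {x : E} (hx : x ≠ 0) : 0 < rieszKernel α x :=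
  ENNReal.ofReal_pos.2 (Real.rpow_pos_of_pos (norm_pos_iff.2 hx) _)

lemma rieszKernel_sq_eq_twoScaleKernel_mul (α β : ℝ) {R : ℝ} (hR : 0 < R) {x : E} (hx : x ≠ 0) :
    rieszKernel α x ^ 2 = twoScaleKernel (2 * α - β - finrank ℝ E) (2 * β) R x *
      twoScaleKernel (β - finrank ℝ E) (-(2 * β)) R x := by
  have hx0 : 0 < ‖x‖ := norm_pos_iff.2 hx
  have hne : (R + ‖x‖) ^ (2 * β) ≠ 0 := by positivity
  rw [rieszKernel, twoScaleKernel, twoScaleKernel, ← ENNReal.ofReal_mul (by positivity),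
    ← ENNReal.ofReal_pow (by positivity), ← Real.rpow_mul_natCast hx0.le,
    Real.rpow_neg (by positivity), mul_mul_mul_comm, mul_inv_cancel₀ hne, ← Real.rpow_add hx0]
  ring_nf

lemma rieszKernel_mul_le_twoScaleKernel (α : ℝ) {β : ℝ} (hβ : β ≤ finrank ℝ E) {x y z : E}
    (hyz : y ≠ z) (hx : ‖x - y‖ ≤ ‖x - z‖) :
    rieszKernel α (x - y) * rieszKernel β (x - z) ≤ ENNReal.ofReal (3⁻¹ ^ (β - finrank ℝ E)) *
      twoScaleKernel (α - finrank ℝ E) (β - finrank ℝ E) ‖y - z‖ (x - y) := by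
  have hyz0 : 0 < ‖y - z‖ := norm_pos_iff.2 (sub_ne_zero.2 hyz)
  have h_triangle : ‖y - z‖ ≤ ‖x - y‖ + ‖x - z‖ := by
    simpa [norm_sub_rev y x] using norm_sub_le_norm_sub_add_norm_sub y x z
  have h_anti : ‖x - z‖ ^ (β - finrank ℝ E) ≤
      (3⁻¹ * (‖y - z‖ + ‖x - y‖)) ^ (β - finrank ℝ E) :=
    Real.rpow_le_rpow_of_nonpos (by positivity) (by linarith) (by linarith)
  rw [rieszKernel, rieszKernel, twoScaleKernel, ← ENNReal.ofReal_mul (by positivity),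
    ← ENNReal.ofReal_mul (by positivity)]
  refine ENNReal.ofReal_le_ofReal ?_
  rw [mul_left_comm, ← Real.mul_rpow (by positivity) (by positivity)]
  gcongr

lemma twoScaleKernel_le_rieszKernel_mul (α : ℝ) {β : ℝ} (hβ : β ≤ finrank ℝ E) {x y z : E}
    (hxz : x ≠ z) :
    twoScaleKernel (α - finrank ℝ E) (β - finrank ℝ E) ‖y - z‖ (x - y) ≤
      rieszKernel α (x - y) * rieszKernel β (x - z) := by
  have h_triangle : ‖x - z‖ ≤ ‖y - z‖ + ‖x - y‖ := by
    simpa [add_comm] using norm_sub_le_norm_sub_add_norm_sub x y z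
  rw [rieszKernel, rieszKernel, twoScaleKernel, ← ENNReal.ofReal_mul (by positivity)]
  refine ENNReal.ofReal_le_ofReal (mul_le_mul_of_nonneg_left ?_ (by positivity))
  exact Real.rpow_le_rpow_of_nonpos (norm_pos_iff.2 (sub_ne_zero.2 hxz)) h_triangle (by linarith)

end Kernels

section Potentials

variable {E : Type*} [NormedAddCommGroup E] [NormedSpace ℝ E] [MeasurableSpace E]

/-- The unnormalized Riesz potential `|·|^(α - d) ∗ f` of order `α` of a nonnegative function. -/
noncomputable def rieszPotential (μ : Measure E) (α : ℝ) (f : E → ℝ≥0∞) (x : E) : ℝ≥0∞ :=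
  ∫⁻ y, rieszKernel α (x - y) * f y ∂μ

variable [BorelSpace E]

lemma rieszPotential_eq_zero_iff (μ : Measure E) [NullSingletonClass μ] (α : ℝ)
    {f : E → ℝ≥0∞} (hf : AEMeasurable f μ) (x : E) :
    rieszPotential μ α f x = 0 ↔ f =ᵐ[μ] 0 := by
  rw [rieszPotential, lintegral_eq_zero_iff' (by fun_prop)]
  refine ⟨fun h => ?_, fun h => h.mono fun y hy => by simp [hy]⟩
  filter_upwards [h, Measure.ae_ne μ x] with y hy hyx
  exact (mul_eq_zero.1 hy).resolve_left (rieszKernel_pos α (sub_ne_zero.2 hyx.symm)).ne'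

variable [FiniteDimensional ℝ E]

lemma lintegral_rieszPotential_mul (μ : Measure E) [SFinite μ] (α β : ℝ) {f g : E → ℝ≥0∞}
    (hf : Measurable f) (hg : Measurable g) :
    ∫⁻ x, rieszPotential μ α f x * rieszPotential μ β g x ∂μ =
      ∫⁻ y, ∫⁻ z, (∫⁻ x, rieszKernel α (x - y) * rieszKernel β (x - z) ∂μ) * (f y * g z)
        ∂μ ∂μ := by
  calc ∫⁻ x, rieszPotential μ α f x * rieszPotential μ β g x ∂μ
      = ∫⁻ x, ∫⁻ y, ∫⁻ z, rieszKernel α (x - y) * f y * (rieszKernel β (x - z) * g z)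
          ∂μ ∂μ ∂μ :=
        lintegral_congr fun x => (lintegral_lintegral_mul (by fun_prop) (by fun_prop)).symm
    _ = ∫⁻ y, ∫⁻ x, ∫⁻ z, rieszKernel α (x - y) * f y * (rieszKernel β (x - z) * g z)
          ∂μ ∂μ ∂μ :=
        lintegral_lintegral_swap (Measurable.lintegral_prod_right (by fun_prop)).aemeasurable
    _ = ∫⁻ y, ∫⁻ z, ∫⁻ x, rieszKernel α (x - y) * f y * (rieszKernel β (x - z) * g z)
          ∂μ ∂μ ∂μ :=
        lintegral_congr fun y => lintegral_lintegral_swap (by fun_prop)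
    _ = _ := by
        refine lintegral_congr fun y => lintegral_congr fun z => ?_
        simp_rw [mul_mul_mul_comm _ (f y)]
        exact lintegral_mul_const _ (by fun_prop)

variable (μ : Measure E) [μ.IsAddHaarMeasure]

lemma lintegral_eq_ofReal_rpow_finrank_mul_lintegral_smul {g : E → ℝ≥0∞} (hg : Measurable g)
    {R : ℝ} (hR : 0 < R) :
    ∫⁻ x, g x ∂μ = ENNReal.ofReal (R ^ (finrank ℝ E : ℝ)) * ∫⁻ x, g (R • x) ∂μ := by
  have hmap := Measure.map_addHaar_smul μ hR.ne'
  rw [← lintegral_map hg (measurable_const_smul R), hmap, lintegral_smul_measure, smul_eq_mul,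
    ← mul_assoc, Real.rpow_natCast, abs_of_pos (by positivity),
    ← ENNReal.ofReal_mul (by positivity), mul_inv_cancel₀ (by positivity), ENNReal.ofReal_one,
    one_mul]

lemma lintegral_twoScaleKernel (p q : ℝ) {R : ℝ} (hR : 0 < R) :
    ∫⁻ x, twoScaleKernel p q R x ∂μ =
      ENNReal.ofReal (R ^ (p + q + finrank ℝ E)) * ∫⁻ x, twoScaleKernel p q 1 x ∂μ := by
  rw [lintegral_eq_ofReal_rpow_finrank_mul_lintegral_smul μ (measurable_twoScaleKernel p q R) hR]
  simp_rw [twoScaleKernel_smul p q hR]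
  rw [lintegral_const_mul _ (by fun_prop), ← mul_assoc, ← ENNReal.ofReal_mul (by positivity),
    ← Real.rpow_add hR, add_comm (finrank ℝ E : ℝ)]

lemma lintegral_twoScaleKernel_sub (α β : ℝ) {y z : E} (hyz : y ≠ z) :
    ∫⁻ x, twoScaleKernel (α - finrank ℝ E) (β - finrank ℝ E) ‖y - z‖ (x - y) ∂μ =
      (∫⁻ x, twoScaleKernel (α - finrank ℝ E) (β - finrank ℝ E) 1 x ∂μ) *
        rieszKernel (α + β) (y - z) := by
  rw [lintegral_sub_right_eq_self (twoScaleKernel _ _ ‖y - z‖) y,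
    lintegral_twoScaleKernel μ _ _ (norm_pos_iff.2 (sub_ne_zero.2 hyz)), rieszKernel, mul_comm]
  ring_nf

section Nontrivial

variable [Nontrivial E]

lemma lintegral_twoScaleKernel_one_ne_top {p q : ℝ} (hp : -(finrank ℝ E : ℝ) < p)
    (hpq : p + q < -(finrank ℝ E : ℝ)) : ∫⁻ x, twoScaleKernel p q 1 x ∂μ ≠ ⊤ := by
  suffices h : Integrable (fun x : E => ‖x‖ ^ p * (1 + ‖x‖) ^ q) μ from h.lintegral_lt_top.ne
  refine (integrable_fun_norm_addHaar μ (f := fun s => s ^ p * (1 + s) ^ q)).2 <|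
    (integrableOn_Ioi_rpow_mul_one_add_rpow (a := finrank ℝ E + p) (q := q) (by linarith)
      (by linarith)).congr_fun (fun s (hs : 0 < s) => ?_) measurableSet_Ioi
  simp only [smul_eq_mul]
  rw [← Real.rpow_natCast, Nat.cast_pred finrank_pos, ← mul_assoc, ← Real.rpow_add hs]
  ring_nf

lemma lintegral_twoScaleKernel_one_pos (p q : ℝ) : 0 < ∫⁻ x : E, twoScaleKernel p q 1 x ∂μ := by
  refine pos_iff_ne_zero.2 fun h => ?_
  obtain ⟨x, hx, hx0⟩ :=
    (((lintegral_eq_zero_iff (by fun_prop)).1 h).and (Measure.ae_ne μ 0)).exists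
  have hx_pos : 0 < ‖x‖ ^ p * (1 + ‖x‖) ^ q :=
    mul_pos (Real.rpow_pos_of_pos (norm_pos_iff.2 hx0) p) (by positivity)
  exact (ENNReal.ofReal_pos.2 hx_pos).ne' hx

lemma lintegral_twoScaleKernel_mul_le (γ : ℝ) {q R : ℝ} (hq : 0 ≤ q) (hR : 0 ≤ R) {g : E → ℝ≥0∞}
    (hg : AEMeasurable g μ) (x : E) :
    ∫⁻ y, twoScaleKernel (γ - finrank ℝ E) q R (x - y) * g y ∂μ ≤
      ENNReal.ofReal (2 ^ q) *
        (ENNReal.ofReal (R ^ q) * rieszPotential μ γ g x + rieszPotential μ (γ + q) g x) := by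
  rw [rieszPotential, rieszPotential, ← lintegral_const_mul' _ _ ofReal_ne_top,
    ← lintegral_add_left' (by fun_prop), ← lintegral_const_mul' _ _ ofReal_ne_top]
  refine lintegral_mono_ae ((Measure.ae_ne μ x).mono fun y hy => ?_)
  grw [twoScaleKernel_le_add _ hq hR (sub_ne_zero.2 hy.symm), sub_add_eq_add_sub, rieszKernel,
    rieszKernel, mul_assoc, add_mul, mul_assoc]

lemma sq_rieszPotential_le_lintegral_mul (α β : ℝ) {R : ℝ} (hR : 0 < R) {f : E → ℝ≥0∞}
    (hf : AEMeasurable f μ) (x : E) :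
    rieszPotential μ α f x ^ 2 ≤
      (∫⁻ y, twoScaleKernel (2 * α - β - finrank ℝ E) (2 * β) R (x - y) * (f ^ 2) y ∂μ) *
        ∫⁻ y, twoScaleKernel (β - finrank ℝ E) (-(2 * β)) R y ∂μ := by
  rw [← lintegral_sub_left_eq_self (twoScaleKernel (β - finrank ℝ E) (-(2 * β)) R) x]
  refine sq_lintegral_le_mul_of_sq_le_mul (.mul (by fun_prop) (hf.pow_const 2)) (by fun_prop)
    ((Measure.ae_ne μ x).mono fun y hy => ?_)
  rw [mul_pow, rieszKernel_sq_eq_twoScaleKernel_mul α β hR (sub_ne_zero.2 hy.symm), mul_right_comm,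
    Pi.pow_apply]

lemma sq_rieszPotential_le (α : ℝ) {β R : ℝ} (hβ : 0 ≤ β) (hR : 0 < R) {f : E → ℝ≥0∞}
    (hf : AEMeasurable f μ) (x : E) :
    rieszPotential μ α f x ^ 2 ≤
      ENNReal.ofReal (2 ^ (2 * β)) * (∫⁻ y, twoScaleKernel (β - finrank ℝ E) (-(2 * β)) 1 y ∂μ) *
        (ENNReal.ofReal (R ^ β) * rieszPotential μ (2 * α - β) (f ^ 2) x +
          ENNReal.ofReal (R ^ β)⁻¹ * rieszPotential μ (2 * α + β) (f ^ 2) x) := by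
  set A := ∫⁻ y, twoScaleKernel (β - finrank ℝ E) (-(2 * β)) 1 y ∂μ
  set P := rieszPotential μ (2 * α - β) (f ^ 2) x
  set Q := rieszPotential μ (2 * α + β) (f ^ 2) x
  have h_weight : ∫⁻ y, twoScaleKernel (2 * α - β - finrank ℝ E) (2 * β) R (x - y) * (f ^ 2) y ∂μ ≤
      ENNReal.ofReal (2 ^ (2 * β)) * (ENNReal.ofReal (R ^ (2 * β)) * P + Q) := by
    have h := lintegral_twoScaleKernel_mul_le μ (2 * α - β) (q := 2 * β) (by positivity) hR.le
      (hf.pow_const 2) x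
    rwa [show 2 * α - β + 2 * β = 2 * α + β by ring] at h
  have h_dual : ∫⁻ y, twoScaleKernel (β - finrank ℝ E) (-(2 * β)) R y ∂μ =
      ENNReal.ofReal (R ^ β)⁻¹ * A := by
    rw [lintegral_twoScaleKernel μ _ _ hR, ← Real.rpow_neg hR.le,
      show β - finrank ℝ E + -(2 * β) + finrank ℝ E = -β by ring]
  have h_scale : ENNReal.ofReal (R ^ (2 * β)) * ENNReal.ofReal (R ^ β)⁻¹ =
      ENNReal.ofReal (R ^ β) := by
    rw [← ENNReal.ofReal_mul (by positivity), two_mul, Real.rpow_add hR,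
      mul_inv_cancel_right₀ (by positivity)]
  calc rieszPotential μ α f x ^ 2
      ≤ (ENNReal.ofReal (2 ^ (2 * β)) * (ENNReal.ofReal (R ^ (2 * β)) * P + Q)) *
          (ENNReal.ofReal (R ^ β)⁻¹ * A) :=
        (sq_rieszPotential_le_lintegral_mul μ α β hR hf x).trans (mul_le_mul' h_weight h_dual.le)
    _ = ENNReal.ofReal (2 ^ (2 * β)) * A *
          (ENNReal.ofReal (R ^ (2 * β)) * ENNReal.ofReal (R ^ β)⁻¹ * P +
            ENNReal.ofReal (R ^ β)⁻¹ * Q) := by ring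
    _ = _ := by rw [h_scale]

lemma exists_rieszPotential_pow_four_le (α : ℝ) {β : ℝ} (hβ : 0 < β) :
    ∃ c : ℝ≥0, ∀ f : E → ℝ≥0∞, AEMeasurable f μ → ∀ x, rieszPotential μ α f x ^ 4 ≤
      c * (rieszPotential μ (2 * α - β) (f ^ 2) x * rieszPotential μ (2 * α + β) (f ^ 2) x) := by
  set A := ENNReal.ofReal (2 ^ (2 * β)) *
    ∫⁻ y, twoScaleKernel (β - finrank ℝ E) (-(2 * β)) 1 y ∂μ with hA
  have hA_top : A ≠ ⊤ := ENNReal.mul_ne_top ofReal_ne_top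
    (lintegral_twoScaleKernel_one_ne_top μ (by linarith) (by linarith))
  have hA_zero : A ≠ 0 := mul_ne_zero (ENNReal.ofReal_pos.2 (by positivity)).ne'
    (lintegral_twoScaleKernel_one_pos μ _ _).ne'
  refine ⟨(4 * A ^ 2).toNNReal, fun f hf x => ?_⟩
  rw [ENNReal.coe_toNNReal (by finiteness)]
  by_cases hf0 : f =ᵐ[μ] 0
  · simp [(rieszPotential_eq_zero_iff μ α hf x).2 hf0]
  have h_ne_zero (γ : ℝ) : A * rieszPotential μ γ (f ^ 2) x ≠ 0 := by
    refine mul_ne_zero hA_zero fun h => hf0 ?_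
    filter_upwards [(rieszPotential_eq_zero_iff μ γ (hf.pow_const 2) x).1 h] with y hy
    exact pow_eq_zero_iff two_ne_zero |>.1 hy
  calc rieszPotential μ α f x ^ 4 = (rieszPotential μ α f x ^ 2) ^ 2 := by ring
    _ ≤ 4 * (A * rieszPotential μ (2 * α - β) (f ^ 2) x *
          (A * rieszPotential μ (2 * α + β) (f ^ 2) x)) := by
        refine sq_le_four_mul_of_forall_le_add (h_ne_zero _) (h_ne_zero _) fun l hl => ?_
        have h := sq_rieszPotential_le μ α hβ.le (Real.rpow_pos_of_pos hl β⁻¹) hf x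
        rw [Real.rpow_inv_rpow hl.le hβ.ne', ← hA, mul_add] at h
        simpa only [mul_left_comm] using h
    _ = _ := by ring

lemma exists_lintegral_rieszKernel_mul_le {α β : ℝ} (hα : 0 < α) (hβ : 0 < β)
    (hαβ : α + β < finrank ℝ E) :
    ∃ c : ℝ≥0, ∀ y z : E, y ≠ z →
      ∫⁻ x, rieszKernel α (x - y) * rieszKernel β (x - z) ∂μ ≤
        c * rieszKernel (α + β) (y - z) := by
  set A := ENNReal.ofReal (3⁻¹ ^ (β - finrank ℝ E)) *
    ∫⁻ x, twoScaleKernel (α - finrank ℝ E) (β - finrank ℝ E) 1 x ∂μ with hA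
  set B := ENNReal.ofReal (3⁻¹ ^ (α - finrank ℝ E)) *
    ∫⁻ x, twoScaleKernel (β - finrank ℝ E) (α - finrank ℝ E) 1 x ∂μ with hB
  have hA_top : A ≠ ⊤ := ENNReal.mul_ne_top ofReal_ne_top
    (lintegral_twoScaleKernel_one_ne_top μ (by linarith) (by linarith))
  have hB_top : B ≠ ⊤ := ENNReal.mul_ne_top ofReal_ne_top
    (lintegral_twoScaleKernel_one_ne_top μ (by linarith) (by linarith))
  refine ⟨(A + B).toNNReal, fun y z hyz => ?_⟩
  rw [ENNReal.coe_toNNReal (by finiteness)]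
  have h_pointwise (x : E) : rieszKernel α (x - y) * rieszKernel β (x - z) ≤
      ENNReal.ofReal (3⁻¹ ^ (β - finrank ℝ E)) *
          twoScaleKernel (α - finrank ℝ E) (β - finrank ℝ E) ‖y - z‖ (x - y) +
        ENNReal.ofReal (3⁻¹ ^ (α - finrank ℝ E)) *
          twoScaleKernel (β - finrank ℝ E) (α - finrank ℝ E) ‖z - y‖ (x - z) := by
    rcases le_total ‖x - y‖ ‖x - z‖ with hx | hx
    · exact (rieszKernel_mul_le_twoScaleKernel α (by linarith) hyz hx).trans le_self_add
    · rw [mul_comm]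
      exact (rieszKernel_mul_le_twoScaleKernel β (by linarith) hyz.symm hx).trans le_add_self
  refine (lintegral_mono h_pointwise).trans_eq ?_
  rw [lintegral_add_left (by fun_prop), lintegral_const_mul _ (by fun_prop),
    lintegral_const_mul _ (by fun_prop), lintegral_twoScaleKernel_sub μ α β hyz,
    lintegral_twoScaleKernel_sub μ β α hyz.symm, ← mul_assoc, ← mul_assoc, ← hA, ← hB,
    add_comm β α, rieszKernel, rieszKernel, norm_sub_rev z y, add_mul]

lemma exists_le_lintegral_rieszKernel_mul (α : ℝ) {β : ℝ} (hβ : β ≤ finrank ℝ E) :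
    ∃ c : ℝ≥0, 0 < c ∧ ∀ y z : E, y ≠ z →
      c * rieszKernel (α + β) (y - z) ≤
        ∫⁻ x, rieszKernel α (x - y) * rieszKernel β (x - z) ∂μ := by
  obtain ⟨c, hc, hcA⟩ := ENNReal.lt_iff_exists_nnreal_btwn.1
    (lintegral_twoScaleKernel_one_pos μ (α - finrank ℝ E) (β - finrank ℝ E))
  refine ⟨c, ENNReal.coe_pos.1 hc, fun y z hyz => ?_⟩
  grw [hcA, ← lintegral_twoScaleKernel_sub μ α β hyz]
  exact lintegral_mono_ae ((Measure.ae_ne μ z).mono fun x hxz =>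
    twoScaleKernel_le_rieszKernel_mul α hβ hxz)

lemma exists_lintegral_rieszPotential_mul_le {α β γ δ : ℝ} (hα : 0 < α) (hβ : 0 < β)
    (hαβ : α + β < finrank ℝ E) (hδ : δ ≤ finrank ℝ E) (h_sum : α + β = γ + δ) :
    ∃ c : ℝ≥0, ∀ f g : E → ℝ≥0∞, Measurable f → Measurable g →
      ∫⁻ x, rieszPotential μ α f x * rieszPotential μ β g x ∂μ ≤
        c * ∫⁻ x, rieszPotential μ γ f x * rieszPotential μ δ g x ∂μ := by
  obtain ⟨c₁, h_upper⟩ := exists_lintegral_rieszKernel_mul_le μ hα hβ hαβ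
  obtain ⟨c₂, hc₂, h_lower⟩ := exists_le_lintegral_rieszKernel_mul μ γ hδ
  refine ⟨c₁ * c₂⁻¹, fun f g hf hg => ?_⟩
  have h_kernel (y z : E) (hyz : y ≠ z) :
      ∫⁻ x, rieszKernel α (x - y) * rieszKernel β (x - z) ∂μ ≤
        (c₁ * c₂⁻¹ : ℝ≥0) * ∫⁻ x, rieszKernel γ (x - y) * rieszKernel δ (x - z) ∂μ := by
    grw [h_upper y z hyz, ← h_lower y z hyz, h_sum, ← mul_assoc, ← ENNReal.coe_mul,
      inv_mul_cancel_right₀ hc₂.ne']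
  rw [lintegral_rieszPotential_mul μ α β hf hg, lintegral_rieszPotential_mul μ γ δ hf hg,
    ← lintegral_const_mul' _ _ coe_ne_top]
  refine lintegral_mono fun y => ?_
  rw [← lintegral_const_mul' _ _ coe_ne_top]
  refine lintegral_mono_ae ((Measure.ae_ne μ y).mono fun z hzy => ?_)
  grw [h_kernel y z hzy.symm, mul_assoc]

end Nontrivial

theorem riesz_potential_L4_sq_le_general {α : ℝ} (hα : 0 < α) (hαd : 4 * α < finrank ℝ E) :
    ∃ C : ℝ, 0 < C ∧ ∀ f : E → ℝ≥0∞, Measurable f →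
      (∫⁻ x, rieszPotential μ α f x ^ 4 ∂μ) ^ ((1 : ℝ) / 2) ≤
        ENNReal.ofReal C *
          (∫⁻ x, rieszPotential μ (2 * α) (f ^ 2) x ^ 2 ∂μ) ^ ((1 : ℝ) / 2) := by
  have : Nontrivial E := nontrivial_of_finrank_pos (R := ℝ) <|
    Nat.cast_pos.1 (by linarith : (0 : ℝ) < finrank ℝ E)
  obtain ⟨c₁, h_carlson⟩ := exists_rieszPotential_pow_four_le μ α hα
  obtain ⟨c₂, h_compose⟩ := exists_lintegral_rieszPotential_mul_le μ (α := 2 * α - α)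
    (β := 2 * α + α) (γ := 2 * α) (δ := 2 * α) (by linarith) (by linarith) (by linarith)
    (by linarith) (by ring)
  refine ⟨((c₁ * c₂) ^ ((1 : ℝ) / 2) + 1 : ℝ≥0), by positivity, fun f hf => ?_⟩
  have hf_sq : Measurable (f ^ 2) := hf.pow_const 2
  have h_sq : ∫⁻ x, rieszPotential μ α f x ^ 4 ∂μ ≤
      (c₁ * c₂ : ℝ≥0) * ∫⁻ x, rieszPotential μ (2 * α) (f ^ 2) x ^ 2 ∂μ := by
    simp_rw [sq (rieszPotential μ _ _ _), ENNReal.coe_mul, mul_assoc]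
    grw [← h_compose _ _ hf_sq hf_sq, ← lintegral_const_mul' _ _ coe_ne_top]
    exact lintegral_mono (h_carlson f hf.aemeasurable)
  grw [h_sq, ENNReal.mul_rpow_of_nonneg _ _ (by positivity), ENNReal.ofReal_coe_nnreal,
    ENNReal.coe_add, ENNReal.coe_rpow_of_nonneg _ (by positivity), ← le_self_add]

end Potentials

/-- For `d ≥ 5`, the squared `L⁴` norm of the Riesz potential of order `(d-4)/4`
of a nonnegative `f` is bounded by a constant times the `L²` norm of the Riesz
potential of order `(d-4)/2` of `f²`, as an inequality in `[0,∞]`. -/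
theorem riesz_potential_L4_sq_le (d : ℕ) (hd : 5 ≤ d) :
    ∃ C : ℝ, 0 < C ∧
      ∀ f : EuclideanSpace ℝ (Fin d) → ℝ≥0∞, Measurable f →
        (∫⁻ x, (∫⁻ y, ENNReal.ofReal (‖x - y‖ ^ (-((3 * (d : ℝ) + 4) / 4))) * f y) ^ 4)
            ^ ((1 : ℝ) / 2)
          ≤ ENNReal.ofReal C *
            (∫⁻ x, (∫⁻ y, ENNReal.ofReal (‖x - y‖ ^ (-(((d : ℝ) + 4) / 2))) * (f y) ^ 2) ^ 2)
              ^ ((1 : ℝ) / 2) := by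
  have hd5 : (5 : ℝ) ≤ d := by exact_mod_cast hd
  convert riesz_potential_L4_sq_le_general (volume : Measure (EuclideanSpace ℝ (Fin d)))
    (α := ((d : ℝ) - 4) / 4) (by linarith) (by rw [finrank_euclideanSpace_fin]; linarith) using 0
  simp only [rieszPotential, rieszKernel, finrank_euclideanSpace_fin, Pi.pow_apply]
  ring_nf
end

section
/- Let d ≥ 5. There exists a constant C > 0 such that for every measurable function f : ℝ^d → [0, ∞], ∫_{ℝ^d} ( ∫_{ℝ^d} |x − y|^{-(3d+4)/4} f(y) dy )⁴ dx ≤ C ∬_{ℝ^d×ℝ^d} f(x)² f(y)² |x − y|^{-4} dx dy; that is, the fourth power of the L⁴ norm of the Riesz potential of order (d−4)/4 of f is controlled by the Hartree potential energy of f. -/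
open MeasureTheory ENNReal

/-!
Up to constants, the Riesz potential `F` of `f` with kernel `|x| ^ (-a)` is the sum over the
scales `r = 2 ^ k` of `r ^ (-a)` times the integral of `f` over balls of radius `r`. In the
expansion of `F ^ 4` order the scales. Averaging the integral at the smallest scale `r` over balls
of the second smallest scale `s` gains a factor `(r / s) ^ d`, which beats the loss `(s / r) ^ a`
because `a < d`, and the resulting product of two integrals at scale `s` is at most `s ^ d` times
the integral of `f ^ 2`. Hence `∫ F ^ 4 ≲ ∫ J * F ^ 2`, where `J` is the potential of `f ^ 2` with
kernel `|x| ^ (-(2 * a - d))`, and Cauchy–Schwarz gives `∫ F ^ 4 ≲ ∫ J ^ 2` as soon as `∫ F ^ 4`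
is finite, which a damping of the very small and very large scales ensures. The same ordering of
the scales bounds `∫ J ^ 2` by the energy of `f ^ 2` with kernel `|x| ^ (-(4 * a - 3 * d))`.
-/

open Set Filter
open scoped NNReal Topology

/-! ### Dyadic scales -/

/-- The power `r ^ γ` of the dyadic scale `r = 2 ^ k`; the scale itself is `dyadic 1 k`. -/
noncomputable def dyadic (γ : ℝ) (k : ℤ) : ℝ≥0∞ := 2 ^ (γ * k)

lemma dyadic_ne_zero (γ : ℝ) (k : ℤ) : dyadic γ k ≠ 0 :=
  (ENNReal.rpow_pos (by norm_num) ofNat_ne_top).ne'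

lemma dyadic_ne_top (γ : ℝ) (k : ℤ) : dyadic γ k ≠ ∞ :=
  ENNReal.rpow_ne_top_of_ne_zero two_ne_zero ofNat_ne_top

lemma dyadic_zero_right (γ : ℝ) : dyadic γ 0 = 1 := by simp [dyadic]

lemma dyadic_add_left (α β : ℝ) (k : ℤ) : dyadic (α + β) k = dyadic α k * dyadic β k := by
  rw [dyadic, add_mul, ENNReal.rpow_add _ _ two_ne_zero ofNat_ne_top, dyadic, dyadic]

lemma dyadic_add_right (γ : ℝ) (k l : ℤ) : dyadic γ (k + l) = dyadic γ k * dyadic γ l := by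
  rw [dyadic, Int.cast_add, mul_add, ENNReal.rpow_add _ _ two_ne_zero ofNat_ne_top, dyadic, dyadic]

lemma dyadic_rpow (α β : ℝ) (k : ℤ) : dyadic α k ^ β = dyadic (α * β) k := by
  rw [dyadic, dyadic, ← ENNReal.rpow_mul]; ring_nf

lemma dyadic_neg_mul_dyadic (γ : ℝ) (k : ℤ) : dyadic (-γ) k * dyadic γ k = 1 := by
  rw [← dyadic_add_left, neg_add_cancel, dyadic, zero_mul, ENNReal.rpow_zero]

lemma dyadic_mono {γ : ℝ} (hγ : 0 ≤ γ) : Monotone (dyadic γ) := fun _ _ hkl =>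
  ENNReal.rpow_le_rpow_of_exponent_le one_le_two
    (mul_le_mul_of_nonneg_left (Int.cast_le.2 hkl) hγ)

lemma dyadic_lt_dyadic_iff {γ : ℝ} (hγ : 0 < γ) {k l : ℤ} : dyadic γ k < dyadic γ l ↔ k < l := by
  refine ⟨fun h => lt_of_not_ge fun hlk => h.not_ge (dyadic_mono hγ.le hlk), fun h => ?_⟩
  exact ENNReal.rpow_lt_rpow_of_exponent_lt one_lt_two ofNat_ne_top
    (mul_lt_mul_of_pos_left (Int.cast_lt.2 h) hγ)

lemma tsum_dyadic_neg_ne_top {β : ℝ} (hβ : 0 < β) : ∑' n : ℕ, dyadic (-β) n ≠ ∞ := by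
  have hgeom : ∀ n : ℕ, dyadic (-β) n = (2 ^ (-β)) ^ n := fun n => by
    rw [dyadic, ENNReal.rpow_mul, Int.cast_natCast, ENNReal.rpow_natCast]
  simp_rw [hgeom]
  rw [ENNReal.tsum_geometric, ENNReal.inv_ne_top]
  exact (tsub_pos_of_lt <|
    ENNReal.rpow_lt_one_of_one_lt_of_neg one_lt_two (neg_neg_of_pos hβ)).ne'

lemma exists_dyadic_le_lt {r : ℝ≥0∞} (h0 : r ≠ 0) (htop : r ≠ ∞) :
    ∃ k, dyadic 1 k ≤ r ∧ r < dyadic 1 (k + 1) := by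
  simpa [dyadic, ← ENNReal.rpow_intCast] using
    ENNReal.exists_mem_Ico_zpow h0 htop one_lt_two ofNat_ne_top

/-! ### Sums over the integers -/

lemma tsum_indicator_Ici (w : ℤ → ℝ≥0∞) (i : ℤ) :
    ∑' k, (Ici i).indicator w k = ∑' n : ℕ, w (i + n) := by
  have hinj : Function.Injective fun n : ℕ => i + (n : ℤ) := fun m n h => by simpa using h
  have hsupp : Function.support ((Ici i).indicator w) ⊆ range fun n : ℕ => i + (n : ℤ) :=
    fun k (hk : (Ici i).indicator w k ≠ 0) => by
      obtain ⟨n, rfl⟩ := Int.le.dest (mem_Ici.1 (mem_of_indicator_ne_zero hk))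
      exact mem_range_self n
  rw [← hinj.tsum_eq hsupp]
  exact tsum_congr fun n => indicator_of_mem (by simp) w

lemma tsum_add_nat_antitone (w : ℤ → ℝ≥0∞) : Antitone fun i : ℤ => ∑' n : ℕ, w (i + n) := by
  intro i j hij
  simp only [← tsum_indicator_Ici]
  exact ENNReal.tsum_le_tsum fun k =>
    indicator_le_indicator_of_subset (Ici_subset_Ici.2 hij) (fun _ => zero_le) k

lemma tsum_tsum_mul_add_nat (b : ℕ → ℝ≥0∞) (v : ℤ → ℝ≥0∞) (m : ℤ) :
    ∑' k : ℤ, ∑' n : ℕ, b n * v (k + n + m) = (∑' n, b n) * ∑' k, v k := by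
  rw [ENNReal.tsum_comm, ← ENNReal.tsum_mul_right]
  refine tsum_congr fun n => ?_
  rw [ENNReal.tsum_mul_left, ← (Equiv.addRight (n + m : ℤ)).tsum_eq v]
  simp [add_assoc]

lemma tsum_tsum_le_tsum_tsum_add_nat (a : ℤ → ℤ → ℝ≥0∞) :
    ∑' j, ∑' k, a j k ≤ ∑' k : ℤ, ∑' n : ℕ, (a k (k + n) + a (k + n) k) := by
  have hpt : ∀ j k, a j k ≤ (Ici j).indicator (a j) k + (Ici k).indicator (fun i => a i k) j := by
    intro j k
    rcases le_total j k with h | h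
    · rw [indicator_of_mem (mem_Ici.2 h)]; exact le_self_add
    · rw [indicator_of_mem (s := Ici k) (mem_Ici.2 h)]; exact le_add_self
  calc ∑' j, ∑' k, a j k
      ≤ ∑' j, ∑' k, ((Ici j).indicator (a j) k + (Ici k).indicator (fun i => a i k) j) :=
        ENNReal.tsum_le_tsum fun j => ENNReal.tsum_le_tsum fun k => hpt j k
    _ = (∑' j, ∑' k, (Ici j).indicator (a j) k) +
          ∑' k, ∑' j, (Ici k).indicator (fun i => a i k) j := by
        rw [ENNReal.tsum_comm (f := fun k j => (Ici k).indicator (fun i => a i k) j)]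
        simp_rw [ENNReal.tsum_add]
    _ = ∑' k : ℤ, ∑' n : ℕ, (a k (k + n) + a (k + n) k) := by
        simp_rw [tsum_indicator_Ici, ENNReal.tsum_add]

/-- In the expansion of the power, the smallest index can be singled out up to a constant. -/
lemma tsum_pow_succ_le (w : ℤ → ℝ≥0∞) (p : ℕ) :
    (∑' k, w k) ^ (p + 1) ≤ 2 ^ p * ∑' k : ℤ, w k * (∑' n : ℕ, w (k + n)) ^ p := by
  induction p with
  | zero => simp
  | succ p ih =>
    set T : ℤ → ℝ≥0∞ := fun k => ∑' n : ℕ, w (k + n)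
    have hpair : ∀ (k : ℤ) (n : ℕ), w k * T k ^ p * w (k + n) + w (k + n) * T (k + n) ^ p * w k ≤
        2 * (w k * T k ^ p * w (k + n)) := by
      intro k n
      have hTn : T (k + n) ≤ T k := tsum_add_nat_antitone w (by simp)
      calc w k * T k ^ p * w (k + n) + w (k + n) * T (k + n) ^ p * w k
          ≤ w k * T k ^ p * w (k + n) + w (k + n) * T k ^ p * w k := by gcongr
        _ = 2 * (w k * T k ^ p * w (k + n)) := by ring
    calc (∑' k, w k) ^ (p + 1 + 1)
        ≤ 2 ^ p * (∑' k, w k * T k ^ p) * ∑' k, w k := by rw [pow_succ]; gcongr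
      _ = 2 ^ p * ∑' j, ∑' k, w j * T j ^ p * w k := by
          simp_rw [ENNReal.tsum_mul_left, ENNReal.tsum_mul_right, mul_assoc]
      _ ≤ 2 ^ p * ∑' k : ℤ, ∑' n : ℕ,
            (w k * T k ^ p * w (k + n) + w (k + n) * T (k + n) ^ p * w k) :=
          mul_le_mul_right
            (tsum_tsum_le_tsum_tsum_add_nat fun j k => w j * T j ^ p * w k) _
      _ ≤ 2 ^ p * ∑' k : ℤ, ∑' n : ℕ, 2 * (w k * T k ^ p * w (k + n)) := by
          gcongr with k n; exact hpair k n
      _ = 2 ^ (p + 1) * ∑' k : ℤ, w k * T k ^ (p + 1) := by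
          simp_rw [ENNReal.tsum_mul_left, pow_succ, ← mul_assoc]
          rfl

lemma tsum_add_nat_pow_succ_le (w : ℤ → ℝ≥0∞) (p : ℕ) (i : ℤ) :
    (∑' n : ℕ, w (i + n)) ^ (p + 1) ≤
      2 ^ p * ∑' n : ℕ, w (i + n) * (∑' m : ℕ, w (i + n + m)) ^ p := by
  rw [← tsum_indicator_Ici,
    ← tsum_indicator_Ici (fun k : ℤ => w k * (∑' m : ℕ, w (k + m)) ^ p)]
  refine (tsum_pow_succ_le _ p).trans ?_
  gcongr with k
  by_cases hk : k ∈ Ici i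
  · simp only [indicator_of_mem hk]
    gcongr
    exact indicator_le_self _ _ _
  · simp [indicator_of_notMem hk]

lemma tsum_sq_le (w : ℤ → ℝ≥0∞) :
    (∑' k, w k) ^ 2 ≤ 2 * ∑' k : ℤ, ∑' n : ℕ, w k * w (k + n) := by
  simpa [ENNReal.tsum_mul_left] using tsum_pow_succ_le w 1

lemma tsum_pow_four_le (w : ℤ → ℝ≥0∞) :
    (∑' k, w k) ^ 4 ≤
      32 * ∑' k : ℤ, ∑' n : ℕ, w k * (w (k + n) * (∑' m : ℕ, w (k + n + m)) ^ 2) := by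
  calc (∑' k, w k) ^ 4 ≤ 2 ^ 3 * ∑' k : ℤ, w k * (∑' n : ℕ, w (k + n)) ^ 3 :=
        tsum_pow_succ_le w 3
    _ ≤ 2 ^ 3 * ∑' k : ℤ, w k *
          (2 ^ 2 * ∑' n : ℕ, w (k + n) * (∑' m : ℕ, w (k + n + m)) ^ 2) := by
        gcongr with k; exact tsum_add_nat_pow_succ_le w 2 k
    _ = 32 * ∑' k : ℤ, ∑' n : ℕ, w k * (w (k + n) * (∑' m : ℕ, w (k + n + m)) ^ 2) := by
        simp_rw [mul_left_comm (w _) (2 ^ 2), ENNReal.tsum_mul_left, ← mul_assoc]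
        norm_num

lemma rpow_inv_two_sq (t : ℝ≥0∞) : (t ^ (2⁻¹ : ℝ)) ^ 2 = t := by
  simpa using ENNReal.rpow_inv_natCast_pow two_ne_zero t

lemma tsum_mul_sq_le {ι : Type*} (c : ι → ℝ≥0∞) {v : ι → ℝ≥0∞} {B : ℝ≥0∞} (hv : ∀ k, v k ^ 2 ≤ B) :
    (∑' k, c k * v k) ^ 2 ≤ (∑' k, c k) ^ 2 * B := by
  calc (∑' k, c k * v k) ^ 2 ≤ (∑' k, c k * B ^ (2⁻¹ : ℝ)) ^ 2 := by
        gcongr with k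
        exact (ENNReal.pow_le_pow_left_iff two_ne_zero).1 ((hv k).trans_eq (rpow_inv_two_sq B).symm)
    _ = (∑' k, c k) ^ 2 * B := by rw [ENNReal.tsum_mul_right, mul_pow, rpow_inv_two_sq]

/-! ### The dyadic Riesz kernel -/

/-- The sum of `t ^ (-γ)` over the dyadic scales `t > r`. For `γ > 0` it is comparable to the Riesz
kernel `r ^ (-γ)`. -/
noncomputable def dyadicKernel (γ : ℝ) (r : ℝ≥0∞) : ℝ≥0∞ :=
  ∑' k, {k : ℤ | r < dyadic 1 k}.indicator (dyadic (-γ)) k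

section Kernel

variable {γ : ℝ}

lemma dyadicKernel_zero (hγ : 0 ≤ γ) : dyadicKernel γ 0 = ∞ := by
  have hinj : Function.Injective fun n : ℕ => -(n : ℤ) := fun m n h => by simpa using h
  have hone : ∀ n : ℕ, 1 ≤ dyadic (-γ) (-(n : ℤ)) := fun n => by
    rw [dyadic, Int.cast_neg, neg_mul_neg]
    simpa using ENNReal.rpow_le_rpow_of_exponent_le one_le_two (mul_nonneg hγ n.cast_nonneg)
  refine top_unique ?_
  calc ∞ = ∑' _ : ℕ, (1 : ℝ≥0∞) := (ENNReal.tsum_const_eq_top_of_ne_zero one_ne_zero).symm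
    _ ≤ ∑' n : ℕ, dyadic (-γ) (-(n : ℤ)) := ENNReal.tsum_le_tsum hone
    _ ≤ ∑' k, dyadic (-γ) k := ENNReal.tsum_comp_le_tsum_of_injective hinj _
    _ = dyadicKernel γ 0 := by simp [dyadicKernel, pos_iff_ne_zero, dyadic_ne_zero]

lemma dyadicKernel_top : dyadicKernel γ ∞ = 0 := by simp [dyadicKernel]

lemma dyadicKernel_eq_of_le_of_lt {r : ℝ≥0∞} {k : ℤ} (hle : dyadic 1 k ≤ r)
    (hlt : r < dyadic 1 (k + 1)) :
    dyadicKernel γ r = (∑' n : ℕ, dyadic (-γ) n) * dyadic (-γ) (k + 1) := by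
  have hset : {j : ℤ | r < dyadic 1 j} = Ici (k + 1) := by
    ext j
    refine ⟨fun hj => ?_, fun hj => hlt.trans_le (dyadic_mono zero_le_one hj)⟩
    exact (dyadic_lt_dyadic_iff one_pos).1 (hle.trans_lt hj)
  rw [dyadicKernel, hset, tsum_indicator_Ici, ← ENNReal.tsum_mul_right]
  simp_rw [dyadic_add_right _ (k + 1), mul_comm]

lemma one_le_tsum_dyadic_nat : 1 ≤ ∑' n : ℕ, dyadic (-γ) n := by
  simpa [dyadic_zero_right] using ENNReal.le_tsum (f := fun n : ℕ => dyadic (-γ) n) 0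

lemma dyadic_neg_le_rpow_neg (hγ : 0 ≤ γ) {r : ℝ≥0∞} {k : ℤ} (h : r ≤ dyadic 1 k) :
    dyadic (-γ) k ≤ r ^ (-γ) := by
  rw [← one_mul (-γ), ← dyadic_rpow, one_mul, ENNReal.rpow_neg, ENNReal.rpow_neg]
  exact ENNReal.inv_le_inv.2 (ENNReal.rpow_le_rpow h hγ)

lemma rpow_neg_le_dyadic_neg (hγ : 0 ≤ γ) {r : ℝ≥0∞} {k : ℤ} (h : dyadic 1 k ≤ r) :
    r ^ (-γ) ≤ dyadic (-γ) k := by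
  rw [← one_mul (-γ), ← dyadic_rpow, one_mul, ENNReal.rpow_neg, ENNReal.rpow_neg]
  exact ENNReal.inv_le_inv.2 (ENNReal.rpow_le_rpow h hγ)

lemma rpow_neg_le_dyadicKernel (hγ : 0 < γ) (r : ℝ≥0∞) :
    r ^ (-γ) ≤ dyadic γ 1 * dyadicKernel γ r := by
  rcases eq_or_ne r 0 with rfl | h0
  · rw [dyadicKernel_zero hγ.le, ENNReal.mul_top (dyadic_ne_zero γ 1)]; exact le_top
  rcases eq_or_ne r ∞ with rfl | htop
  · rw [ENNReal.top_rpow_of_neg (neg_neg_of_pos hγ)]; exact zero_le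
  obtain ⟨k, hle, hlt⟩ := exists_dyadic_le_lt h0 htop
  calc r ^ (-γ) ≤ dyadic (-γ) k := rpow_neg_le_dyadic_neg hγ.le hle
    _ = dyadic γ 1 * (1 * dyadic (-γ) (k + 1)) := by
        rw [dyadic_add_right, one_mul, mul_comm, mul_assoc, dyadic_neg_mul_dyadic, mul_one]
    _ ≤ dyadic γ 1 * dyadicKernel γ r := by
        rw [dyadicKernel_eq_of_le_of_lt hle hlt]; gcongr; exact one_le_tsum_dyadic_nat

lemma dyadicKernel_le_rpow_neg (hγ : 0 < γ) (r : ℝ≥0∞) :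
    dyadicKernel γ r ≤ (∑' n : ℕ, dyadic (-γ) n) * r ^ (-γ) := by
  rcases eq_or_ne r 0 with rfl | h0
  · rw [ENNReal.zero_rpow_of_neg (neg_neg_of_pos hγ),
      ENNReal.mul_top (one_pos.trans_le one_le_tsum_dyadic_nat).ne']
    exact le_top
  rcases eq_or_ne r ∞ with rfl | htop
  · rw [dyadicKernel_top]; exact zero_le
  obtain ⟨k, hle, hlt⟩ := exists_dyadic_le_lt h0 htop
  rw [dyadicKernel_eq_of_le_of_lt hle hlt]
  gcongr
  exact dyadic_neg_le_rpow_neg hγ.le hlt.le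

end Kernel

/-! ### Ball integrals and dyadic potentials -/

/-- The integral of `f` over the ball of radius `2 ^ k` about `x`. -/
noncomputable def ballIntegral {X : Type*} [PseudoEMetricSpace X] [MeasurableSpace X]
    (μ : Measure X) (f : X → ℝ≥0∞) (k : ℤ) (x : X) : ℝ≥0∞ :=
  ∫⁻ y in Metric.eball x (dyadic 1 k), f y ∂μ

/-- The superposition, with weights `b`, of the integrals of `f` over the dyadic balls about `x`.
For `b = dyadic (-γ)` it is comparable to the Riesz potential `∫ edist x y ^ (-γ) * f y`. -/
noncomputable def dyadicPotential {X : Type*} [PseudoEMetricSpace X] [MeasurableSpace X]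
    (μ : Measure X) (b : ℤ → ℝ≥0∞) (f : X → ℝ≥0∞) (x : X) : ℝ≥0∞ :=
  ∑' k, b k * ballIntegral μ f k x

/-- The part of `dyadicPotential` coming from the scales `2 ^ k` with `i ≤ k`. -/
noncomputable def dyadicTail {X : Type*} [PseudoEMetricSpace X] [MeasurableSpace X]
    (μ : Measure X) (b : ℤ → ℝ≥0∞) (f : X → ℝ≥0∞) (i : ℤ) (x : X) : ℝ≥0∞ :=
  ∑' n : ℕ, b (i + n) * ballIntegral μ f (i + n) x

section Ball

variable {X : Type*} [PseudoEMetricSpace X] [MeasurableSpace X] {μ : Measure X}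

lemma ballIntegral_le_of_edist_lt (f : X → ℝ≥0∞) {i j l : ℤ} (hij : i < j) (hlj : l < j) {x x' : X}
    (hxx' : edist x x' < dyadic 1 l) : ballIntegral μ f i x ≤ ballIntegral μ f j x' := by
  refine lintegral_mono_set (Metric.eball_subset ?_ hxx'.ne_top)
  calc edist x x' + dyadic 1 i ≤ dyadic 1 (j - 1) + dyadic 1 (j - 1) :=
        add_le_add (hxx'.le.trans (dyadic_mono zero_le_one (Int.le_sub_one_of_lt hlj)))
          (dyadic_mono zero_le_one (Int.le_sub_one_of_lt hij))
    _ = dyadic 1 j := by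
        rw [← mul_two]
        conv_rhs => rw [← sub_add_cancel j 1, dyadic_add_right]
        simp [dyadic]

variable [OpensMeasurableSpace X]

lemma mul_ballIntegral_eq_lintegral_indicator (c : ℝ≥0∞) {f : X → ℝ≥0∞} (hf : Measurable f) (k : ℤ)
    (x : X) : c * ballIntegral μ f k x =
      ∫⁻ y, (Metric.eball x (dyadic 1 k)).indicator (fun y => c * f y) y ∂μ := by
  rw [lintegral_indicator Metric.isOpen_eball.measurableSet, lintegral_const_mul c hf, ballIntegral]

lemma dyadicPotential_dyadic_neg_eq_lintegral (γ : ℝ) {f : X → ℝ≥0∞} (hf : Measurable f) (x : X) :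
    dyadicPotential μ (dyadic (-γ)) f x = ∫⁻ y, dyadicKernel γ (edist x y) * f y ∂μ := by
  simp_rw [dyadicPotential, mul_ballIntegral_eq_lintegral_indicator _ hf]
  rw [← lintegral_tsum fun k =>
    ((hf.const_mul _).indicator Metric.isOpen_eball.measurableSet).aemeasurable]
  refine lintegral_congr fun y => ?_
  rw [dyadicKernel, ← ENNReal.tsum_mul_right]
  refine tsum_congr fun k => ?_
  simp [indicator, edist_comm]

lemma lintegral_edist_rpow_neg_le_dyadicPotential {γ : ℝ} (hγ : 0 < γ) {f : X → ℝ≥0∞}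
    (hf : Measurable f) (x : X) :
    ∫⁻ y, edist x y ^ (-γ) * f y ∂μ ≤ dyadic γ 1 * dyadicPotential μ (dyadic (-γ)) f x := by
  rw [dyadicPotential_dyadic_neg_eq_lintegral γ hf,
    ← lintegral_const_mul' _ _ (dyadic_ne_top γ 1)]
  refine lintegral_mono fun y => ?_
  rw [← mul_assoc]
  exact mul_le_mul_left (rpow_neg_le_dyadicKernel hγ _) _

lemma dyadicPotential_le_lintegral_edist_rpow_neg {γ : ℝ} (hγ : 0 < γ) {f : X → ℝ≥0∞}
    (hf : Measurable f) (x : X) :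
    dyadicPotential μ (dyadic (-γ)) f x ≤
      (∑' n : ℕ, dyadic (-γ) n) * ∫⁻ y, edist x y ^ (-γ) * f y ∂μ := by
  rw [dyadicPotential_dyadic_neg_eq_lintegral γ hf,
    ← lintegral_const_mul' _ _ (tsum_dyadic_neg_ne_top hγ)]
  refine lintegral_mono fun y => ?_
  rw [← mul_assoc]
  exact mul_le_mul_left (dyadicKernel_le_rpow_neg hγ _) _

variable [SecondCountableTopology X] [SFinite μ]

lemma measurableSet_edist_lt (r : ℝ≥0∞) : MeasurableSet {p : X × X | edist p.2 p.1 < r} :=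
  (isOpen_lt (by fun_prop) continuous_const).measurableSet

lemma measurable_ballIntegral {f : X → ℝ≥0∞} (hf : Measurable f) (k : ℤ) :
    Measurable (ballIntegral μ f k) := by
  have heq : ballIntegral μ f k = fun x =>
      ∫⁻ y, {p : X × X | edist p.2 p.1 < dyadic 1 k}.indicator (fun p => f p.2) (x, y) ∂μ := by
    funext x
    rw [← one_mul (ballIntegral μ f k x), mul_ballIntegral_eq_lintegral_indicator 1 hf]
    simp [indicator]
  rw [heq]
  exact ((hf.comp measurable_snd).indicator (measurableSet_edist_lt _)).lintegral_prod_right'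

lemma measurable_dyadicPotential (b : ℤ → ℝ≥0∞) {f : X → ℝ≥0∞} (hf : Measurable f) :
    Measurable (dyadicPotential μ b f) :=
  Measurable.tsum fun k => (measurable_ballIntegral hf k).const_mul (b k)

lemma measurable_dyadicTail (b : ℤ → ℝ≥0∞) {f : X → ℝ≥0∞} (hf : Measurable f) (i : ℤ) :
    Measurable (dyadicTail μ b f i) :=
  Measurable.tsum fun n => (measurable_ballIntegral hf (i + n)).const_mul (b (i + n))

lemma lintegral_ballIntegral_mul {f h : X → ℝ≥0∞} (hf : Measurable f) (hh : Measurable h) (k : ℤ) :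
    ∫⁻ x, ballIntegral μ f k x * h x ∂μ = ∫⁻ x, f x * ballIntegral μ h k x ∂μ := by
  have hmeas : Measurable
      ({p : X × X | edist p.2 p.1 < dyadic 1 k}.indicator fun p => h p.1 * f p.2) :=
    ((hh.comp measurable_fst).mul (hf.comp measurable_snd)).indicator (measurableSet_edist_lt _)
  have hswap := lintegral_lintegral_swap (μ := μ) (ν := μ) (f := fun x y =>
    {p : X × X | edist p.2 p.1 < dyadic 1 k}.indicator (fun p => h p.1 * f p.2) (x, y))
    hmeas.aemeasurable
  simp_rw [mul_comm (ballIntegral μ f k _), mul_ballIntegral_eq_lintegral_indicator _ hf,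
    mul_ballIntegral_eq_lintegral_indicator _ hh]
  simpa [indicator, edist_comm, mul_comm] using hswap

end Ball

/-! ### Lower Lebesgue integrals -/

lemma lintegral_tsum_tsum {X ι κ : Type*} [MeasurableSpace X] {μ : Measure X} [Countable ι]
    [Countable κ] {F : ι → κ → X → ℝ≥0∞} (hF : ∀ i j, Measurable (F i j)) :
    ∫⁻ x, ∑' i, ∑' j, F i j x ∂μ = ∑' i, ∑' j, ∫⁻ x, F i j x ∂μ := by
  rw [lintegral_tsum fun i => (Measurable.tsum (hF i)).aemeasurable]
  exact tsum_congr fun i => lintegral_tsum fun j => (hF i j).aemeasurable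

lemma sq_lintegral_mul_le {X : Type*} [MeasurableSpace X] {μ : Measure X} {u v : X → ℝ≥0∞}
    (hu : Measurable u) (hv : Measurable v) :
    (∫⁻ x, u x * v x ∂μ) ^ 2 ≤ (∫⁻ x, u x ^ 2 ∂μ) * ∫⁻ x, v x ^ 2 ∂μ := by
  simpa [mul_pow, rpow_inv_two_sq] using pow_le_pow_left' (ENNReal.lintegral_mul_le_Lp_mul_Lq μ
    Real.HolderConjugate.two_two hu.aemeasurable hv.aemeasurable) 2

lemma lintegral_sq_le_of_le_lintegral_mul {X : Type*} [MeasurableSpace X] {μ : Measure X}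
    {u v : X → ℝ≥0∞} (hu : Measurable u) (hv : Measurable v) (hfin : ∫⁻ x, u x ^ 2 ∂μ ≠ ∞)
    (hle : ∫⁻ x, u x ^ 2 ∂μ ≤ ∫⁻ x, v x * u x ∂μ) :
    ∫⁻ x, u x ^ 2 ∂μ ≤ ∫⁻ x, v x ^ 2 ∂μ := by
  rcases eq_or_ne (∫⁻ x, u x ^ 2 ∂μ) 0 with h0 | h0
  · simp [h0]
  refine (ENNReal.mul_le_mul_iff_left h0 hfin).1 ?_
  calc (∫⁻ x, u x ^ 2 ∂μ) * ∫⁻ x, u x ^ 2 ∂μ ≤ (∫⁻ x, v x * u x ∂μ) ^ 2 := by rw [sq]; gcongr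
    _ ≤ (∫⁻ x, v x ^ 2 ∂μ) * ∫⁻ x, u x ^ 2 ∂μ := sq_lintegral_mul_le hv hu

/-! ### Ahlfors regular measures -/

/-- `μ` is Ahlfors `d`-regular with constant `K`: the ball of radius `r` has measure comparable to
`r ^ d`, at all centers and all positive finite radii. -/
structure IsAhlforsRegular {X : Type*} [PseudoEMetricSpace X] [MeasurableSpace X]
    (μ : Measure X) (d : ℝ) (K : ℝ≥0) : Prop where
  measure_eball_le : ∀ (x : X) (r : ℝ≥0∞), r ≠ 0 → r ≠ ∞ → μ (Metric.eball x r) ≤ K * r ^ d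
  le_measure_eball : ∀ (x : X) (r : ℝ≥0∞), r ≠ 0 → r ≠ ∞ → r ^ d ≤ K * μ (Metric.eball x r)

namespace IsAhlforsRegular

variable {X : Type*} [PseudoEMetricSpace X] [MeasurableSpace X] {μ : Measure X} {d : ℝ} {K : ℝ≥0}

lemma measure_eball_dyadic_le (hμ : IsAhlforsRegular μ d K) (x : X) (k : ℤ) :
    μ (Metric.eball x (dyadic 1 k)) ≤ K * dyadic d k := by
  simpa [dyadic_rpow] using
    hμ.measure_eball_le x (dyadic 1 k) (dyadic_ne_zero 1 k) (dyadic_ne_top 1 k)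

lemma dyadic_le_measure_eball (hμ : IsAhlforsRegular μ d K) (x : X) (k : ℤ) :
    dyadic d k ≤ K * μ (Metric.eball x (dyadic 1 k)) := by
  simpa [dyadic_rpow] using
    hμ.le_measure_eball x (dyadic 1 k) (dyadic_ne_zero 1 k) (dyadic_ne_top 1 k)

lemma ballIntegral_sq_le (hμ : IsAhlforsRegular μ d K) {f : X → ℝ≥0∞} (hf : Measurable f) (k : ℤ)
    (x : X) :
    ballIntegral μ f k x ^ 2 ≤ K * dyadic d k * ballIntegral μ (fun y => f y ^ 2) k x := by
  calc ballIntegral μ f k x ^ 2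
      ≤ μ (Metric.eball x (dyadic 1 k)) * ballIntegral μ (fun y => f y ^ 2) k x := by
        simpa [ballIntegral] using sq_lintegral_mul_le
          (μ := μ.restrict (Metric.eball x (dyadic 1 k))) (measurable_const (a := 1)) hf
    _ ≤ K * dyadic d k * ballIntegral μ (fun y => f y ^ 2) k x :=
        mul_le_mul_left (hμ.measure_eball_dyadic_le x k) _

variable [OpensMeasurableSpace X]

lemma ballIntegral_le_of_forall_le (hμ : IsAhlforsRegular μ d K) {h : X → ℝ≥0∞} {k : ℤ} {y : X}
    {c : ℝ≥0∞} (hc : ∀ x, edist x y < dyadic 1 k → h x ≤ c) :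
    ballIntegral μ h k y ≤ K * dyadic d k * c := by
  calc ballIntegral μ h k y ≤ ∫⁻ _ in Metric.eball y (dyadic 1 k), c ∂μ :=
        setLIntegral_mono' Metric.isOpen_eball.measurableSet hc
    _ = c * μ (Metric.eball y (dyadic 1 k)) := setLIntegral_const _ _
    _ ≤ K * dyadic d k * c := by
        rw [mul_comm]; exact mul_le_mul_left (hμ.measure_eball_dyadic_le y k) c

lemma le_ballIntegral_of_forall_le (hμ : IsAhlforsRegular μ d K) {h : X → ℝ≥0∞} {k : ℤ} {y : X}
    {c : ℝ≥0∞} (hc : ∀ x, edist x y < dyadic 1 k → c ≤ h x) :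
    c ≤ K * dyadic (-d) k * ballIntegral μ h k y := by
  calc c = dyadic (-d) k * (dyadic d k * c) := by
        rw [← mul_assoc, dyadic_neg_mul_dyadic, one_mul]
    _ ≤ dyadic (-d) k * (K * μ (Metric.eball y (dyadic 1 k)) * c) := by
        gcongr; exact hμ.dyadic_le_measure_eball y k
    _ = K * dyadic (-d) k * ∫⁻ _ in Metric.eball y (dyadic 1 k), c ∂μ := by
        rw [setLIntegral_const]; ring
    _ ≤ K * dyadic (-d) k * ballIntegral μ h k y := by
        gcongr
        exact setLIntegral_mono' Metric.isOpen_eball.measurableSet hc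

/-- Averaging at the larger scale `2 ^ (k + n)` gains the ratio of the volumes of the two balls. -/
lemma ballIntegral_le_ballIntegral_add_nat (hμ : IsAhlforsRegular μ d K) {h h' : X → ℝ≥0∞}
    {k : ℤ} {n : ℕ} (hle : ∀ x x', edist x x' < dyadic 1 (k + n + 1) → h x ≤ h' x') (y : X) :
    ballIntegral μ h k y ≤ K ^ 2 * dyadic (-d) n * ballIntegral μ h' (k + n) y := by
  have hsup : ∀ x', edist x' y < dyadic 1 (k + n) →
      ballIntegral μ h k y ≤ K * dyadic d k * h' x' := fun x' hx' =>
    hμ.ballIntegral_le_of_forall_le fun x hx => hle x x' <| by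
      calc edist x x' ≤ edist x y + edist y x' := edist_triangle _ _ _
        _ < dyadic 1 (k + n) + dyadic 1 (k + n) := by
            refine ENNReal.add_lt_add (hx.trans_le (dyadic_mono zero_le_one (by simp))) ?_
            rwa [edist_comm]
        _ = dyadic 1 (k + n + 1) := by rw [dyadic_add_right _ (k + n), ← mul_two]; simp [dyadic]
  calc ballIntegral μ h k y
      ≤ K * dyadic (-d) (k + n) * ballIntegral μ (fun x' => K * dyadic d k * h' x') (k + n) y :=
        hμ.le_ballIntegral_of_forall_le hsup
    _ = K * dyadic (-d) (k + n) * (K * dyadic d k * ballIntegral μ h' (k + n) y) := by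
        rw [ballIntegral, lintegral_const_mul' _ _ (mul_ne_top coe_ne_top (dyadic_ne_top d k)),
          ballIntegral]
    _ = K ^ 2 * dyadic (-d) n * (dyadic (-d) k * dyadic d k) * ballIntegral μ h' (k + n) y := by
        rw [dyadic_add_right]; ring
    _ = K ^ 2 * dyadic (-d) n * ballIntegral μ h' (k + n) y := by
        rw [dyadic_neg_mul_dyadic, mul_one]

variable [SecondCountableTopology X] [SFinite μ]

lemma lintegral_ballIntegral_mul_le (hμ : IsAhlforsRegular μ d K) {f h h' : X → ℝ≥0∞}
    (hf : Measurable f) (hh : Measurable h) (hh' : Measurable h') {k : ℤ} {n : ℕ}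
    (hle : ∀ x x', edist x x' < dyadic 1 (k + n + 1) → h x ≤ h' x') :
    ∫⁻ x, ballIntegral μ f k x * h x ∂μ ≤
      K ^ 2 * dyadic (-d) n * ∫⁻ x, ballIntegral μ f (k + n) x * h' x ∂μ := by
  rw [lintegral_ballIntegral_mul hf hh, lintegral_ballIntegral_mul hf hh',
    ← lintegral_const_mul' _ _ (mul_ne_top (pow_ne_top coe_ne_top) (dyadic_ne_top _ _))]
  refine lintegral_mono fun y => ?_
  rw [mul_left_comm]
  exact mul_le_mul_right (hμ.ballIntegral_le_ballIntegral_add_nat hle y) _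

/-! ### The quadratic energy estimate -/

lemma lintegral_weighted_ballIntegral_mul_le (hμ : IsAhlforsRegular μ d K) (α : ℝ) {g : X → ℝ≥0∞}
    (hg : Measurable g) (k : ℤ) (n : ℕ) :
    ∫⁻ x, dyadic (-α) k * ballIntegral μ g k x *
        (dyadic (-α) (k + n) * ballIntegral μ g (k + n) x) ∂μ ≤
      K * dyadic (2 * α - d) 1 * (dyadic (-(d - α)) n *
        ∫⁻ x, g x * (dyadic (-(2 * α - d)) (k + n + 1) * ballIntegral μ g (k + n + 1) x) ∂μ) := by
  have hball : ∀ y, ballIntegral μ (ballIntegral μ g (k + n)) k y ≤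
      K * dyadic d k * ballIntegral μ g (k + n + 1) y := fun y =>
    hμ.ballIntegral_le_of_forall_le fun x hx =>
      ballIntegral_le_of_edist_lt g (by lia) (by lia) hx
  have hweight : dyadic (-α) k * dyadic (-α) (k + n) * dyadic d k =
      dyadic (2 * α - d) 1 * dyadic (-(d - α)) n * dyadic (-(2 * α - d)) (k + n + 1) := by
    simp only [dyadic, ← ENNReal.rpow_add _ _ two_ne_zero ofNat_ne_top]
    push_cast
    ring_nf
  calc ∫⁻ x, dyadic (-α) k * ballIntegral μ g k x *
        (dyadic (-α) (k + n) * ballIntegral μ g (k + n) x) ∂μ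
      = dyadic (-α) k * dyadic (-α) (k + n) *
          ∫⁻ y, g y * ballIntegral μ (ballIntegral μ g (k + n)) k y ∂μ := by
        rw [← lintegral_ballIntegral_mul hg (measurable_ballIntegral hg _),
          ← lintegral_const_mul' _ _ (mul_ne_top (dyadic_ne_top _ _) (dyadic_ne_top _ _))]
        simp_rw [mul_mul_mul_comm]
    _ ≤ dyadic (-α) k * dyadic (-α) (k + n) *
          ∫⁻ y, g y * (K * dyadic d k * ballIntegral μ g (k + n + 1) y) ∂μ := by
        gcongr with y; exact hball y
    _ = K * (dyadic (-α) k * dyadic (-α) (k + n) * dyadic d k) *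
          ∫⁻ y, g y * ballIntegral μ g (k + n + 1) y ∂μ := by
        simp_rw [mul_left_comm (g _)]
        rw [lintegral_const_mul' _ _ (mul_ne_top coe_ne_top (dyadic_ne_top _ _))]
        ring
    _ = _ := by
        simp_rw [mul_left_comm (g _)]
        rw [hweight, lintegral_const_mul' _ _ (dyadic_ne_top _ _)]
        ring

lemma lintegral_dyadicPotential_sq_le (hμ : IsAhlforsRegular μ d K) (α : ℝ) {g : X → ℝ≥0∞}
    (hg : Measurable g) :
    ∫⁻ x, dyadicPotential μ (dyadic (-α)) g x ^ 2 ∂μ ≤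
      2 * (K * dyadic (2 * α - d) 1) * (∑' n : ℕ, dyadic (-(d - α)) n) *
        ∫⁻ x, g x * dyadicPotential μ (dyadic (-(2 * α - d))) g x ∂μ := by
  have hmeas : ∀ k, Measurable (ballIntegral μ g k) := measurable_ballIntegral hg
  calc ∫⁻ x, dyadicPotential μ (dyadic (-α)) g x ^ 2 ∂μ
      ≤ ∫⁻ x, 2 * ∑' k : ℤ, ∑' n : ℕ, dyadic (-α) k * ballIntegral μ g k x *
          (dyadic (-α) (k + n) * ballIntegral μ g (k + n) x) ∂μ :=
        lintegral_mono fun x => tsum_sq_le _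
    _ = 2 * ∑' k : ℤ, ∑' n : ℕ, ∫⁻ x, dyadic (-α) k * ballIntegral μ g k x *
          (dyadic (-α) (k + n) * ballIntegral μ g (k + n) x) ∂μ := by
        rw [lintegral_const_mul' _ _ ofNat_ne_top, lintegral_tsum_tsum]
        exact fun k n => by fun_prop
    _ ≤ 2 * ∑' k : ℤ, ∑' n : ℕ, K * dyadic (2 * α - d) 1 * (dyadic (-(d - α)) n *
          ∫⁻ x, g x * (dyadic (-(2 * α - d)) (k + n + 1) *
            ballIntegral μ g (k + n + 1) x) ∂μ) := by
        gcongr with k n; exact hμ.lintegral_weighted_ballIntegral_mul_le α hg k n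
    _ = 2 * (K * dyadic (2 * α - d) 1) * (∑' n : ℕ, dyadic (-(d - α)) n) *
          ∑' j, ∫⁻ x, g x * (dyadic (-(2 * α - d)) j * ballIntegral μ g j x) ∂μ := by
        simp_rw [ENNReal.tsum_mul_left]
        rw [tsum_tsum_mul_add_nat _
          (fun j => ∫⁻ x, g x * (dyadic (-(2 * α - d)) j * ballIntegral μ g j x) ∂μ)]
        ring
    _ = _ := by
        rw [← lintegral_tsum fun j => by fun_prop]
        simp_rw [ENNReal.tsum_mul_left, dyadicPotential]

end IsAhlforsRegular

/-! ### The quartic estimate -/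

lemma dyadicTail_le_mul_dyadicPotential {X : Type*} [PseudoEMetricSpace X] [MeasurableSpace X]
    {μ : Measure X} {b : ℤ → ℝ≥0∞} {L : ℝ≥0∞} (hb : ∀ k, b k ≤ L * b (k + 2)) (f : X → ℝ≥0∞) {i : ℤ}
    {x x' : X} (hxx' : edist x x' < dyadic 1 (i + 1)) :
    dyadicTail μ b f i x ≤ L * dyadicPotential μ b f x' := by
  have hinj : Function.Injective fun n : ℕ => i + n + 2 := fun m n h => by simpa using h
  calc dyadicTail μ b f i x
      ≤ ∑' n : ℕ, L * b (i + n + 2) * ballIntegral μ f (i + n + 2) x' :=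
        ENNReal.tsum_le_tsum fun n => mul_le_mul' (hb _)
          (ballIntegral_le_of_edist_lt f (by lia) (by lia) hxx')
    _ = L * ∑' n : ℕ, b (i + n + 2) * ballIntegral μ f (i + n + 2) x' := by
        simp_rw [mul_assoc, ENNReal.tsum_mul_left]
    _ ≤ L * dyadicPotential μ b f x' :=
        mul_le_mul_right (ENNReal.tsum_comp_le_tsum_of_injective hinj _) _

namespace IsAhlforsRegular

variable {X : Type*} [PseudoEMetricSpace X] [MeasurableSpace X] {μ : Measure X} {d : ℝ} {K : ℝ≥0}

lemma ballIntegral_mul_ballIntegral_le (hμ : IsAhlforsRegular μ d K) {f : X → ℝ≥0∞}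
    (hf : Measurable f) {i j : ℤ} (hij : i ≤ j) (x : X) :
    ballIntegral μ f i x * ballIntegral μ f j x ≤
      K * dyadic d j * ballIntegral μ (fun y => f y ^ 2) j x := by
  refine le_trans ?_ (hμ.ballIntegral_sq_le hf j x)
  rw [sq]
  exact mul_le_mul_left (lintegral_mono_set
    (Metric.eball_subset_eball (dyadic_mono zero_le_one hij))) _

variable [OpensMeasurableSpace X] [SecondCountableTopology X] [SFinite μ]

lemma lintegral_ballIntegral_mul_dyadicTail_le (hμ : IsAhlforsRegular μ d K)
    {b : ℤ → ℝ≥0∞} {L : ℝ≥0∞} (hbL : ∀ k, b k ≤ L * b (k + 2)) {f : X → ℝ≥0∞} (hf : Measurable f)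
    (k : ℤ) (n : ℕ) :
    ∫⁻ x, ballIntegral μ f k x *
        (ballIntegral μ f (k + n) x * dyadicTail μ b f (k + n) x ^ 2) ∂μ ≤
      K ^ 3 * L ^ 2 * (dyadic (-d) n * dyadic d (k + n + 2)) *
        ∫⁻ x, ballIntegral μ (fun y => f y ^ 2) (k + n + 2) x * dyadicPotential μ b f x ^ 2 ∂μ := by
  have hmeas : ∀ k, Measurable (ballIntegral μ f k) := measurable_ballIntegral hf
  have hmeas_sq : Measurable (ballIntegral μ (fun y => f y ^ 2) (k + n + 2)) :=
    measurable_ballIntegral (hf.pow_const 2) _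
  have hmeas_pot : Measurable (dyadicPotential μ b f) := measurable_dyadicPotential b hf
  have hlocal : ∀ x x', edist x x' < dyadic 1 (k + n + 1) →
      ballIntegral μ f (k + n) x * dyadicTail μ b f (k + n) x ^ 2 ≤
        ballIntegral μ f (k + n + 2) x' * (L * dyadicPotential μ b f x') ^ 2 := fun x x' hxx' =>
    mul_le_mul' (ballIntegral_le_of_edist_lt f (by lia) (by lia) hxx')
      (pow_le_pow_left' (dyadicTail_le_mul_dyadicPotential hbL f hxx') 2)
  have hprod : ∀ x, ballIntegral μ f (k + n) x *
      (ballIntegral μ f (k + n + 2) x * (L * dyadicPotential μ b f x) ^ 2) ≤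
      K * dyadic d (k + n + 2) * L ^ 2 * (ballIntegral μ (fun y => f y ^ 2) (k + n + 2) x *
        dyadicPotential μ b f x ^ 2) := fun x => by
    calc ballIntegral μ f (k + n) x *
          (ballIntegral μ f (k + n + 2) x * (L * dyadicPotential μ b f x) ^ 2)
        ≤ K * dyadic d (k + n + 2) * ballIntegral μ (fun y => f y ^ 2) (k + n + 2) x *
            (L * dyadicPotential μ b f x) ^ 2 := by
          rw [← mul_assoc]
          exact mul_le_mul_left (hμ.ballIntegral_mul_ballIntegral_le hf (by simp) x) _
      _ = _ := by ring
  calc ∫⁻ x, ballIntegral μ f k x *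
        (ballIntegral μ f (k + n) x * dyadicTail μ b f (k + n) x ^ 2) ∂μ
      ≤ K ^ 2 * dyadic (-d) n * ∫⁻ x, ballIntegral μ f (k + n) x *
          (ballIntegral μ f (k + n + 2) x * (L * dyadicPotential μ b f x) ^ 2) ∂μ :=
        hμ.lintegral_ballIntegral_mul_le hf
          ((hmeas _).mul ((measurable_dyadicTail b hf _).pow_const 2))
          ((hmeas _).mul ((hmeas_pot.const_mul _).pow_const 2)) hlocal
    _ ≤ K ^ 2 * dyadic (-d) n * ∫⁻ x, K * dyadic d (k + n + 2) * L ^ 2 *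
          (ballIntegral μ (fun y => f y ^ 2) (k + n + 2) x * dyadicPotential μ b f x ^ 2) ∂μ :=
        mul_le_mul_right (lintegral_mono hprod) _
    _ = _ := by
        rw [lintegral_const_mul _ (by fun_prop)]
        ring

lemma lintegral_weighted_ballIntegral_mul_dyadicTail_le (hμ : IsAhlforsRegular μ d K) {a : ℝ}
    {b : ℤ → ℝ≥0∞} {L : ℝ≥0∞} (hb : ∀ k, b k ≤ dyadic (-a) k) (hbL : ∀ k, b k ≤ L * b (k + 2))
    {f : X → ℝ≥0∞} (hf : Measurable f) (k : ℤ) (n : ℕ) :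
    ∫⁻ x, b k * ballIntegral μ f k x *
        (b (k + n) * ballIntegral μ f (k + n) x * dyadicTail μ b f (k + n) x ^ 2) ∂μ ≤
      K ^ 3 * L ^ 2 * dyadic a 4 * (dyadic (-(d - a)) n *
        ∫⁻ x, dyadic (-(2 * a - d)) (k + n + 2) * ballIntegral μ (fun y => f y ^ 2) (k + n + 2) x *
          dyadicPotential μ b f x ^ 2 ∂μ) := by
  have hb_ne_top : ∀ k, b k ≠ ∞ := fun k => ne_top_of_le_ne_top (dyadic_ne_top _ _) (hb k)
  have hweight : dyadic (-a) k * dyadic (-a) (k + n) * (dyadic (-d) n * dyadic d (k + n + 2)) =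
      dyadic a 4 * dyadic (-(d - a)) n * dyadic (-(2 * a - d)) (k + n + 2) := by
    simp only [dyadic, ← ENNReal.rpow_add _ _ two_ne_zero ofNat_ne_top]
    push_cast
    ring_nf
  calc ∫⁻ x, b k * ballIntegral μ f k x *
        (b (k + n) * ballIntegral μ f (k + n) x * dyadicTail μ b f (k + n) x ^ 2) ∂μ
      = b k * b (k + n) * ∫⁻ x, ballIntegral μ f k x *
          (ballIntegral μ f (k + n) x * dyadicTail μ b f (k + n) x ^ 2) ∂μ := by
        rw [← lintegral_const_mul' _ _ (mul_ne_top (hb_ne_top k) (hb_ne_top _))]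
        simp_rw [mul_assoc (b (k + n)), mul_mul_mul_comm]
    _ ≤ dyadic (-a) k * dyadic (-a) (k + n) *
          (K ^ 3 * L ^ 2 * (dyadic (-d) n * dyadic d (k + n + 2)) *
            ∫⁻ x, ballIntegral μ (fun y => f y ^ 2) (k + n + 2) x *
              dyadicPotential μ b f x ^ 2 ∂μ) :=
        mul_le_mul' (mul_le_mul' (hb k) (hb _))
          (hμ.lintegral_ballIntegral_mul_dyadicTail_le hbL hf k n)
    _ = K ^ 3 * L ^ 2 *
          (dyadic (-a) k * dyadic (-a) (k + n) * (dyadic (-d) n * dyadic d (k + n + 2))) *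
          ∫⁻ x, ballIntegral μ (fun y => f y ^ 2) (k + n + 2) x *
            dyadicPotential μ b f x ^ 2 ∂μ := by ring
    _ = _ := by
        simp_rw [mul_assoc (dyadic (-(2 * a - d)) (k + n + 2))]
        rw [hweight, lintegral_const_mul' _ _ (dyadic_ne_top _ _)]
        ring

lemma lintegral_dyadicPotential_pow_four_le (hμ : IsAhlforsRegular μ d K) {a : ℝ}
    {b : ℤ → ℝ≥0∞} {L : ℝ≥0∞} (hb : ∀ k, b k ≤ dyadic (-a) k) (hbL : ∀ k, b k ≤ L * b (k + 2))
    {f : X → ℝ≥0∞} (hf : Measurable f) :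
    ∫⁻ x, dyadicPotential μ b f x ^ 4 ∂μ ≤
      32 * (K ^ 3 * L ^ 2 * dyadic a 4) * (∑' n : ℕ, dyadic (-(d - a)) n) *
        ∫⁻ x, dyadicPotential μ (dyadic (-(2 * a - d))) (fun y => f y ^ 2) x *
          dyadicPotential μ b f x ^ 2 ∂μ := by
  have hmeas : ∀ k, Measurable (ballIntegral μ f k) := measurable_ballIntegral hf
  have hmeas_sq : ∀ k, Measurable (ballIntegral μ (fun y => f y ^ 2) k) :=
    measurable_ballIntegral (hf.pow_const 2)
  have hmeas_tail : ∀ i, Measurable (dyadicTail μ b f i) := measurable_dyadicTail b hf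
  have hmeas_pot : Measurable (dyadicPotential μ b f) := measurable_dyadicPotential b hf
  calc ∫⁻ x, dyadicPotential μ b f x ^ 4 ∂μ
      ≤ ∫⁻ x, 32 * ∑' k : ℤ, ∑' n : ℕ, b k * ballIntegral μ f k x *
          (b (k + n) * ballIntegral μ f (k + n) x * dyadicTail μ b f (k + n) x ^ 2) ∂μ :=
        lintegral_mono fun x => tsum_pow_four_le _
    _ = 32 * ∑' k : ℤ, ∑' n : ℕ, ∫⁻ x, b k * ballIntegral μ f k x *
          (b (k + n) * ballIntegral μ f (k + n) x * dyadicTail μ b f (k + n) x ^ 2) ∂μ := by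
        rw [lintegral_const_mul' _ _ ofNat_ne_top, lintegral_tsum_tsum]
        exact fun k n => by fun_prop
    _ ≤ 32 * ∑' k : ℤ, ∑' n : ℕ, K ^ 3 * L ^ 2 * dyadic a 4 * (dyadic (-(d - a)) n *
          ∫⁻ x, dyadic (-(2 * a - d)) (k + n + 2) *
            ballIntegral μ (fun y => f y ^ 2) (k + n + 2) x * dyadicPotential μ b f x ^ 2 ∂μ) := by
        gcongr with k n
        exact hμ.lintegral_weighted_ballIntegral_mul_dyadicTail_le hb hbL hf k n
    _ = 32 * (K ^ 3 * L ^ 2 * dyadic a 4) * (∑' n : ℕ, dyadic (-(d - a)) n) *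
          ∑' j, ∫⁻ x, dyadic (-(2 * a - d)) j * ballIntegral μ (fun y => f y ^ 2) j x *
            dyadicPotential μ b f x ^ 2 ∂μ := by
        simp_rw [ENNReal.tsum_mul_left]
        rw [tsum_tsum_mul_add_nat _ fun j => ∫⁻ x, dyadic (-(2 * a - d)) j *
          ballIntegral μ (fun y => f y ^ 2) j x * dyadicPotential μ b f x ^ 2 ∂μ]
        ring
    _ = _ := by
        rw [← lintegral_tsum fun j => by fun_prop]
        simp_rw [ENNReal.tsum_mul_right, dyadicPotential]

end IsAhlforsRegular

/-- Summable weights on the scales, equal to `1` for `|k| ≤ N` and decaying geometrically beyond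
(the subtraction in the exponent is truncated). They increase to `1` as `N → ∞`. -/
noncomputable def damping (N : ℕ) (k : ℤ) : ℝ≥0∞ := 2⁻¹ ^ (k.natAbs - N)

lemma inv_two_pow_anti {m n : ℕ} (hmn : m ≤ n) : (2⁻¹ : ℝ≥0∞) ^ n ≤ 2⁻¹ ^ m :=
  pow_le_pow_right_of_le_one' (ENNReal.inv_le_one.2 one_le_two) hmn

lemma two_pow_mul_inv_two_pow_add (m n : ℕ) : (2 : ℝ≥0∞) ^ m * 2⁻¹ ^ (n + m) = 2⁻¹ ^ n := by
  rw [pow_add, mul_left_comm, ← mul_pow, ENNReal.mul_inv_cancel two_ne_zero ofNat_ne_top, one_pow,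
    mul_one]

lemma damping_le_one (N : ℕ) (k : ℤ) : damping N k ≤ 1 := by
  simpa only [damping, pow_zero] using inv_two_pow_anti (Nat.zero_le (k.natAbs - N))

lemma damping_mono (k : ℤ) : Monotone fun N => damping N k := fun _ _ hMN =>
  inv_two_pow_anti (Nat.sub_le_sub_left hMN _)

lemma damping_eq_one {N : ℕ} {k : ℤ} (hk : k.natAbs ≤ N) : damping N k = 1 := by
  rw [damping, Nat.sub_eq_zero_of_le hk, pow_zero]

lemma damping_le_four_mul (N : ℕ) (k : ℤ) : damping N k ≤ 4 * damping N (k + 2) := by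
  calc damping N k = 4 * 2⁻¹ ^ (k.natAbs - N + 2) := by
        rw [damping, ← two_pow_mul_inv_two_pow_add 2]; norm_num
    _ ≤ 4 * damping N (k + 2) := mul_le_mul_right (inv_two_pow_anti (by lia)) _

lemma tsum_damping_ne_top (N : ℕ) : ∑' k, damping N k ≠ ∞ := by
  have hshift : ∀ j : ℕ, ∑' n : ℕ, (2⁻¹ : ℝ≥0∞) ^ (n + j - N) ≠ ∞ := fun j => by
    refine ne_top_of_le_ne_top (b := 2 ^ N * ∑' n : ℕ, 2⁻¹ ^ n) ?_ ?_
    · simp [ENNReal.tsum_geometric, ENNReal.mul_eq_top]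
    · rw [← ENNReal.tsum_mul_left]
      refine ENNReal.tsum_le_tsum fun n => ?_
      calc (2⁻¹ : ℝ≥0∞) ^ (n + j - N) = 2 ^ N * 2⁻¹ ^ (n + j - N + N) :=
            (two_pow_mul_inv_two_pow_add N _).symm
        _ ≤ 2 ^ N * 2⁻¹ ^ n := mul_le_mul_right (inv_two_pow_anti (by lia)) _
  rw [tsum_of_nat_of_neg_add_one ENNReal.summable ENNReal.summable]
  have hneg : ∀ n : ℕ, (-((n : ℤ) + 1)).natAbs = n + 1 := fun n => by lia
  simpa only [damping, Int.natAbs_natCast, hneg, add_zero] using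
    ENNReal.add_ne_top.2 ⟨hshift 0, hshift 1⟩

section DampedPotential

variable {X : Type*} [PseudoEMetricSpace X] [MeasurableSpace X] (μ : Measure X) (b : ℤ → ℝ≥0∞)
  (f : X → ℝ≥0∞) (x : X)

lemma monotone_dyadicPotential_damping :
    Monotone fun N => dyadicPotential μ (fun k => damping N k * b k) f x := fun _ _ hMN =>
  ENNReal.tsum_le_tsum fun k => mul_le_mul_left (mul_le_mul_left (damping_mono k hMN) _) _

lemma tendsto_dyadicPotential_damping :
    Tendsto (fun N => dyadicPotential μ (fun k => damping N k * b k) f x) atTop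
      (𝓝 (dyadicPotential μ b f x)) := by
  simp only [dyadicPotential, ← lintegral_count]
  refine lintegral_tendsto_of_tendsto_of_monotone (fun N => by fun_prop) (ae_of_all _ fun k => ?_)
    (ae_of_all _ fun k => ?_)
  · exact fun M N hMN => mul_le_mul_left (mul_le_mul_left (damping_mono k hMN) _) _
  · refine tendsto_const_nhds.congr' ?_
    filter_upwards [eventually_ge_atTop k.natAbs] with N hN
    rw [damping_eq_one hN, one_mul]

end DampedPotential

namespace IsAhlforsRegular

variable {X : Type*} [PseudoEMetricSpace X] [MeasurableSpace X] {μ : Measure X} {d : ℝ} {K : ℝ≥0}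

lemma dyadicPotential_sq_le_tsum_sq_mul (hμ : IsAhlforsRegular μ d K) (a : ℝ) (c : ℤ → ℝ≥0∞)
    {f : X → ℝ≥0∞} (hf : Measurable f) (x : X) :
    dyadicPotential μ (fun k => c k * dyadic (-a) k) f x ^ 2 ≤
      (∑' k, c k) ^ 2 * (K * dyadicPotential μ (dyadic (-(2 * a - d))) (fun y => f y ^ 2) x) := by
  have hterm : ∀ k, (dyadic (-a) k * ballIntegral μ f k x) ^ 2 ≤
      K * dyadicPotential μ (dyadic (-(2 * a - d))) (fun y => f y ^ 2) x := fun k => by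
    calc (dyadic (-a) k * ballIntegral μ f k x) ^ 2
        ≤ dyadic (-a) k ^ 2 * (K * dyadic d k * ballIntegral μ (fun y => f y ^ 2) k x) := by
          rw [mul_pow]; exact mul_le_mul_right (hμ.ballIntegral_sq_le hf k x) _
      _ = K * (dyadic (-(2 * a - d)) k * ballIntegral μ (fun y => f y ^ 2) k x) := by
          rw [show -(2 * a - d) = -a + -a + d by ring, dyadic_add_left, dyadic_add_left]
          ring
      _ ≤ K * dyadicPotential μ (dyadic (-(2 * a - d))) (fun y => f y ^ 2) x := by
          gcongr; exact ENNReal.le_tsum k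
  simpa only [dyadicPotential, mul_assoc] using tsum_mul_sq_le c hterm

variable [OpensMeasurableSpace X] [SecondCountableTopology X] [SFinite μ]

/-- The damping makes the left-hand side finite, so that it can be absorbed. -/
lemma lintegral_damped_dyadicPotential_pow_four_le (hμ : IsAhlforsRegular μ d K) (a : ℝ) (N : ℕ)
    {f : X → ℝ≥0∞} (hf : Measurable f)
    (hfin : ∫⁻ x, dyadicPotential μ (dyadic (-(2 * a - d))) (fun y => f y ^ 2) x ^ 2 ∂μ ≠ ∞) :
    ∫⁻ x, dyadicPotential μ (fun k => damping N k * dyadic (-a) k) f x ^ 4 ∂μ ≤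
      (32 * (K ^ 3 * (4 * dyadic a 2) ^ 2 * dyadic a 4) * ∑' n : ℕ, dyadic (-(d - a)) n) ^ 2 *
        ∫⁻ x, dyadicPotential μ (dyadic (-(2 * a - d))) (fun y => f y ^ 2) x ^ 2 ∂μ := by
  set A := 32 * (K ^ 3 * (4 * dyadic a 2) ^ 2 * dyadic a 4) * ∑' n : ℕ, dyadic (-(d - a)) n
  set J := dyadicPotential μ (dyadic (-(2 * a - d))) (fun y => f y ^ 2)
  set P := dyadicPotential μ (fun k => damping N k * dyadic (-a) k) f
  have hJ : Measurable J := measurable_dyadicPotential _ (hf.pow_const 2)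
  have hP : Measurable P := measurable_dyadicPotential _ hf
  have hweight_le : ∀ k, damping N k * dyadic (-a) k ≤ dyadic (-a) k := fun k =>
    mul_le_of_le_one_left' (damping_le_one N k)
  have hweight_add : ∀ k, damping N k * dyadic (-a) k ≤
      4 * dyadic a 2 * (damping N (k + 2) * dyadic (-a) (k + 2)) := fun k => by
    calc damping N k * dyadic (-a) k ≤ 4 * damping N (k + 2) * dyadic (-a) k :=
          mul_le_mul_left (damping_le_four_mul N k) _
      _ = 4 * damping N (k + 2) * (dyadic (-a) k * (dyadic (-a) 2 * dyadic a 2)) := by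
          rw [dyadic_neg_mul_dyadic, mul_one]
      _ = 4 * dyadic a 2 * (damping N (k + 2) * dyadic (-a) (k + 2)) := by
          rw [dyadic_add_right]; ring
  have hP_fin : ∫⁻ x, (P x ^ 2) ^ 2 ∂μ ≠ ∞ := by
    refine ne_top_of_le_ne_top ?_ (lintegral_mono fun x =>
      pow_le_pow_left' (hμ.dyadicPotential_sq_le_tsum_sq_mul a (damping N) hf x) 2)
    simp_rw [← mul_assoc, mul_pow _ (dyadicPotential _ _ _ _)]
    rw [lintegral_const_mul _ (hJ.pow_const 2)]
    finiteness [tsum_damping_ne_top N]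
  have hP_le : ∫⁻ x, (P x ^ 2) ^ 2 ∂μ ≤ ∫⁻ x, A * J x * P x ^ 2 ∂μ := by
    simp_rw [← pow_mul, mul_assoc]
    rw [lintegral_const_mul _ (by fun_prop)]
    exact hμ.lintegral_dyadicPotential_pow_four_le hweight_le hweight_add hf
  calc ∫⁻ x, P x ^ 4 ∂μ = ∫⁻ x, (P x ^ 2) ^ 2 ∂μ := by simp_rw [← pow_mul]
    _ ≤ ∫⁻ x, (A * J x) ^ 2 ∂μ := lintegral_sq_le_of_le_lintegral_mul (hP.pow_const 2)
        (hJ.const_mul A) hP_fin hP_le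
    _ = A ^ 2 * ∫⁻ x, J x ^ 2 ∂μ := by
        simp_rw [mul_pow]; rw [lintegral_const_mul _ (hJ.pow_const 2)]

lemma lintegral_dyadicPotential_dyadic_neg_pow_four_le (hμ : IsAhlforsRegular μ d K) (a : ℝ)
    {f : X → ℝ≥0∞} (hf : Measurable f)
    (hfin : ∫⁻ x, dyadicPotential μ (dyadic (-(2 * a - d))) (fun y => f y ^ 2) x ^ 2 ∂μ ≠ ∞) :
    ∫⁻ x, dyadicPotential μ (dyadic (-a)) f x ^ 4 ∂μ ≤
      (32 * (K ^ 3 * (4 * dyadic a 2) ^ 2 * dyadic a 4) * ∑' n : ℕ, dyadic (-(d - a)) n) ^ 2 *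
        ∫⁻ x, dyadicPotential μ (dyadic (-(2 * a - d))) (fun y => f y ^ 2) x ^ 2 ∂μ := by
  have hlim : Tendsto
      (fun N => ∫⁻ x, dyadicPotential μ (fun k => damping N k * dyadic (-a) k) f x ^ 4 ∂μ) atTop
      (𝓝 (∫⁻ x, dyadicPotential μ (dyadic (-a)) f x ^ 4 ∂μ)) :=
    lintegral_tendsto_of_tendsto_of_monotone
      (fun N => ((measurable_dyadicPotential _ hf).pow_const 4).aemeasurable)
      (ae_of_all _ fun x M N hMN =>
        pow_le_pow_left' (monotone_dyadicPotential_damping μ _ f x hMN) 4)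
      (ae_of_all _ fun x => ENNReal.Tendsto.pow (tendsto_dyadicPotential_damping μ _ f x))
  exact le_of_tendsto' hlim fun N => hμ.lintegral_damped_dyadicPotential_pow_four_le a N hf hfin

end IsAhlforsRegular

/-! ### Riesz potentials and the Hartree energy -/

lemma IsAhlforsRegular.lintegral_dyadicPotential_sq_le_energy {X : Type*} [PseudoEMetricSpace X]
    [MeasurableSpace X] [OpensMeasurableSpace X] [SecondCountableTopology X] {μ : Measure X}
    [SFinite μ] {d : ℝ} {K : ℝ≥0} (hμ : IsAhlforsRegular μ d K) {α : ℝ} (hα : d < 2 * α)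
    {g : X → ℝ≥0∞} (hg : Measurable g) :
    ∫⁻ x, dyadicPotential μ (dyadic (-α)) g x ^ 2 ∂μ ≤
      2 * (K * dyadic (2 * α - d) 1) * (∑' n : ℕ, dyadic (-(d - α)) n) *
        (∑' n : ℕ, dyadic (-(2 * α - d)) n) *
          ∫⁻ x, ∫⁻ y, g x * g y * edist x y ^ (-(2 * α - d)) ∂μ ∂μ := by
  refine (hμ.lintegral_dyadicPotential_sq_le α hg).trans ?_
  rw [mul_assoc _ (∑' n : ℕ, dyadic (-(2 * α - d)) n),
    ← lintegral_const_mul' _ _ (tsum_dyadic_neg_ne_top (sub_pos.2 hα))]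
  refine mul_le_mul_right (lintegral_mono fun x => ?_) _
  calc g x * dyadicPotential μ (dyadic (-(2 * α - d))) g x
      ≤ g x * ((∑' n : ℕ, dyadic (-(2 * α - d)) n) *
          ∫⁻ y, edist x y ^ (-(2 * α - d)) * g y ∂μ) :=
        mul_le_mul_right (dyadicPotential_le_lintegral_edist_rpow_neg (sub_pos.2 hα) hg x) _
    _ = (∑' n : ℕ, dyadic (-(2 * α - d)) n) *
          ∫⁻ y, g x * g y * edist x y ^ (-(2 * α - d)) ∂μ := by
        rw [mul_left_comm, ← lintegral_const_mul _ (by fun_prop)]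
        exact congrArg _ (lintegral_congr fun y => by ring)

lemma IsAhlforsRegular.exists_lintegral_edist_rpow_pow_four_le_energy {X : Type*}
    [PseudoEMetricSpace X] [MeasurableSpace X] [OpensMeasurableSpace X]
    [SecondCountableTopology X] {μ : Measure X} [SFinite μ] {d : ℝ} {K : ℝ≥0}
    (hμ : IsAhlforsRegular μ d K) {a : ℝ} (ha : 3 * d < 4 * a) (had : a < d) :
    ∃ C ≠ ∞, ∀ f : X → ℝ≥0∞, Measurable f →
      ∫⁻ x, (∫⁻ y, edist x y ^ (-a) * f y ∂μ) ^ 4 ∂μ ≤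
        C * ∫⁻ x, ∫⁻ y, f x ^ 2 * f y ^ 2 * edist x y ^ (-(4 * a - 3 * d)) ∂μ ∂μ := by
  set A := (32 * (K ^ 3 * (4 * dyadic a 2) ^ 2 * dyadic a 4) * ∑' n : ℕ, dyadic (-(d - a)) n) ^ 2
  set B := 2 * (K * dyadic (4 * a - 3 * d) 1) * (∑' n : ℕ, dyadic (-(2 * (d - a))) n) *
    ∑' n : ℕ, dyadic (-(4 * a - 3 * d)) n
  have hA : A ≠ ∞ := by
    finiteness [dyadic_ne_top a 2, dyadic_ne_top a 4, tsum_dyadic_neg_ne_top (sub_pos.2 had)]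
  have hB : B ≠ ∞ := by
    finiteness [dyadic_ne_top (4 * a - 3 * d) 1, tsum_dyadic_neg_ne_top (sub_pos.2 ha),
      tsum_dyadic_neg_ne_top (mul_pos two_pos (sub_pos.2 had))]
  refine ⟨dyadic a 1 ^ 4 * A * B + 1, by finiteness [dyadic_ne_top a 1], fun f hf => ?_⟩
  set E := ∫⁻ x, ∫⁻ y, f x ^ 2 * f y ^ 2 * edist x y ^ (-(4 * a - 3 * d)) ∂μ ∂μ
  rcases eq_or_ne E ∞ with hE | hE
  · simp [hE, ENNReal.mul_top]
  have hJ : ∫⁻ x, dyadicPotential μ (dyadic (-(2 * a - d))) (fun y => f y ^ 2) x ^ 2 ∂μ ≤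
      B * E := by
    have := hμ.lintegral_dyadicPotential_sq_le_energy (α := 2 * a - d) (by linarith)
      (hf.pow_const 2)
    rwa [show 2 * (2 * a - d) - d = 4 * a - 3 * d by ring,
      show d - (2 * a - d) = 2 * (d - a) by ring] at this
  have hJ_ne_top := ne_top_of_le_ne_top (mul_ne_top hB hE) hJ
  calc ∫⁻ x, (∫⁻ y, edist x y ^ (-a) * f y ∂μ) ^ 4 ∂μ
      ≤ ∫⁻ x, dyadic a 1 ^ 4 * dyadicPotential μ (dyadic (-a)) f x ^ 4 ∂μ := by
        gcongr with x
        rw [← mul_pow]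
        exact pow_le_pow_left' (lintegral_edist_rpow_neg_le_dyadicPotential (by linarith) hf x) 4
    _ = dyadic a 1 ^ 4 * ∫⁻ x, dyadicPotential μ (dyadic (-a)) f x ^ 4 ∂μ :=
        lintegral_const_mul _ ((measurable_dyadicPotential _ hf).pow_const 4)
    _ ≤ dyadic a 1 ^ 4 * (A * (B * E)) := by
        gcongr
        exact (hμ.lintegral_dyadicPotential_dyadic_neg_pow_four_le a hf hJ_ne_top).trans
          (mul_le_mul_right hJ _)
    _ = dyadic a 1 ^ 4 * A * B * E := by ring
    _ ≤ (dyadic a 1 ^ 4 * A * B + 1) * E := by gcongr; exact le_self_add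

lemma exists_isAhlforsRegular_addHaar {E : Type*} [NormedAddCommGroup E] [NormedSpace ℝ E]
    [FiniteDimensional ℝ E] [MeasurableSpace E] [BorelSpace E] (μ : Measure E)
    [μ.IsAddHaarMeasure] : ∃ K : ℝ≥0, IsAhlforsRegular μ (Module.finrank ℝ E) K := by
  obtain ⟨m, hm⟩ : ∃ m : ℝ≥0, μ (Metric.ball 0 1) = m :=
    ⟨_, (coe_toNNReal measure_ball_lt_top.ne).symm⟩
  have hm0 : m ≠ 0 := by
    rw [← ENNReal.coe_ne_zero, ← hm]
    exact (Metric.measure_ball_pos μ 0 one_pos).ne'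
  have hball (x : E) (r : ℝ≥0∞) (h0 : r ≠ 0) (htop : r ≠ ∞) :
      μ (Metric.eball x r) = m * r ^ (Module.finrank ℝ E : ℝ) := by
    lift r to ℝ≥0 using htop
    rw [Metric.eball_coe, Measure.addHaar_ball_of_pos μ x
      (NNReal.coe_pos.2 (pos_iff_ne_zero.2 (by simpa using h0))), ofReal_pow r.coe_nonneg,
      ofReal_coe_nnreal, rpow_natCast, hm, mul_comm]
  refine ⟨m + m⁻¹, fun x r h0 htop => ?_, fun x r h0 htop => ?_⟩
  · rw [hball x r h0 htop]
    gcongr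
    exact le_self_add
  · rw [hball x r h0 htop, ← mul_assoc]
    refine le_mul_of_one_le_left' ?_
    norm_cast
    rw [add_mul, inv_mul_cancel₀ hm0]
    exact le_add_self

lemma lintegral_ofReal_norm_sub_rpow_mul {E : Type*} [NormedAddCommGroup E] [MeasurableSpace E]
    (μ : Measure E) [NullSingletonClass μ] (γ : ℝ) (f : E → ℝ≥0∞) (x : E) :
    ∫⁻ y, ENNReal.ofReal (‖x - y‖ ^ γ) * f y ∂μ = ∫⁻ y, edist x y ^ γ * f y ∂μ := by
  refine lintegral_congr_ae ?_
  filter_upwards [measure_eq_zero_iff_ae_notMem.1 (measure_singleton (μ := μ) x)] with y hy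
  rw [edist_dist, dist_eq_norm, ofReal_rpow_of_pos (norm_pos_iff.2 (sub_ne_zero.2 (Ne.symm hy)))]

theorem riesz_potential_L4_le_hartree_general {E : Type*} [NormedAddCommGroup E]
    [NormedSpace ℝ E] [FiniteDimensional ℝ E] [MeasurableSpace E] [BorelSpace E] (μ : Measure E)
    [μ.IsAddHaarMeasure] {a : ℝ} (ha : 3 * (Module.finrank ℝ E : ℝ) < 4 * a)
    (had : a < Module.finrank ℝ E) :
    ∃ C : ℝ, 0 < C ∧ ∀ f : E → ℝ≥0∞, Measurable f →
      ∫⁻ x, (∫⁻ y, ENNReal.ofReal (‖x - y‖ ^ (-a)) * f y ∂μ) ^ 4 ∂μ ≤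
        ENNReal.ofReal C * ∫⁻ x, ∫⁻ y, f x ^ 2 * f y ^ 2 *
          ENNReal.ofReal (‖x - y‖ ^ (-(4 * a - 3 * Module.finrank ℝ E))) ∂μ ∂μ := by
  have : Nontrivial E := Module.nontrivial_of_finrank_pos (R := ℝ) (by
    have : (0 : ℝ) < Module.finrank ℝ E := by linarith
    exact_mod_cast this)
  obtain ⟨K, hK⟩ := exists_isAhlforsRegular_addHaar μ
  obtain ⟨C, hC, hle⟩ := hK.exists_lintegral_edist_rpow_pow_four_le_energy ha had
  refine ⟨C.toReal + 1, by positivity, fun f hf => ?_⟩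
  have hC' : C ≤ ENNReal.ofReal (C.toReal + 1) :=
    (ofReal_toReal hC).ge.trans (ofReal_le_ofReal (le_add_of_nonneg_right zero_le_one))
  simp_rw [mul_comm (_ * _ : ℝ≥0∞), lintegral_ofReal_norm_sub_rpow_mul] at hle ⊢
  exact (hle f hf).trans (mul_le_mul_left hC' _)

/-- For `d ≥ 5`, the fourth power of the `L⁴` norm of the Riesz potential of order
`(d-4)/4` of a nonnegative `f` is controlled by the Hartree potential energy
`∬ f(x)² f(y)² |x-y|^{-4} dx dy`, as an inequality in `[0,∞]`. -/
theorem riesz_potential_L4_le_hartree (d : ℕ) (hd : 5 ≤ d) :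
    ∃ C : ℝ, 0 < C ∧
      ∀ f : EuclideanSpace ℝ (Fin d) → ℝ≥0∞, Measurable f →
        (∫⁻ x, (∫⁻ y, ENNReal.ofReal (‖x - y‖ ^ (-((3 * (d : ℝ) + 4) / 4))) * f y) ^ 4)
          ≤ ENNReal.ofReal C *
            ∫⁻ x, ∫⁻ y, (f x) ^ 2 * (f y) ^ 2 * ENNReal.ofReal (‖x - y‖ ^ (-4 : ℝ)) := by
  have hd' : (5 : ℝ) ≤ d := by exact_mod_cast hd
  have hexp : 4 * ((3 * (d : ℝ) + 4) / 4) - 3 * d = 4 := by ring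
  simpa only [finrank_euclideanSpace_fin, hexp] using riesz_potential_L4_le_hartree_general
    (volume : Measure (EuclideanSpace ℝ (Fin d))) (a := (3 * d + 4) / 4)
    (by rw [finrank_euclideanSpace_fin]; linarith) (by rw [finrank_euclideanSpace_fin]; linarith)
end

section
/- Let d ≥ 1 and γ ∈ (0, d). For all measurable functions f, g : ℝ^d → [0, ∞], the bilinear Riesz form satisfies the Cauchy–Schwarz inequality ∬_{ℝ^d×ℝ^d} f(x) g(y) |x − y|^{-γ} dx dy ≤ ( ∬_{ℝ^d×ℝ^d} f(x) f(y) |x − y|^{-γ} dx dy )^{1/2} ( ∬_{ℝ^d×ℝ^d} g(x) g(y) |x − y|^{-γ} dx dy )^{1/2}, as an inequality in [0, ∞]. -/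
/-!
Averaging the Gaussians `exp (-t‖x - y‖²)` over `t ∈ (0, ∞)` with weight `t ^ (γ/2 - 1) / Γ(γ/2)`
gives the Riesz kernel, and by the parallelogram law each of these Gaussians is, up to a factor
depending only on `t`, the integral over `z` of `exp (-2t‖x - z‖²) exp (-2t‖y - z‖²)`. Hence
`‖x - y‖ ^ (-γ) = ∫ k x p * k y p dp` with `p = (t, z)`. By Tonelli the mutual energy of two
measures is then the `L²` inner product of their potentials `p ↦ ∫ k x p dμ(x)`, and the claim is
the Cauchy–Schwarz inequality in `L²(dp)`.
-/

open MeasureTheory ENNReal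

section Superposition

variable {X Y Z : Type*} [MeasurableSpace X] [MeasurableSpace Y] [MeasurableSpace Z]
  {k : X → Z → ℝ≥0∞} {l : Y → Z → ℝ≥0∞}

lemma lintegral_lintegral_lintegral_mul_eq (hk : Measurable (Function.uncurry k))
    (hl : Measurable (Function.uncurry l)) (μ : Measure X) (ν : Measure Y) (ρ : Measure Z)
    [SFinite μ] [SFinite ν] [SFinite ρ] :
    ∫⁻ x, ∫⁻ y, ∫⁻ z, k x z * l y z ∂ρ ∂ν ∂μ
      = ∫⁻ z, (∫⁻ x, k x z ∂μ) * (∫⁻ y, l y z ∂ν) ∂ρ := by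
  have hkx (x : X) : Measurable (k x) := hk.of_uncurry_left
  have hkz (z : Z) : Measurable fun x ↦ k x z := hk.of_uncurry_right
  have hlz (z : Z) : Measurable fun y ↦ l y z := hl.of_uncurry_right
  have hpot : Measurable fun z ↦ ∫⁻ y, l y z ∂ν := hl.lintegral_prod_left'
  calc ∫⁻ x, ∫⁻ y, ∫⁻ z, k x z * l y z ∂ρ ∂ν ∂μ
    _ = ∫⁻ x, ∫⁻ z, ∫⁻ y, k x z * l y z ∂ν ∂ρ ∂μ := lintegral_congr fun x ↦
        lintegral_lintegral_swap (((hkx x).comp measurable_snd).mul hl).aemeasurable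
    _ = ∫⁻ x, ∫⁻ z, k x z * ∫⁻ y, l y z ∂ν ∂ρ ∂μ := by
        simp_rw [lintegral_const_mul _ (hlz _)]
    _ = ∫⁻ z, ∫⁻ x, k x z * ∫⁻ y, l y z ∂ν ∂μ ∂ρ :=
        lintegral_lintegral_swap (hk.mul (hpot.comp measurable_snd)).aemeasurable
    _ = ∫⁻ z, (∫⁻ x, k x z ∂μ) * (∫⁻ y, l y z ∂ν) ∂ρ := by
        simp_rw [lintegral_mul_const _ (hkz _)]

lemma lintegral_lintegral_lintegral_mul_cauchy_schwarz (hk : Measurable (Function.uncurry k))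
    (μ ν : Measure X) (ρ : Measure Z) [SFinite μ] [SFinite ν] [SFinite ρ] :
    ∫⁻ x, ∫⁻ y, ∫⁻ z, k x z * k y z ∂ρ ∂ν ∂μ
      ≤ (∫⁻ x, ∫⁻ y, ∫⁻ z, k x z * k y z ∂ρ ∂μ ∂μ) ^ ((1 : ℝ) / 2) *
        (∫⁻ x, ∫⁻ y, ∫⁻ z, k x z * k y z ∂ρ ∂ν ∂ν) ^ ((1 : ℝ) / 2) := by
  have hpot (μ : Measure X) [SFinite μ] : AEMeasurable (fun z ↦ ∫⁻ x, k x z ∂μ) ρ :=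
    hk.lintegral_prod_left'.aemeasurable
  simpa only [lintegral_lintegral_lintegral_mul_eq hk hk, Pi.mul_apply, ENNReal.rpow_two, sq] using
    ENNReal.lintegral_mul_le_Lp_mul_Lq ρ Real.HolderConjugate.two_two (hpot μ) (hpot ν)

end Superposition

lemma lintegral_rpow_mul_exp_neg_mul_Ioi {a r : ℝ} (ha : 0 < a) (hr : 0 ≤ r) :
    ∫⁻ t in Set.Ioi (0 : ℝ), ENNReal.ofReal (t ^ (a - 1) * Real.exp (-(r * t)))
      = ENNReal.ofReal r ^ (-a) * ENNReal.ofReal (Real.Gamma a) := by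
  have hΓ : 0 < Real.Gamma a := Real.Gamma_pos_of_pos ha
  have hnonneg : 0 ≤ᵐ[volume.restrict (Set.Ioi 0)]
      fun t : ℝ ↦ t ^ (a - 1) * Real.exp (-(r * t)) := by
    filter_upwards [ae_restrict_mem measurableSet_Ioi] with t (ht : 0 < t)
    positivity
  rcases hr.eq_or_lt with rfl | hr
  · have hdiverges : ¬ IntegrableOn (fun t : ℝ ↦ t ^ (a - 1) * Real.exp (-(0 * t)))
        (Set.Ioi 0) := by
      simpa using not_integrableOn_Ioi_rpow (a - 1)
    rw [IntegrableOn, ← lintegral_ofReal_ne_top_iff_integrable (by fun_prop) hnonneg,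
      not_not] at hdiverges
    rw [hdiverges, ENNReal.ofReal_zero, ENNReal.zero_rpow_of_neg (by linarith),
      ENNReal.top_mul (by simpa using hΓ)]
  · have hint := Real.integral_rpow_mul_exp_neg_mul_Ioi ha hr
    have hintegrable : IntegrableOn (fun t : ℝ ↦ t ^ (a - 1) * Real.exp (-(r * t)))
        (Set.Ioi 0) := .of_integral_ne_zero (by rw [hint]; positivity)
    rw [← ofReal_integral_eq_lintegral_ofReal hintegrable hnonneg, hint,
      ENNReal.ofReal_mul (by positivity), one_div, Real.inv_rpow hr.le, ← Real.rpow_neg hr.le,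
      ENNReal.ofReal_rpow_of_pos hr]

/-- The Gaussian `exp (-t‖x‖²)`, taken with values in `[0, ∞]` as the integrand of lower integrals.
It is not normalised, and `t` is an inverse variance. -/
noncomputable def gaussian {E : Type*} [Norm E] (t : ℝ) (x : E) : ℝ≥0∞ :=
  ENNReal.ofReal (Real.exp (-(t * ‖x‖ ^ 2)))

section Normed

variable {E : Type*} [SeminormedAddCommGroup E]

@[fun_prop]
lemma measurable_gaussian [MeasurableSpace E] [OpensMeasurableSpace E] :
    Measurable fun p : ℝ × E ↦ gaussian p.1 p.2 := by
  unfold gaussian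
  fun_prop

lemma gaussian_smul [NormedSpace ℝ E] (t c : ℝ) (x : E) :
    gaussian t (c • x) = gaussian (c ^ 2 * t) x := by
  rw [gaussian, gaussian, norm_smul, mul_pow, Real.norm_eq_abs, sq_abs]
  ring_nf

lemma enorm_rpow_neg_eq_lintegral_gaussian {γ : ℝ} (hγ : 0 < γ) (x : E) :
    ‖x‖ₑ ^ (-γ) = ∫⁻ t in Set.Ioi (0 : ℝ),
      ENNReal.ofReal (t ^ (γ / 2 - 1) / Real.Gamma (γ / 2)) * gaussian t x := by
  have hΓ : 0 < Real.Gamma (γ / 2) := Real.Gamma_pos_of_pos (by positivity)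
  have hsplit : ∀ t ∈ Set.Ioi (0 : ℝ),
      ENNReal.ofReal (t ^ (γ / 2 - 1) / Real.Gamma (γ / 2)) * gaussian t x
        = ENNReal.ofReal (t ^ (γ / 2 - 1) * Real.exp (-(‖x‖ ^ 2 * t)))
          * (ENNReal.ofReal (Real.Gamma (γ / 2)))⁻¹ := by
    intro t (ht : 0 < t)
    rw [gaussian, ← ENNReal.ofReal_inv_of_pos hΓ, ← ENNReal.ofReal_mul (by positivity),
      ← ENNReal.ofReal_mul (by positivity)]
    congr 1
    ring_nf
  rw [setLIntegral_congr_fun measurableSet_Ioi hsplit, lintegral_mul_const _ (by fun_prop),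
    lintegral_rpow_mul_exp_neg_mul_Ioi (by positivity) (by positivity),
    ENNReal.mul_inv_cancel_right (by simpa using hΓ) ENNReal.ofReal_ne_top,
    ENNReal.ofReal_pow (norm_nonneg x), ofReal_norm, ← ENNReal.rpow_two, ← ENNReal.rpow_mul]
  congr 1
  ring

end Normed

section InnerProduct

variable {E : Type*} [NormedAddCommGroup E] [InnerProductSpace ℝ E]

lemma gaussian_mul_gaussian (t : ℝ) (x y : E) :
    gaussian (2 * t) x * gaussian (2 * t) y = gaussian t (x - y) * gaussian t (x + y) := by
  have hparallelogram := parallelogram_law_with_norm ℝ x y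
  simp only [gaussian, ← ENNReal.ofReal_mul (Real.exp_nonneg _), ← Real.exp_add]
  congr 2
  linear_combination t * hparallelogram

variable [FiniteDimensional ℝ E] [MeasurableSpace E] [BorelSpace E]

lemma lintegral_gaussian {t : ℝ} (ht : 0 < t) :
    ∫⁻ x : E, gaussian t x
      = ENNReal.ofReal ((Real.pi / t) ^ ((Module.finrank ℝ E : ℝ) / 2)) := by
  have hint := GaussianFourier.integral_rexp_neg_mul_sq_norm (V := E) ht
  simp_rw [neg_mul] at hint
  rw [← hint, ofReal_integral_eq_lintegral_ofReal]
  · rfl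
  · exact .of_integral_ne_zero (by rw [hint]; positivity)
  · exact .of_forall fun x ↦ Real.exp_nonneg _

lemma lintegral_gaussian_mul_gaussian (t : ℝ) (x y : E) :
    ∫⁻ z, gaussian (2 * t) (x - z) * gaussian (2 * t) (y - z)
      = gaussian t (x - y) * ∫⁻ z : E, gaussian (4 * t) z := by
  have hprod (z : E) : gaussian (2 * t) (x - z) * gaussian (2 * t) (y - z)
      = gaussian t (x - y) * gaussian (4 * t) (midpoint ℝ x y - z) := by
    have hsum : x - z + (y - z) = (2 : ℝ) • (midpoint ℝ x y - z) := by
      rw [smul_sub, two_smul ℝ (midpoint ℝ x y), midpoint_add_self]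
      module
    rw [gaussian_mul_gaussian, sub_sub_sub_cancel_right, hsum, gaussian_smul]
    norm_num
  simp_rw [hprod]
  rw [lintegral_const_mul _ (by fun_prop), lintegral_sub_left_eq_self (gaussian (4 * t))]

variable (E) in
/-- The measure on pairs `(t, z)` that writes the Riesz kernel on `E` as a superposition of products
of Gaussians centred at `z`: the Gamma weight `t ^ (γ/2 - 1) / Γ(γ/2)` in `t`, divided by the
Gaussian mass which the integral over `z` produces, times Lebesgue measure in `z`. -/
noncomputable def rieszMixture (γ : ℝ) : Measure (ℝ × E) :=
  ((volume.restrict (Set.Ioi 0)).withDensity fun t ↦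
    ENNReal.ofReal (t ^ (γ / 2 - 1) / Real.Gamma (γ / 2)) * (∫⁻ z : E, gaussian (4 * t) z)⁻¹).prod
    volume

instance (γ : ℝ) : SFinite (rieszMixture E γ) := by
  unfold rieszMixture
  infer_instance

lemma enorm_sub_rpow_neg_eq_lintegral_rieszMixture {γ : ℝ} (hγ : 0 < γ) (x y : E) :
    ‖x - y‖ₑ ^ (-γ) = ∫⁻ p, gaussian (2 * p.1) (x - p.2) * gaussian (2 * p.1) (y - p.2)
      ∂rieszMixture E γ := by
  rw [enorm_rpow_neg_eq_lintegral_gaussian hγ, rieszMixture, lintegral_prod _ (by fun_prop)]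
  simp_rw [lintegral_gaussian_mul_gaussian]
  rw [lintegral_withDensity_eq_lintegral_mul _ (by fun_prop) (by fun_prop)]
  refine setLIntegral_congr_fun measurableSet_Ioi fun t (ht : 0 < t) ↦ ?_
  have hmass_ne_zero : ∫⁻ z : E, gaussian (4 * t) z ≠ 0 := by
    rw [lintegral_gaussian (by positivity), ENNReal.ofReal_ne_zero_iff]
    positivity
  have hmass_ne_top : ∫⁻ z : E, gaussian (4 * t) z ≠ ∞ := by
    rw [lintegral_gaussian (by positivity)]
    exact ENNReal.ofReal_ne_top
  rw [Pi.mul_apply, mul_mul_mul_comm,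
    ENNReal.inv_mul_cancel hmass_ne_zero hmass_ne_top, mul_one]

theorem riesz_energy_cauchy_schwarz {γ : ℝ} (hγ : 0 < γ) (μ ν : Measure E) [SFinite μ]
    [SFinite ν] :
    ∫⁻ x, ∫⁻ y, ‖x - y‖ₑ ^ (-γ) ∂ν ∂μ
      ≤ (∫⁻ x, ∫⁻ y, ‖x - y‖ₑ ^ (-γ) ∂μ ∂μ) ^ ((1 : ℝ) / 2) *
        (∫⁻ x, ∫⁻ y, ‖x - y‖ₑ ^ (-γ) ∂ν ∂ν) ^ ((1 : ℝ) / 2) := by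
  simp_rw [enorm_sub_rpow_neg_eq_lintegral_rieszMixture hγ]
  refine lintegral_lintegral_lintegral_mul_cauchy_schwarz
    (k := fun (x : E) (p : ℝ × E) ↦ gaussian (2 * p.1) (x - p.2)) ?_ μ ν _
  unfold Function.uncurry
  fun_prop

end InnerProduct

lemma lintegral_lintegral_withDensity {X Y : Type*} [MeasurableSpace X] [MeasurableSpace Y]
    {μ : Measure X} {ν : Measure Y} [SFinite ν] {K : X → Y → ℝ≥0∞}
    (hK : Measurable (Function.uncurry K)) {f : X → ℝ≥0∞} {g : Y → ℝ≥0∞}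
    (hf : AEMeasurable f μ) (hg : AEMeasurable g ν) :
    ∫⁻ x, ∫⁻ y, K x y ∂ν.withDensity g ∂μ.withDensity f
      = ∫⁻ x, ∫⁻ y, f x * g y * K x y ∂ν ∂μ := by
  have hKx (x : X) : AEMeasurable (K x) ν := hK.of_uncurry_left.aemeasurable
  have hpot : Measurable fun x ↦ ∫⁻ y, K x y ∂ν.withDensity g := hK.lintegral_prod_right'
  rw [lintegral_withDensity_eq_lintegral_mul₀ hf hpot.aemeasurable]
  refine lintegral_congr fun x ↦ ?_
  simp_rw [Pi.mul_apply, mul_assoc]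
  rw [lintegral_const_mul'' _ (hg.fun_mul (hKx x)),
    lintegral_withDensity_eq_lintegral_mul₀ hg (hKx x)]
  rfl

lemma lintegral_lintegral_mul_riesz_eq {E : Type*} [NormedAddCommGroup E] [MeasurableSpace E]
    [BorelSpace E] [SecondCountableTopology E] {μ : Measure E} [SFinite μ] [NullSingletonClass μ]
    (γ : ℝ) {f g : E → ℝ≥0∞} (hf : AEMeasurable f μ) (hg : AEMeasurable g μ) :
    ∫⁻ x, ∫⁻ y, f x * g y * ENNReal.ofReal (‖x - y‖ ^ (-γ)) ∂μ ∂μ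
      = ∫⁻ x, ∫⁻ y, ‖x - y‖ₑ ^ (-γ) ∂μ.withDensity g ∂μ.withDensity f := by
  have hK : Measurable (Function.uncurry fun x y : E ↦ ‖x - y‖ₑ ^ (-γ)) := by
    unfold Function.uncurry
    fun_prop
  rw [lintegral_lintegral_withDensity hK hf hg]
  -- If `γ > 0`, the kernels differ at `y = x`: the real power is `0`, the extended one `∞`.
  refine lintegral_congr fun x ↦ lintegral_congr_ae ?_
  filter_upwards [Measure.ae_ne μ x] with y hy
  rw [← ENNReal.ofReal_rpow_of_pos (norm_sub_pos_iff.2 hy.symm), ofReal_norm]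

theorem riesz_bilinear_cauchy_schwarz_general {E : Type*} [NormedAddCommGroup E]
    [InnerProductSpace ℝ E] [FiniteDimensional ℝ E] [MeasurableSpace E] [BorelSpace E]
    (μ : Measure E) [SFinite μ] [NullSingletonClass μ] {γ : ℝ} (hγ : 0 < γ) {f g : E → ℝ≥0∞}
    (hf : AEMeasurable f μ) (hg : AEMeasurable g μ) :
    ∫⁻ x, ∫⁻ y, f x * g y * ENNReal.ofReal (‖x - y‖ ^ (-γ)) ∂μ ∂μ
      ≤ (∫⁻ x, ∫⁻ y, f x * f y * ENNReal.ofReal (‖x - y‖ ^ (-γ)) ∂μ ∂μ) ^ ((1 : ℝ) / 2) *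
        (∫⁻ x, ∫⁻ y, g x * g y * ENNReal.ofReal (‖x - y‖ ^ (-γ)) ∂μ ∂μ) ^ ((1 : ℝ) / 2) := by
  rw [lintegral_lintegral_mul_riesz_eq γ hf hg, lintegral_lintegral_mul_riesz_eq γ hf hf,
    lintegral_lintegral_mul_riesz_eq γ hg hg]
  exact riesz_energy_cauchy_schwarz hγ (μ.withDensity f) (μ.withDensity g)

/-- Cauchy–Schwarz inequality for the bilinear Riesz form with kernel `|x-y|^{-γ}`,
`0 < γ < d`, on nonnegative measurable functions, as an inequality in `[0,∞]`. -/
theorem riesz_bilinear_cauchy_schwarz (d : ℕ) (hd : 1 ≤ d) (γ : ℝ) (hγ : 0 < γ)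
    (hγd : γ < d) (f g : EuclideanSpace ℝ (Fin d) → ℝ≥0∞)
    (hf : Measurable f) (hg : Measurable g) :
    (∫⁻ x, ∫⁻ y, f x * g y * ENNReal.ofReal (‖x - y‖ ^ (-γ)))
      ≤ (∫⁻ x, ∫⁻ y, f x * f y * ENNReal.ofReal (‖x - y‖ ^ (-γ))) ^ ((1 : ℝ) / 2) *
        (∫⁻ x, ∫⁻ y, g x * g y * ENNReal.ofReal (‖x - y‖ ^ (-γ))) ^ ((1 : ℝ) / 2) := by
  have : Nonempty (Fin d) := ⟨⟨0, hd⟩⟩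
  exact riesz_bilinear_cauchy_schwarz_general volume hγ hf.aemeasurable hg.aemeasurable
end

section
/- Let d ≥ 5. There exists a constant C > 0 such that for every smooth compactly supported function v : ℝ^d → ℝ, ‖v‖^d_{L^{2d/(d−2)}(ℝ^d)} ≤ C ‖∇v‖^{d−4}_{L²(ℝ^d)} ∬_{ℝ^d×ℝ^d} v(x)² v(y)² |x − y|^{-4} dx dy. In particular, for d = 5, ‖v‖^{10}_{L^{10/3}(ℝ⁵)} ≤ C ‖∇v‖²_{L²(ℝ⁵)} ( ∬_{ℝ⁵×ℝ⁵} v(x)² v(y)² |x − y|^{-4} dx dy )². -/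
open MeasureTheory ENNReal

/-!
Let `n` be the dimension and `M` the maximal function of `‖∇v‖`. Averaging the fundamental theorem
of calculus along segments from `x` bounds `|v x|` by the mean of `|v|` over `ball x R` plus
`R * M x`. The kernel `(|x - y| + |y - z|) ^ (-(n + γ))` is at least `(3 * R) ^ (-(n + γ))` for
`y, z ∈ ball x R`, so with
`W x = ∬ v(y)² v(z)² (|x - y| + |y - z|) ^ (-(n + γ)) dy dz` the fourth power of that mean is
`O(R ^ (γ - n) * W x)`. Choosing `R` so that `R * M x` is half of `|v x|` gives the pointwise bound
`|v x| ^ (n - γ + 4) ≤ C * W x * (M x) ^ (n - γ)`.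
By scaling, integrating the kernel in `x` leaves a constant times `|y - z| ^ (-γ)`, so `∫ W` is a
multiple of the Riesz energy of `v²`; Hölder's inequality and the `L²` maximal theorem conclude.
-/

open Metric Module Set

section LayerCake

variable {α : Type*} [MeasurableSpace α] {μ : Measure α}

lemma setLIntegral_Ioi_indicator_rpow_sub_one {q : ℝ} (hq : 0 < q) (a : ℝ≥0∞) :
    ∫⁻ s in Ioi (0 : ℝ), {s | ENNReal.ofReal s < a}.indicator
      (fun s => ENNReal.ofReal (s ^ (q - 1))) s = a ^ q / ENNReal.ofReal q := by
  have hmeas : MeasurableSet {s | ENNReal.ofReal s < a} :=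
    measurableSet_lt measurable_ofReal measurable_const
  rw [setLIntegral_indicator hmeas]
  rcases eq_or_ne a ∞ with rfl | ha
  · have hdiv : ∫⁻ s in Ioi (0 : ℝ), ENNReal.ofReal (s ^ (q - 1)) = ∞ := by
      by_contra hfin
      refine not_integrableOn_Ioi_rpow (q - 1)
        ((lintegral_ofReal_ne_top_iff_integrable (by fun_prop) ?_).1 hfin)
      exact (ae_restrict_mem measurableSet_Ioi).mono fun s hs => Real.rpow_nonneg hs.le _
    simp [hdiv, ENNReal.top_rpow_of_pos hq, ENNReal.top_div]
  · have hset : {s | ENNReal.ofReal s < a} ∩ Ioi 0 = Ioo 0 a.toReal := by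
      ext s
      simp +contextual [and_comm, ENNReal.ofReal_lt_iff_lt_toReal, ha, le_of_lt]
    have hint : IntervalIntegrable (fun s : ℝ => s ^ (q - 1)) volume 0 a.toReal :=
      intervalIntegral.intervalIntegrable_rpow' (by linarith)
    rw [hset, restrict_Ioo_eq_restrict_Ioc, ← ofReal_integral_eq_lintegral_ofReal
      ((intervalIntegrable_iff_integrableOn_Ioc_of_le toReal_nonneg).1 hint)
      ((ae_restrict_mem measurableSet_Ioc).mono fun s hs => Real.rpow_nonneg hs.1.le _),
      ← intervalIntegral.integral_of_le toReal_nonneg, integral_rpow (Or.inl (by linarith)),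
      sub_add_cancel, Real.zero_rpow hq.ne', sub_zero, ENNReal.ofReal_div_of_pos hq,
      ← ENNReal.ofReal_rpow_of_nonneg toReal_nonneg hq.le, ENNReal.ofReal_toReal ha]

lemma lintegral_mul_rpow_eq_lintegral_setLIntegral_lt_mul [SFinite μ] {g G : α → ℝ≥0∞}
    (hg : Measurable g) (hG : Measurable G) {q : ℝ} (hq : 0 < q) :
    ∫⁻ x, g x * G x ^ q ∂μ = ENNReal.ofReal q * ∫⁻ s in Ioi (0 : ℝ),
      (∫⁻ x in {x | ENNReal.ofReal s < G x}, g x ∂μ) * ENNReal.ofReal (s ^ (q - 1)) := by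
  have hq0 : ENNReal.ofReal q ≠ 0 := by simpa using hq
  let k : ℝ × α → ℝ≥0∞ :=
    {p | ENNReal.ofReal p.1 < G p.2}.indicator fun p => g p.2 * ENNReal.ofReal (p.1 ^ (q - 1))
  have hk : Measurable k := (by fun_prop : Measurable fun p : ℝ × α =>
    g p.2 * ENNReal.ofReal (p.1 ^ (q - 1))).indicator (measurableSet_lt (by fun_prop) (by fun_prop))
  have hslice (s : ℝ) : (∫⁻ x in {x | ENNReal.ofReal s < G x}, g x ∂μ) *
      ENNReal.ofReal (s ^ (q - 1)) = ∫⁻ x, k (s, x) ∂μ := by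
    rw [← lintegral_mul_const _ hg, ← lintegral_indicator (measurableSet_lt measurable_const hG)]
    rfl
  have hfibre (x : α) : ∫⁻ s in Ioi (0 : ℝ), k (s, x) = g x * G x ^ q / ENNReal.ofReal q := by
    rw [mul_div_assoc, ← setLIntegral_Ioi_indicator_rpow_sub_one hq, ← lintegral_const_mul _
      ((by fun_prop : Measurable fun s : ℝ => ENNReal.ofReal (s ^ (q - 1))).indicator
        (measurableSet_lt measurable_ofReal measurable_const))]
    refine lintegral_congr fun s => ?_
    simp [k, indicator_apply]
  simp_rw [hslice]
  rw [lintegral_lintegral_swap (f := fun s x => k (s, x)) hk.aemeasurable]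
  simp_rw [hfibre, div_eq_mul_inv]
  rw [lintegral_mul_const _ (by fun_prop), mul_comm, mul_assoc,
    ENNReal.inv_mul_cancel hq0 ofReal_ne_top, mul_one]

lemma lintegral_rpow_le_of_mul_measure_lt_le [SFinite μ] {F g G : α → ℝ≥0∞}
    (hF : Measurable F) (hg : Measurable g) (hG : Measurable G)
    (h : ∀ t, t * μ {x | t < F x} ≤ ∫⁻ x in {x | t < G x}, g x ∂μ) {p : ℝ} (hp : 1 < p) :
    ∫⁻ x, F x ^ p ∂μ ≤ ENNReal.ofReal (p / (p - 1)) * ∫⁻ x, g x * G x ^ (p - 1) ∂μ := by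
  have hp' : 0 < p - 1 := by linarith
  have hlayer := lintegral_mul_rpow_eq_lintegral_setLIntegral_lt_mul (μ := μ)
    (g := fun _ => 1) measurable_const hF (one_pos.trans hp)
  simp only [one_mul, setLIntegral_one] at hlayer
  rw [hlayer, lintegral_mul_rpow_eq_lintegral_setLIntegral_lt_mul hg hG hp', ← mul_assoc,
    ← ENNReal.ofReal_mul (by positivity), div_mul_cancel₀ _ hp'.ne']
  gcongr _ * ?_
  refine setLIntegral_mono' measurableSet_Ioi fun s (hs : 0 < s) => ?_
  calc μ {x | ENNReal.ofReal s < F x} * ENNReal.ofReal (s ^ (p - 1))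
      = ENNReal.ofReal s * μ {x | ENNReal.ofReal s < F x} * ENNReal.ofReal (s ^ (p - 1 - 1)) := by
        rw [mul_comm (ENNReal.ofReal s), mul_assoc, ← ENNReal.ofReal_mul hs.le,
          Real.rpow_sub_one hs.ne' (p - 1), mul_div_cancel₀ _ hs.ne']
    _ ≤ _ := by gcongr; exact h _

end LayerCake

section MaximalFunction

variable {X : Type*} [PseudoMetricSpace X]

lemma exists_finite_pairwiseDisjoint_ball_of_isCompact {K : Set X} (hK : IsCompact K) {z : X → X}
    {r : X → ℝ} (hmem : ∀ x ∈ K, x ∈ ball (z x) (r x)) :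
    ∃ u ⊆ K, u.Finite ∧ u.PairwiseDisjoint (fun x => ball (z x) (r x)) ∧
      K ⊆ ⋃ x ∈ u, ball (z x) (5 * r x) := by
  obtain ⟨s, hsK, hKs⟩ := hK.elim_nhds_subcover (fun x => ball (z x) (r x))
    fun x hx => isOpen_ball.mem_nhds (hmem x hx)
  obtain ⟨R, hR⟩ := (s.image r).bddAbove
  obtain ⟨u, hus, hdisj, hcover⟩ := Vitali.exists_disjoint_subfamily_covering_enlargement_ball
    (s : Set X) z r R (fun x hx => hR (Finset.mem_coe.2 (Finset.mem_image_of_mem r hx))) 5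
    (by norm_num)
  refine ⟨u, fun x hx => hsK x (hus hx), s.finite_toSet.subset hus, hdisj, fun y hy => ?_⟩
  obtain ⟨x, hx, hyx⟩ := mem_iUnion₂.1 (hKs hy)
  obtain ⟨w, hw, hxw⟩ := hcover x hx
  exact mem_biUnion hw (hxw hyx)

variable [MeasurableSpace X] {μ : Measure X}

/-- The uncentred Hardy–Littlewood maximal function: the supremum of the averages of `f` over the
open balls containing `x`. Open balls make it lower semicontinuous for arbitrary `f`. -/
noncomputable def maximalFunction (μ : Measure X) (f : X → ℝ≥0∞) (x : X) : ℝ≥0∞ :=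
  ⨆ (z : X) (r : ℝ) (_ : x ∈ ball z r), ⨍⁻ y in ball z r, f y ∂μ

lemma lt_maximalFunction_iff {f : X → ℝ≥0∞} {x : X} {t : ℝ≥0∞} :
    t < maximalFunction μ f x ↔ ∃ z r, x ∈ ball z r ∧ t < ⨍⁻ y in ball z r, f y ∂μ := by
  simp [maximalFunction, lt_iSup_iff]

lemma setLAverage_ball_le_maximalFunction (f : X → ℝ≥0∞) {x z : X} {r : ℝ} (hx : x ∈ ball z r) :
    ⨍⁻ y in ball z r, f y ∂μ ≤ maximalFunction μ f x :=
  le_iSup₂_of_le z r (le_iSup_of_le hx le_rfl)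

lemma lowerSemicontinuous_maximalFunction (f : X → ℝ≥0∞) :
    LowerSemicontinuous (maximalFunction μ f) := by
  refine lowerSemicontinuous_iff_isOpen_preimage.2 fun t => ?_
  refine isOpen_iff_mem_nhds.2 fun x hx => ?_
  obtain ⟨z, r, hxz, ht⟩ := lt_maximalFunction_iff.1 hx
  filter_upwards [isOpen_ball.mem_nhds hxz] with y hy
  exact lt_maximalFunction_iff.2 ⟨z, r, hy, ht⟩

lemma measurable_maximalFunction [OpensMeasurableSpace X] (f : X → ℝ≥0∞) :
    Measurable (maximalFunction μ f) :=
  (lowerSemicontinuous_maximalFunction f).measurable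

lemma maximalFunction_le_add_maximalFunction_indicator (f : X → ℝ≥0∞) (t : ℝ≥0∞) (x : X) :
    maximalFunction μ f x ≤ t + maximalFunction μ ({y | t < f y}.indicator f) x := by
  refine iSup_le fun z => iSup₂_le fun r hx => ?_
  have hf : f ≤ fun y => t + {y | t < f y}.indicator f y := fun y => by
    by_cases hy : t < f y <;> simp [hy, not_lt.1]
  calc ⨍⁻ y in ball z r, f y ∂μ
      ≤ ⨍⁻ y in ball z r, (t + {y | t < f y}.indicator f y) ∂μ := lintegral_mono hf
    _ = (⨍⁻ _ in ball z r, t ∂μ) + ⨍⁻ y in ball z r, {y | t < f y}.indicator f y ∂μ :=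
        lintegral_add_left measurable_const _
    _ ≤ t + maximalFunction μ ({y | t < f y}.indicator f) x := by
        gcongr
        · rw [setLAverage_eq, setLIntegral_const]
          exact ENNReal.div_le_of_le_mul le_rfl
        · exact setLAverage_ball_le_maximalFunction _ hx

/-- The covering argument runs on finitely many balls, which cover a compact subset of the open set
`{t < maximalFunction μ f}`, so that their radii are bounded. -/
lemma mul_measure_lt_maximalFunction_le [OpensMeasurableSpace X] [μ.Regular] {c : ℝ≥0∞}
    (hc : ∀ x r, μ (ball x (5 * r)) ≤ c * μ (ball x r)) (f : X → ℝ≥0∞) (t : ℝ≥0∞) :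
    t * μ {x | t < maximalFunction μ f x} ≤ c * ∫⁻ x, f x ∂μ := by
  have hopen : IsOpen {x | t < maximalFunction μ f x} :=
    (lowerSemicontinuous_maximalFunction f).isOpen_preimage t
  rw [hopen.measure_eq_iSup_isCompact]
  simp only [ENNReal.mul_iSup, iSup_le_iff]
  intro K hK hKc
  choose! z r hmem hlt using fun x (hx : x ∈ K) => lt_maximalFunction_iff.1 (hK hx)
  obtain ⟨u, huK, hufin, hdisj, hKu⟩ := exists_finite_pairwiseDisjoint_ball_of_isCompact hKc hmem
  have hball {x : X} (hx : x ∈ u) :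
      t * μ (ball (z x) (r x)) ≤ ∫⁻ y in ball (z x) (r x), f y ∂μ := by
    have h := hlt x (huK hx)
    rw [setLAverage_eq] at h
    exact ENNReal.mul_le_of_le_div h.le
  calc t * μ K
      ≤ t * ∑' x : u, μ (ball (z x) (5 * r x)) := by
        gcongr
        exact (measure_mono hKu).trans (measure_biUnion_le μ hufin.countable _)
    _ ≤ t * ∑' x : u, c * μ (ball (z x) (r x)) := by
        gcongr with x
        exact hc _ _
    _ = c * ∑' x : u, t * μ (ball (z x) (r x)) := by
        simp_rw [ENNReal.tsum_mul_left, mul_left_comm]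
    _ ≤ c * ∑' x : u, ∫⁻ y in ball (z x) (r x), f y ∂μ := by
        gcongr with x
        exact hball x.2
    _ = c * ∫⁻ y in ⋃ x ∈ u, ball (z x) (r x), f y ∂μ := by
        rw [lintegral_biUnion hufin.countable (fun _ _ => measurableSet_ball) hdisj]
    _ ≤ c * ∫⁻ x, f x ∂μ := by
        gcongr _ * ?_
        exact setLIntegral_le_lintegral _ _

variable [OpensMeasurableSpace X] [μ.Regular] {c : ℝ≥0∞} {f : X → ℝ≥0∞}

lemma mul_measure_lt_maximalFunction_le_setLIntegral
    (hc : ∀ x r, μ (ball x (5 * r)) ≤ c * μ (ball x r)) (hf : Measurable f) (t : ℝ≥0∞) :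
    t * μ {x | t < maximalFunction μ f x} ≤ ∫⁻ x in {x | t < 2 * f x}, 2 * c * f x ∂μ := by
  have hset : {x | t < 2 * f x} = {x | t / 2 < f x} := by
    ext x
    rw [mem_ofPred_eq, mem_ofPred_eq, mul_comm,
      ENNReal.div_lt_iff (Or.inl two_ne_zero) (Or.inl ofNat_ne_top)]
  have hsub : {x | t < maximalFunction μ f x} ⊆
      {x | t / 2 < maximalFunction μ ({y | t / 2 < f y}.indicator f) x} := fun x hx => by
    refine lt_of_add_lt_add_left (a := t / 2) ?_
    rw [ENNReal.add_halves]
    exact hx.trans_le (maximalFunction_le_add_maximalFunction_indicator f (t / 2) x)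
  have hmeas : MeasurableSet {x | t / 2 < f x} := measurableSet_lt measurable_const hf
  calc t * μ {x | t < maximalFunction μ f x}
      ≤ 2 * (t / 2 * μ {x | t / 2 < maximalFunction μ ({y | t / 2 < f y}.indicator f) x}) := by
        rw [← mul_assoc, ENNReal.mul_div_cancel two_ne_zero ofNat_ne_top]
        gcongr
    _ ≤ 2 * (c * ∫⁻ x, {y | t / 2 < f y}.indicator f x ∂μ) := by
        gcongr 2 * ?_
        exact mul_measure_lt_maximalFunction_le hc _ _
    _ = ∫⁻ x in {x | t < 2 * f x}, 2 * c * f x ∂μ := by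
        rw [lintegral_indicator hmeas, hset, lintegral_const_mul _ hf, mul_assoc]

lemma lintegral_maximalFunction_rpow_le [SFinite μ]
    (hc : ∀ x r, μ (ball x (5 * r)) ≤ c * μ (ball x r)) (hf : Measurable f) {p : ℝ} (hp : 1 < p) :
    ∫⁻ x, maximalFunction μ f x ^ p ∂μ ≤
      ENNReal.ofReal (p / (p - 1)) * 2 ^ p * c * ∫⁻ x, f x ^ p ∂μ := by
  have hpow (x : X) : 2 * c * f x * (2 * f x) ^ (p - 1) = 2 ^ p * c * f x ^ p := by
    have hp' : 0 ≤ p - 1 := by linarith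
    have h (a : ℝ≥0∞) : a ^ p = a * a ^ (p - 1) := by
      nth_rw 2 [← ENNReal.rpow_one a]
      rw [← ENNReal.rpow_add_of_nonneg _ _ zero_le_one hp', add_sub_cancel]
    rw [ENNReal.mul_rpow_of_nonneg _ _ hp', h 2, h (f x)]
    ring
  refine (lintegral_rpow_le_of_mul_measure_lt_le (measurable_maximalFunction f) (by fun_prop)
    (by fun_prop) (mul_measure_lt_maximalFunction_le_setLIntegral hc hf) hp).trans_eq ?_
  simp_rw [hpow]
  rw [lintegral_const_mul _ (by fun_prop)]
  simp only [mul_assoc]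

end MaximalFunction

section Average

variable {α : Type*} [MeasurableSpace α] {μ : Measure α}

lemma laverage_rpow_le {f : α → ℝ≥0∞} (hf : AEMeasurable f μ) {p : ℝ} (hp : 1 ≤ p) :
    (⨍⁻ x, f x ∂μ) ^ p ≤ ⨍⁻ x, f x ^ p ∂μ := by
  have hp0 : 0 < p := one_pos.trans_le hp
  have hmass : ((μ univ)⁻¹ • μ) univ ≤ 1 := by
    simp [ENNReal.inv_mul_le_one]
  have hholder := ENNReal.lintegral_mul_norm_pow_le (μ := (μ univ)⁻¹ • μ) (f := fun x => f x ^ p)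
    (g := fun _ => 1) ((hf.pow_const p).smul_measure _) aemeasurable_const
    (inv_nonneg.2 hp0.le) (sub_nonneg.2 (inv_le_one_of_one_le₀ hp)) (add_sub_cancel _ _)
  simp only [ENNReal.rpow_rpow_inv hp0.ne', ENNReal.one_rpow, mul_one, lintegral_one] at hholder
  refine (ENNReal.le_rpow_inv_iff hp0).1 (hholder.trans (mul_le_of_le_one_right' ?_))
  exact ENNReal.rpow_le_one hmass (sub_nonneg.2 (inv_le_one_of_one_le₀ hp))

lemma eqOn_zero_of_setLIntegral_eq_zero {X : Type*} [TopologicalSpace X] [MeasurableSpace X]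
    [OpensMeasurableSpace X] {μ : Measure X} [μ.IsOpenPosMeasure] {f : X → ℝ≥0∞}
    (hf : Continuous f) {U : Set X} (hU : IsOpen U) (h : ∫⁻ x in U, f x ∂μ = 0) : EqOn f 0 U :=
  Measure.eqOn_open_of_ae_eq ((lintegral_eq_zero_iff hf.measurable).1 h) hU hf.continuousOn
    continuousOn_const

end Average

section Dilation

variable {E : Type*} [NormedAddCommGroup E] [NormedSpace ℝ E] [FiniteDimensional ℝ E]
  [MeasurableSpace E] [BorelSpace E] (μ : Measure E) [μ.IsAddHaarMeasure]

lemma ofReal_pow_mul_lintegral_comp_smul (f : E → ℝ≥0∞) {t : ℝ} (ht : 0 < t) :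
    ENNReal.ofReal (t ^ finrank ℝ E) * ∫⁻ y, f (t • y) ∂μ = ∫⁻ y, f y ∂μ := by
  have htn : 0 < t ^ finrank ℝ E := by positivity
  rw [← (measurableEmbedding_const_smul₀ (α := E) ht.ne').lintegral_map,
    Measure.map_addHaar_smul μ ht.ne', lintegral_smul_measure, abs_of_pos (by positivity),
    smul_eq_mul, ← mul_assoc, ← ENNReal.ofReal_mul htn.le, mul_inv_cancel₀ htn.ne',
    ENNReal.ofReal_one, one_mul]

lemma setLAverage_ball_comp_add_smul (f : E → ℝ≥0∞) (x : E) (R : ℝ) {t : ℝ} (ht : 0 < t) :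
    ⨍⁻ y in ball 0 R, f (x + t • y) ∂μ = ⨍⁻ y in ball x (t * R), f y ∂μ := by
  have hmem (y : E) : x + t • y ∈ ball x (t * R) ↔ y ∈ ball 0 R := by
    simp [norm_smul, abs_of_pos ht, ht]
  have hint : ENNReal.ofReal (t ^ finrank ℝ E) * ∫⁻ y in ball 0 R, f (x + t • y) ∂μ =
      ∫⁻ y in ball x (t * R), f y ∂μ := by
    rw [← lintegral_indicator measurableSet_ball, ← lintegral_indicator measurableSet_ball,
      ← lintegral_add_left_eq_self ((ball x (t * R)).indicator f) x,
      ← ofReal_pow_mul_lintegral_comp_smul μ (fun y => (ball x (t * R)).indicator f (x + y)) ht]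
    refine congrArg _ (lintegral_congr fun y => ?_)
    classical simp only [indicator_apply, hmem]
  rw [setLAverage_eq, setLAverage_eq, ← hint, Measure.addHaar_ball_mul_of_pos μ x ht,
    ENNReal.mul_div_mul_left _ _ (by simpa using pow_pos ht _) ofReal_ne_top]

end Dilation

section Oscillation

variable {E F : Type*} [NormedAddCommGroup E] [NormedSpace ℝ E] [NormedAddCommGroup F]
  [NormedSpace ℝ F] {v : E → F}

lemma enorm_le_enorm_add_add_mul_lintegral_fderiv (hv : ContDiff ℝ 1 v) (x y : E) :
    ‖v x‖ₑ ≤ ‖v (x + y)‖ₑ + ‖y‖ₑ * ∫⁻ t in Icc (0 : ℝ) 1, ‖fderiv ℝ v (x + t • y)‖ₑ := by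
  have hderiv (t : ℝ) : deriv (fun t : ℝ => v (x + t • y)) t = fderiv ℝ v (x + t • y) y := by
    have hline : HasDerivAt (fun t : ℝ => x + t • y) y t := by
      simpa using ((hasDerivAt_id t).smul_const y).const_add x
    exact ((hv.differentiable one_ne_zero _).hasFDerivAt.comp_hasDerivAt t hline).deriv
  have hFTC := enorm_sub_le_lintegral_deriv_of_contDiffOn_Icc (a := 0) (b := 1)
    (by fun_prop : ContDiff ℝ 1 fun t : ℝ => v (x + t • y)).contDiffOn zero_le_one
  simp only [hderiv, one_smul, zero_smul, add_zero] at hFTC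
  calc ‖v x‖ₑ = ‖v (x + y) - (v (x + y) - v x)‖ₑ := by congr 1; abel
    _ ≤ ‖v (x + y)‖ₑ + ‖v (x + y) - v x‖ₑ := enorm_sub_le
    _ ≤ ‖v (x + y)‖ₑ + ∫⁻ t in Icc (0 : ℝ) 1, ‖y‖ₑ * ‖fderiv ℝ v (x + t • y)‖ₑ := by
        gcongr _ + ?_
        refine hFTC.trans (lintegral_mono fun t => ?_)
        rw [mul_comm]
        exact ContinuousLinearMap.le_opENorm _ _
    _ = _ := by rw [lintegral_const_mul' _ _ enorm_ne_top]

variable [FiniteDimensional ℝ E] [MeasurableSpace E] [BorelSpace E] (μ : Measure E)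
  [μ.IsAddHaarMeasure]

lemma setLAverage_ball_lintegral_le_maximalFunction {f : E → ℝ≥0∞} (hf : Measurable f) (x : E)
    {R : ℝ} (hR : 0 < R) :
    ⨍⁻ y in ball 0 R, (∫⁻ t in Icc (0 : ℝ) 1, f (x + t • y)) ∂μ ≤ maximalFunction μ f x := by
  calc ⨍⁻ y in ball 0 R, (∫⁻ t in Icc (0 : ℝ) 1, f (x + t • y)) ∂μ
      = ∫⁻ t in Icc (0 : ℝ) 1, ⨍⁻ y in ball 0 R, f (x + t • y) ∂μ := by
        refine lintegral_lintegral_swap (Measurable.aemeasurable ?_)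
        exact hf.comp (by fun_prop : Measurable fun p : E × ℝ => x + p.2 • p.1)
    _ = ∫⁻ t in Ioc (0 : ℝ) 1, ⨍⁻ y in ball x (t * R), f y ∂μ := by
        rw [← restrict_Ioc_eq_restrict_Icc]
        exact setLIntegral_congr_fun measurableSet_Ioc fun t ht =>
          setLAverage_ball_comp_add_smul μ f x R ht.1
    _ ≤ ∫⁻ _ in Ioc (0 : ℝ) 1, maximalFunction μ f x :=
        setLIntegral_mono' measurableSet_Ioc fun t ht =>
          setLAverage_ball_le_maximalFunction f (mem_ball_self (mul_pos ht.1 hR))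
    _ = maximalFunction μ f x := by simp

lemma enorm_le_setLAverage_add_mul_maximalFunction (hv : ContDiff ℝ 1 v) (x : E) {R : ℝ}
    (hR : 0 < R) :
    ‖v x‖ₑ ≤ ⨍⁻ y in ball x R, ‖v y‖ₑ ∂μ +
      ENNReal.ofReal R * maximalFunction μ (fun y => ‖fderiv ℝ v y‖ₑ) x := by
  have hcont : Continuous (fderiv ℝ v) := hv.continuous_fderiv one_ne_zero
  have hvm : Measurable fun y => ‖v (x + y)‖ₑ :=
    (hv.continuous.comp (continuous_const_add x)).enorm.measurable
  have htranslate : ⨍⁻ y in ball 0 R, ‖v (x + y)‖ₑ ∂μ = ⨍⁻ y in ball x R, ‖v y‖ₑ ∂μ := by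
    simpa using setLAverage_ball_comp_add_smul μ (fun y => ‖v y‖ₑ) x R one_pos
  calc ‖v x‖ₑ
      = ⨍⁻ _ in ball 0 R, ‖v x‖ₑ ∂μ :=
        (setLAverage_const (measure_ball_pos μ 0 hR).ne' measure_ball_lt_top.ne _).symm
    _ ≤ ⨍⁻ y in ball 0 R, (‖v (x + y)‖ₑ +
          ENNReal.ofReal R * ∫⁻ t in Icc (0 : ℝ) 1, ‖fderiv ℝ v (x + t • y)‖ₑ) ∂μ := by
        rw [setLAverage_eq, setLAverage_eq]
        gcongr ?_ / _
        refine setLIntegral_mono' measurableSet_ball fun y hy => ?_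
        refine (enorm_le_enorm_add_add_mul_lintegral_fderiv hv x y).trans ?_
        gcongr
        rw [← ofReal_norm]
        exact ENNReal.ofReal_le_ofReal (mem_ball_zero_iff.1 hy).le
    _ = ⨍⁻ y in ball x R, ‖v y‖ₑ ∂μ + ENNReal.ofReal R *
          ⨍⁻ y in ball 0 R, (∫⁻ t in Icc (0 : ℝ) 1, ‖fderiv ℝ v (x + t • y)‖ₑ) ∂μ := by
        rw [← htranslate]
        simp only [laverage]
        rw [lintegral_add_left hvm, lintegral_const_mul' _ _ ofReal_ne_top]
    _ ≤ _ := by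
        gcongr
        exact setLAverage_ball_lintegral_le_maximalFunction μ hcont.enorm.measurable x hR

end Oscillation

section Energy

variable {E : Type*} [NormedAddCommGroup E] [MeasurableSpace E]

/-- The Riesz energy `∬ f x f y ‖x - y‖ ^ (-γ) dx dy`, the Hartree energy of `u` being the case
`γ = 4`, `f = u²`. The kernel takes the value `∞` on the diagonal when `γ > 0`. -/
noncomputable def rieszEnergy (μ : Measure E) (γ : ℝ) (f : E → ℝ≥0∞) : ℝ≥0∞ :=
  ∫⁻ x, ∫⁻ y, f x * f y * ‖x - y‖ₑ ^ (-γ) ∂μ ∂μ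

/-- A density localising the Riesz energy: by scaling, its integral in `x` is controlled by the
Riesz energy of exponent `β - finrank ℝ E`, while its value at `x` controls the mass of `f` in every
ball centred at `x`. -/
noncomputable def localEnergy (μ : Measure E) (β : ℝ) (f : E → ℝ≥0∞) (x : E) : ℝ≥0∞ :=
  ∫⁻ y, ∫⁻ z, f y * f z * (‖x - y‖ₑ + ‖y - z‖ₑ) ^ (-β) ∂μ ∂μ

lemma rieszEnergy_eq_lintegral_ofReal (μ : Measure E) [NullSingletonClass μ] (γ : ℝ)
    (f : E → ℝ≥0∞) :
    rieszEnergy μ γ f =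
      ∫⁻ x, ∫⁻ y, f x * f y * ENNReal.ofReal (‖x - y‖ ^ (-γ)) ∂μ ∂μ := by
  refine lintegral_congr fun x => lintegral_congr_ae ?_
  filter_upwards [(countable_singleton x).ae_notMem μ] with y hy
  rw [← ENNReal.ofReal_rpow_of_pos (norm_sub_pos_iff.2 (Ne.symm hy)), ofReal_norm]

variable {f : E → ℝ≥0∞}

lemma measurable_localEnergy [BorelSpace E] [SecondCountableTopology E] (μ : Measure E)
    [SFinite μ] (hf : Measurable f) (β : ℝ) :
    Measurable (localEnergy μ β f) := by
  refine Measurable.lintegral_prod_right' (f := fun p : E × E =>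
    ∫⁻ z, f p.2 * f z * (‖p.1 - p.2‖ₑ + ‖p.2 - z‖ₑ) ^ (-β) ∂μ) ?_
  refine Measurable.lintegral_prod_right' (f := fun p : (E × E) × E =>
    f p.1.2 * f p.2 * (‖p.1.1 - p.1.2‖ₑ + ‖p.1.2 - p.2‖ₑ) ^ (-β)) ?_
  fun_prop

lemma sq_setLIntegral_ball_le_mul_localEnergy [OpensMeasurableSpace E] (μ : Measure E)
    (hf : Measurable f) {β : ℝ} (hβ : 0 ≤ β) (x : E) {R : ℝ} (hR : 0 < R) :
    (∫⁻ y in ball x R, f y ∂μ) ^ 2 ≤ ENNReal.ofReal (3 * R) ^ β * localEnergy μ β f x := by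
  have hR0 : ENNReal.ofReal (3 * R) ≠ 0 := by simpa using hR
  have hkernel {y z : E} (hy : y ∈ ball x R) (hz : z ∈ ball x R) :
      1 ≤ ENNReal.ofReal (3 * R) ^ β * (‖x - y‖ₑ + ‖y - z‖ₑ) ^ (-β) := by
    have hdist : ‖x - y‖ + ‖y - z‖ ≤ 3 * R := by
      rw [← dist_eq_norm, ← dist_eq_norm]
      linarith [mem_ball'.1 hy, mem_ball.1 hz, dist_triangle y x z, dist_comm x z, dist_comm x y]
    calc 1 = ENNReal.ofReal (3 * R) ^ β * ENNReal.ofReal (3 * R) ^ (-β) := by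
          rw [← ENNReal.rpow_add _ _ hR0 ofReal_ne_top, add_neg_cancel, ENNReal.rpow_zero]
      _ ≤ _ := by
          rw [ENNReal.rpow_neg, ENNReal.rpow_neg]
          gcongr
          rw [← ofReal_norm, ← ofReal_norm,
            ← ENNReal.ofReal_add (norm_nonneg _) (norm_nonneg _)]
          exact ENNReal.ofReal_le_ofReal hdist
  calc (∫⁻ y in ball x R, f y ∂μ) ^ 2
      = ∫⁻ y in ball x R, ∫⁻ z in ball x R, f y * f z ∂μ ∂μ := by
        rw [sq, lintegral_lintegral_mul hf.aemeasurable hf.aemeasurable]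
    _ ≤ ∫⁻ y in ball x R, ∫⁻ z in ball x R, ENNReal.ofReal (3 * R) ^ β *
          (f y * f z * (‖x - y‖ₑ + ‖y - z‖ₑ) ^ (-β)) ∂μ ∂μ := by
        refine setLIntegral_mono' measurableSet_ball fun y hy =>
          setLIntegral_mono' measurableSet_ball fun z hz => ?_
        rw [mul_left_comm]
        exact le_mul_of_one_le_right' (hkernel hy hz)
    _ ≤ ∫⁻ y, ∫⁻ z, ENNReal.ofReal (3 * R) ^ β *
          (f y * f z * (‖x - y‖ₑ + ‖y - z‖ₑ) ^ (-β)) ∂μ ∂μ :=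
        (setLIntegral_le_lintegral _ _).trans
          (lintegral_mono fun y => setLIntegral_le_lintegral _ _)
    _ = ENNReal.ofReal (3 * R) ^ β * localEnergy μ β f x := by
        simp_rw [localEnergy,
          lintegral_const_mul' _ _ (ENNReal.rpow_ne_top_of_nonneg hβ ofReal_ne_top)]

lemma eq_zero_of_localEnergy_eq_zero [OpensMeasurableSpace E] (μ : Measure E)
    [μ.IsOpenPosMeasure] (hf : Continuous f) {β : ℝ} (hβ : 0 ≤ β) {x : E}
    (h : localEnergy μ β f x = 0) : f x = 0 := by
  refine eqOn_zero_of_setLIntegral_eq_zero (μ := μ) hf isOpen_ball ?_ (mem_ball_self one_pos)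
  simpa [h] using sq_setLIntegral_ball_le_mul_localEnergy μ hf.measurable hβ x one_pos

lemma lintegral_enorm_add_one_rpow_neg_ne_zero [OpensMeasurableSpace E] (μ : Measure E) [NeZero μ]
    (β : ℝ) :
    ∫⁻ w, (‖w‖ₑ + 1) ^ (-β) ∂μ ≠ 0 := by
  rw [Ne, lintegral_eq_zero_iff (by fun_prop)]
  intro h
  obtain ⟨w, hw⟩ := h.exists
  simp [ENNReal.rpow_eq_zero_iff] at hw

variable [NormedSpace ℝ E] [FiniteDimensional ℝ E] [BorelSpace E] (μ : Measure E)
  [μ.IsAddHaarMeasure] {β : ℝ}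

lemma lintegral_enorm_add_one_rpow_neg_ne_top (hβ : finrank ℝ E < β) :
    ∫⁻ w, (‖w‖ₑ + 1) ^ (-β) ∂μ ≠ ∞ := by
  refine ne_of_eq_of_ne (lintegral_congr fun w => ?_)
    (finite_integral_one_add_norm (μ := μ) hβ).ne
  rw [← ENNReal.ofReal_rpow_of_pos (by positivity), ENNReal.ofReal_add zero_le_one (norm_nonneg w),
    ofReal_norm, ENNReal.ofReal_one, add_comm]

lemma lintegral_enorm_add_rpow_neg_le (hβ : finrank ℝ E < β) {a : ℝ≥0∞} (ha : a ≠ ∞) :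
    ∫⁻ w, (‖w‖ₑ + a) ^ (-β) ∂μ ≤
      (∫⁻ w, (‖w‖ₑ + 1) ^ (-β) ∂μ) * a ^ (-(β - finrank ℝ E)) := by
  rcases eq_or_ne a 0 with rfl | ha0
  · rw [ENNReal.zero_rpow_of_neg (by linarith),
      ENNReal.mul_top (lintegral_enorm_add_one_rpow_neg_ne_zero μ β)]
    exact le_top
  have hscale (w : E) : (‖a.toReal • w‖ₑ + a) ^ (-β) = a ^ (-β) * (‖w‖ₑ + 1) ^ (-β) := by
    rw [enorm_smul, Real.enorm_of_nonneg toReal_nonneg, ENNReal.ofReal_toReal ha, ← mul_add_one,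
      ENNReal.mul_rpow_of_ne_top ha (by simp)]
  rw [← ofReal_pow_mul_lintegral_comp_smul μ _ (ENNReal.toReal_pos ha0 ha)]
  simp_rw [hscale]
  rw [lintegral_const_mul _ (by fun_prop), ENNReal.ofReal_pow toReal_nonneg,
    ENNReal.ofReal_toReal ha, neg_sub, sub_eq_add_neg, ENNReal.rpow_add _ _ ha0 ha,
    ENNReal.rpow_natCast, ← mul_assoc, mul_comm]

lemma lintegral_localEnergy_le (hf : Measurable f) (hβ : finrank ℝ E < β) :
    ∫⁻ x, localEnergy μ β f x ∂μ ≤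
      (∫⁻ w, (‖w‖ₑ + 1) ^ (-β) ∂μ) * rieszEnergy μ (β - finrank ℝ E) f := by
  have hA := lintegral_enorm_add_one_rpow_neg_ne_top μ hβ
  set A := ∫⁻ w, (‖w‖ₑ + 1) ^ (-β) ∂μ
  have hmeas : Measurable fun p : (E × E) × E =>
      f p.1.2 * f p.2 * (‖p.1.1 - p.1.2‖ₑ + ‖p.1.2 - p.2‖ₑ) ^ (-β) := by
    fun_prop
  simp only [localEnergy, rieszEnergy]
  rw [lintegral_lintegral_swap hmeas.lintegral_prod_right'.aemeasurable,
    ← lintegral_const_mul' _ _ hA]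
  refine lintegral_mono fun y => ?_
  have hslice : Measurable fun p : E × E => ((p.1, y), p.2) := by fun_prop
  rw [lintegral_lintegral_swap (f := fun x z => f y * f z * (‖x - y‖ₑ + ‖y - z‖ₑ) ^ (-β))
    (hmeas.comp hslice).aemeasurable, ← lintegral_const_mul' _ _ hA]
  refine lintegral_mono fun z => ?_
  rw [lintegral_const_mul _ (by fun_prop),
    lintegral_sub_right_eq_self (fun x => (‖x‖ₑ + ‖y - z‖ₑ) ^ (-β)) y, mul_left_comm]
  gcongr
  exact lintegral_enorm_add_rpow_neg_le μ hβ enorm_ne_top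

lemma mul_sq_setLAverage_ball_le_mul_localEnergy (hf : Measurable f) (hβ : 0 ≤ β) (x : E) {R : ℝ}
    (hR : 0 < R) :
    μ (ball 0 1) ^ 2 * ENNReal.ofReal R ^ (2 * finrank ℝ E - β) *
      (⨍⁻ y in ball x R, f y ∂μ) ^ 2 ≤ 3 ^ β * localEnergy μ β f x := by
  have hR0 : ENNReal.ofReal R ≠ 0 := by simpa using hR
  have hball : μ (ball x R) = ENNReal.ofReal R ^ (finrank ℝ E : ℝ) * μ (ball 0 1) := by
    simpa [ENNReal.ofReal_pow hR.le] using Measure.addHaar_ball_mul_of_pos μ x hR 1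
  calc μ (ball 0 1) ^ 2 * ENNReal.ofReal R ^ (2 * finrank ℝ E - β) *
        (⨍⁻ y in ball x R, f y ∂μ) ^ 2
      = ENNReal.ofReal R ^ (-β) * (μ (ball x R) * ⨍⁻ y in ball x R, f y ∂μ) ^ 2 := by
        rw [hball, sub_eq_add_neg, ENNReal.rpow_add _ _ hR0 ofReal_ne_top, two_mul,
          ENNReal.rpow_add _ _ hR0 ofReal_ne_top]
        ring
    _ = ENNReal.ofReal R ^ (-β) * (∫⁻ y in ball x R, f y ∂μ) ^ 2 := by
        rw [measure_mul_setLAverage _ measure_ball_lt_top.ne]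
    _ ≤ ENNReal.ofReal R ^ (-β) * (ENNReal.ofReal (3 * R) ^ β * localEnergy μ β f x) := by
        gcongr
        exact sq_setLIntegral_ball_le_mul_localEnergy μ hf hβ x hR
    _ = 3 ^ β * localEnergy μ β f x := by
        rw [ENNReal.ofReal_mul zero_le_three, ENNReal.mul_rpow_of_nonneg _ _ hβ, ← mul_assoc,
          mul_left_comm, ← ENNReal.rpow_add _ _ hR0 ofReal_ne_top]
        simp

end Energy

section Pointwise

lemma mul_rpow_add_le_of_forall_le_add_mul {b V G K : ℝ≥0∞} {s m : ℝ} {a : ℝ → ℝ≥0∞}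
    (hs : 0 ≤ s) (hm : 0 < m) (hV : V ≠ ∞) (hG₀ : G ≠ 0) (hG : G ≠ ∞)
    (hle : ∀ R > 0, V ≤ a R + ENNReal.ofReal R * G)
    (hK : ∀ R > 0, b * ENNReal.ofReal R ^ s * a R ^ m ≤ K) :
    b * V ^ (s + m) ≤ 2 ^ (s + m) * (K * G ^ s) := by
  rcases eq_or_ne V 0 with rfl | hV₀
  · simp [ENNReal.zero_rpow_of_pos (add_pos_of_nonneg_of_pos hs hm)]
  have h2G₀ : 2 * G ≠ 0 := mul_ne_zero two_ne_zero hG₀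
  have h2G : 2 * G ≠ ∞ := ENNReal.mul_ne_top ofNat_ne_top hG
  have hr : V / (2 * G) ≠ ∞ := ENNReal.div_ne_top hV h2G₀
  -- At this radius the second term of `hle` is half of `V`.
  set R := (V / (2 * G)).toReal
  have hR : 0 < R := ENNReal.toReal_pos (ENNReal.div_ne_zero.2 ⟨hV₀, h2G⟩) hr
  have hRG : ENNReal.ofReal R * (2 * G) = V := by
    rw [ENNReal.ofReal_toReal hr, ENNReal.div_mul_cancel h2G₀ h2G]
  have hVa : V ≤ 2 * a R := by
    have hdouble : V + V ≤ 2 * a R + V := by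
      calc V + V = 2 * V := (two_mul V).symm
        _ ≤ 2 * (a R + ENNReal.ofReal R * G) := by gcongr; exact hle R hR
        _ = 2 * a R + V := by rw [← hRG]; ring
    exact (ENNReal.add_le_add_iff_right hV).1 hdouble
  calc b * V ^ (s + m)
      = b * ((ENNReal.ofReal R * (2 * G)) ^ s * V ^ m) := by
        rw [hRG, ENNReal.rpow_add _ _ hV₀ hV]
    _ ≤ b * ((ENNReal.ofReal R * (2 * G)) ^ s * (2 * a R) ^ m) := by gcongr
    _ = 2 ^ (s + m) * (b * ENNReal.ofReal R ^ s * a R ^ m * G ^ s) := by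
        rw [ENNReal.mul_rpow_of_nonneg _ _ hs, ENNReal.mul_rpow_of_nonneg _ _ hs,
          ENNReal.mul_rpow_of_nonneg _ _ hm.le, ENNReal.rpow_add _ _ two_ne_zero ofNat_ne_top]
        ring
    _ ≤ 2 ^ (s + m) * (K * G ^ s) := by
        gcongr
        exact hK R hR

variable {E F : Type*} [NormedAddCommGroup E] [NormedSpace ℝ E] [FiniteDimensional ℝ E]
  [MeasurableSpace E] [BorelSpace E] [NormedAddCommGroup F] [NormedSpace ℝ F]
  (μ : Measure E) [μ.IsAddHaarMeasure] {v : E → F} {x : E} {β : ℝ}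

lemma mul_setLAverage_ball_rpow_four_le_mul_localEnergy {f : E → ℝ≥0∞} (hf : Measurable f)
    (hβ : 0 ≤ β) (x : E) {R : ℝ} (hR : 0 < R) :
    μ (ball 0 1) ^ 2 * ENNReal.ofReal R ^ (2 * finrank ℝ E - β) *
      (⨍⁻ y in ball x R, f y ∂μ) ^ (4 : ℝ) ≤
      3 ^ β * localEnergy μ β (fun y => f y ^ 2) x := by
  have hjensen := laverage_rpow_le (μ := μ.restrict (ball x R)) hf.aemeasurable one_le_two
  simp only [ENNReal.rpow_ofNat] at hjensen ⊢
  calc _ = μ (ball 0 1) ^ 2 * ENNReal.ofReal R ^ (2 * finrank ℝ E - β) *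
        ((⨍⁻ y in ball x R, f y ∂μ) ^ 2) ^ 2 := by ring
    _ ≤ μ (ball 0 1) ^ 2 * ENNReal.ofReal R ^ (2 * finrank ℝ E - β) *
        (⨍⁻ y in ball x R, f y ^ 2 ∂μ) ^ 2 := by gcongr
    _ ≤ _ := mul_sq_setLAverage_ball_le_mul_localEnergy μ (by fun_prop) hβ x hR

lemma eq_zero_of_maximalFunction_fderiv_eq_zero [Nontrivial E] (hv : ContDiff ℝ 1 v)
    (hfin : ∀ ε ≠ 0, μ {y | ε ≤ ‖v y‖ₑ} ≠ ∞)
    (h : maximalFunction μ (fun y => ‖fderiv ℝ v y‖ₑ) x = 0) : v x = 0 := by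
  have hfderiv (y : E) : fderiv ℝ v y = 0 := by
    have hR : 0 < dist y x + 1 := by positivity
    have haverage : ⨍⁻ z in ball x (dist y x + 1), ‖fderiv ℝ v z‖ₑ ∂μ = 0 :=
      le_zero_iff.1 ((setLAverage_ball_le_maximalFunction _ (mem_ball_self hR)).trans_eq h)
    have hint : ∫⁻ z in ball x (dist y x + 1), ‖fderiv ℝ v z‖ₑ ∂μ = 0 := by
      rw [← measure_mul_setLAverage _ measure_ball_lt_top.ne, haverage, mul_zero]
    have henorm : ‖fderiv ℝ v y‖ₑ = 0 := eqOn_zero_of_setLIntegral_eq_zero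
      (hv.continuous_fderiv one_ne_zero).enorm isOpen_ball hint (mem_ball.2 (lt_add_one _))
    rwa [← ofReal_norm, ENNReal.ofReal_eq_zero, norm_le_zero_iff] at henorm
  have hconst (y : E) : v y = v x :=
    is_const_of_fderiv_eq_zero (hv.differentiable one_ne_zero) hfderiv y x
  by_contra hx
  refine hfin ‖v x‖ₑ (by simpa using hx) ?_
  simp [hconst, measure_univ_of_isAddLeftInvariant]

lemma mul_enorm_rpow_le_localEnergy_mul_maximalFunction_rpow (hβ : 0 ≤ β)
    (hβ' : β < 2 * finrank ℝ E) (hv : ContDiff ℝ 1 v) (hfin : ∀ ε ≠ 0, μ {y | ε ≤ ‖v y‖ₑ} ≠ ∞)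
    (x : E) :
    μ (ball 0 1) ^ 2 * ‖v x‖ₑ ^ (2 * finrank ℝ E - β + 4) ≤
      2 ^ (2 * finrank ℝ E - β + 4) * (3 ^ β * localEnergy μ β (fun y => ‖v y‖ₑ ^ 2) x *
        maximalFunction μ (fun y => ‖fderiv ℝ v y‖ₑ) x ^ (2 * finrank ℝ E - β)) := by
  have hs : 0 < 2 * finrank ℝ E - β := sub_pos.2 hβ'
  have : Nontrivial E := nontrivial_of_finrank_pos (R := ℝ) (by exact_mod_cast (by linarith :
    (0 : ℝ) < finrank ℝ E))
  rcases eq_or_ne (v x) 0 with hvx | hvx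
  · rw [hvx, enorm_zero, ENNReal.zero_rpow_of_pos (by linarith), mul_zero]
    exact zero_le
  have hM₀ : maximalFunction μ (fun y => ‖fderiv ℝ v y‖ₑ) x ≠ 0 := fun h =>
    hvx (eq_zero_of_maximalFunction_fderiv_eq_zero μ hv hfin h)
  have hW₀ : localEnergy μ β (fun y => ‖v y‖ₑ ^ 2) x ≠ 0 := fun h => hvx <| by
    simpa using eq_zero_of_localEnergy_eq_zero μ
      ((ENNReal.continuous_pow 2).comp hv.continuous.enorm) hβ h
  rcases eq_or_ne (maximalFunction μ (fun y => ‖fderiv ℝ v y‖ₑ) x) ∞ with hM | hM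
  · simp [hM, ENNReal.top_rpow_of_pos hs, ENNReal.mul_top, hW₀, ENNReal.rpow_eq_zero_iff]
  exact mul_rpow_add_le_of_forall_le_add_mul hs.le zero_lt_four enorm_ne_top hM₀ hM
    (fun R hR => enorm_le_setLAverage_add_mul_maximalFunction μ hv x hR)
    fun R hR => mul_setLAverage_ball_rpow_four_le_mul_localEnergy μ hv.continuous.enorm.measurable
      hβ x hR

end Pointwise

section Holder

variable {α : Type*} [MeasurableSpace α] {μ : Measure α}

lemma lintegral_mul_rpow_rpow_le {W G : α → ℝ≥0∞} (hW : AEMeasurable W μ) (hG : AEMeasurable G μ)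
    {q s : ℝ} (hq : 0 < q) (hs : 0 ≤ s) :
    (∫⁻ x, (W x * G x ^ s) ^ (q / (s + q)) ∂μ) ^ ((s + q) / q) ≤
      (∫⁻ x, W x ∂μ) * (∫⁻ x, G x ^ q ∂μ) ^ (s / q) := by
  have hsq : 0 < s + q := by positivity
  have hpow (x : α) : (W x * G x ^ s) ^ (q / (s + q)) =
      W x ^ (q / (s + q)) * (G x ^ q) ^ (s / (s + q)) := by
    rw [ENNReal.mul_rpow_of_nonneg _ _ (by positivity), ← ENNReal.rpow_mul, ← ENNReal.rpow_mul]
    ring_nf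
  calc (∫⁻ x, (W x * G x ^ s) ^ (q / (s + q)) ∂μ) ^ ((s + q) / q)
      ≤ ((∫⁻ x, W x ∂μ) ^ (q / (s + q)) * (∫⁻ x, G x ^ q ∂μ) ^ (s / (s + q))) ^ ((s + q) / q) := by
        simp_rw [hpow]
        gcongr
        exact ENNReal.lintegral_mul_norm_pow_le hW (hG.pow_const q) (by positivity)
          (by positivity) (by field_simp; ring)
    _ = (∫⁻ x, W x ∂μ) * (∫⁻ x, G x ^ q ∂μ) ^ (s / q) := by
        rw [ENNReal.mul_rpow_of_nonneg _ _ (by positivity), ← ENNReal.rpow_mul,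
          ← ENNReal.rpow_mul, div_mul_div_cancel₀ hsq.ne', div_mul_div_cancel₀ hsq.ne',
          div_self hq.ne', ENNReal.rpow_one]

lemma eLpNorm_rpow_le_of_enorm_rpow_le {ε : Type*} [ENorm ε] {v : α → ε} {W G : α → ℝ≥0∞}
    (hW : AEMeasurable W μ) (hG : AEMeasurable G μ) {q s m : ℝ} (hq : 0 < q) (hs : 0 ≤ s)
    (hm : 0 < m) (h : ∀ x, ‖v x‖ₑ ^ m ≤ W x * G x ^ s) :
    eLpNorm v (ENNReal.ofReal (q * m / (s + q))) μ ^ m ≤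
      (∫⁻ x, W x ∂μ) * eLpNorm G (ENNReal.ofReal q) μ ^ s := by
  have hp : 0 < q * m / (s + q) := by positivity
  have hexp : m / (q * m / (s + q)) = (s + q) / q := by field_simp
  have hexp' : q * m / (s + q) = m * (q / (s + q)) := by ring
  rw [eLpNorm_eq_lintegral_rpow_enorm_toReal (by simpa using hp) ofReal_ne_top,
    eLpNorm_eq_lintegral_rpow_enorm_toReal (by simpa using hq) ofReal_ne_top,
    ENNReal.toReal_ofReal hp.le, ENNReal.toReal_ofReal hq.le, ← ENNReal.rpow_mul,
    ← ENNReal.rpow_mul, one_div_mul_eq_div, one_div_mul_eq_div]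
  calc (∫⁻ x, ‖v x‖ₑ ^ (q * m / (s + q)) ∂μ) ^ (m / (q * m / (s + q)))
      = (∫⁻ x, (‖v x‖ₑ ^ m) ^ (q / (s + q)) ∂μ) ^ ((s + q) / q) := by
        simp_rw [hexp, hexp', ENNReal.rpow_mul]
    _ ≤ (∫⁻ x, (W x * G x ^ s) ^ (q / (s + q)) ∂μ) ^ ((s + q) / q) := by
        gcongr with x
        exact h x
    _ ≤ _ := lintegral_mul_rpow_rpow_le hW hG hq hs

end Holder

section Hartree

variable {E F : Type*} [NormedAddCommGroup E] [NormedSpace ℝ E] [FiniteDimensional ℝ E]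
  [MeasurableSpace E] [BorelSpace E] [NormedAddCommGroup F] [NormedSpace ℝ F]
  (μ : Measure E) [μ.IsAddHaarMeasure]

lemma exists_forall_eLpNorm_maximalFunction_le {p : ℝ} (hp : 1 < p) :
    ∃ C : ℝ≥0∞, C ≠ ∞ ∧ ∀ f : E → ℝ≥0∞, Measurable f →
      eLpNorm (maximalFunction μ f) (ENNReal.ofReal p) μ ≤ C * eLpNorm f (ENNReal.ofReal p) μ := by
  have hp₀ : 0 < p := one_pos.trans hp
  have hdoubling (x : E) (r : ℝ) :
      μ (ball x (5 * r)) ≤ ENNReal.ofReal (5 ^ finrank ℝ E) * μ (ball x r) := by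
    rw [Measure.addHaar_ball_mul_of_pos μ x (by norm_num), Measure.addHaar_ball_center μ x]
  refine ⟨(ENNReal.ofReal (p / (p - 1)) * 2 ^ p * ENNReal.ofReal (5 ^ finrank ℝ E)) ^ (1 / p),
    ?_, fun f hf => ?_⟩
  · exact ENNReal.rpow_ne_top_of_nonneg (by positivity) (ENNReal.mul_ne_top (ENNReal.mul_ne_top
      ofReal_ne_top (ENNReal.rpow_ne_top_of_nonneg hp₀.le ofNat_ne_top)) ofReal_ne_top)
  · rw [eLpNorm_eq_lintegral_rpow_enorm_toReal (by simpa using hp₀) ofReal_ne_top,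
      eLpNorm_eq_lintegral_rpow_enorm_toReal (by simpa using hp₀) ofReal_ne_top,
      ENNReal.toReal_ofReal hp₀.le, ← ENNReal.mul_rpow_of_nonneg _ _ (by positivity)]
    gcongr
    exact lintegral_maximalFunction_rpow_le hdoubling hf hp

lemma exists_forall_enorm_rpow_le {γ : ℝ} (hγ : 0 ≤ γ) (hγ' : γ < finrank ℝ E) :
    ∃ D : ℝ≥0∞, D ≠ ∞ ∧ ∀ v : E → F, ContDiff ℝ 1 v → (∀ ε ≠ 0, μ {x | ε ≤ ‖v x‖ₑ} ≠ ∞) →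
      ∀ x, ‖v x‖ₑ ^ (finrank ℝ E - γ + 4) ≤
        D * localEnergy μ (finrank ℝ E + γ) (fun y => ‖v y‖ₑ ^ 2) x *
          maximalFunction μ (fun y => ‖fderiv ℝ v y‖ₑ) x ^ (finrank ℝ E - γ) := by
  have hball₀ : μ (ball (0 : E) 1) ^ 2 ≠ 0 := pow_ne_zero 2 (measure_ball_pos μ 0 one_pos).ne'
  have hball : μ (ball (0 : E) 1) ^ 2 ≠ ∞ := ENNReal.pow_ne_top measure_ball_lt_top.ne
  refine ⟨(μ (ball 0 1) ^ 2)⁻¹ * (2 ^ (finrank ℝ E - γ + 4) * 3 ^ (finrank ℝ E + γ)),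
    ?_, fun v hv hfin x => ?_⟩
  · exact ENNReal.mul_ne_top (ENNReal.inv_ne_top.2 hball₀) (ENNReal.mul_ne_top
      (ENNReal.rpow_ne_top_of_nonneg (by linarith) ofNat_ne_top)
      (ENNReal.rpow_ne_top_of_nonneg (by positivity) ofNat_ne_top))
  · have h := mul_enorm_rpow_le_localEnergy_mul_maximalFunction_rpow μ
      (β := finrank ℝ E + γ) (by positivity) (by linarith) hv hfin x
    rw [ENNReal.mul_le_iff_le_inv hball₀ hball,
      show 2 * (finrank ℝ E : ℝ) - (finrank ℝ E + γ) = finrank ℝ E - γ by ring] at h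
    exact h.trans_eq (by ring)

/-- Finiteness of the superlevel sets of `‖v‖` expresses decay at infinity. -/
theorem Lp_norm_pow_le_gradient_hartree_general {γ : ℝ} (hγ : 0 < γ) (hγ' : γ < finrank ℝ E) :
    ∃ C : ℝ, 0 < C ∧ ∀ v : E → F, ContDiff ℝ 1 v → (∀ ε ≠ 0, μ {x | ε ≤ ‖v x‖ₑ} ≠ ∞) →
      eLpNorm v (ENNReal.ofReal (2 * (finrank ℝ E - γ + 4) / (finrank ℝ E - γ + 2))) μ ^
          (finrank ℝ E - γ + 4) ≤
        ENNReal.ofReal C * eLpNorm (fderiv ℝ v) 2 μ ^ (finrank ℝ E - γ) *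
          rieszEnergy μ γ (fun x => ‖v x‖ₑ ^ 2) := by
  obtain ⟨B, hB, hmaximal⟩ := exists_forall_eLpNorm_maximalFunction_le μ one_lt_two
  obtain ⟨D, hD, hpointwise⟩ := exists_forall_enorm_rpow_le (F := F) μ hγ.le hγ'
  set s : ℝ := finrank ℝ E - γ
  have hs : 0 < s := sub_pos.2 hγ'
  have hβ : (finrank ℝ E : ℝ) < finrank ℝ E + γ := lt_add_of_pos_right _ hγ
  have hA := lintegral_enorm_add_one_rpow_neg_ne_top μ hβ
  set A := ∫⁻ w : E, (‖w‖ₑ + 1) ^ (-(finrank ℝ E + γ)) ∂μ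
  have hK : D * A * B ^ s ≠ ∞ := ENNReal.mul_ne_top (ENNReal.mul_ne_top hD hA)
    (ENNReal.rpow_ne_top_of_nonneg hs.le hB)
  refine ⟨(D * A * B ^ s).toReal + 1, by positivity, fun v hv hfin => ?_⟩
  let W := localEnergy μ (finrank ℝ E + γ) fun x => ‖v x‖ₑ ^ 2
  let M := maximalFunction μ fun x => ‖fderiv ℝ v x‖ₑ
  have hmeas : Measurable fun x => ‖v x‖ₑ ^ 2 := hv.continuous.enorm.measurable.pow_const 2
  have hW : Measurable W := measurable_localEnergy μ hmeas _
  have henergy : ∫⁻ x, W x ∂μ ≤ A * rieszEnergy μ γ fun x => ‖v x‖ₑ ^ 2 := by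
    simpa only [add_sub_cancel_left] using lintegral_localEnergy_le μ hmeas hβ
  have hgradient : eLpNorm M (ENNReal.ofReal 2) μ ≤ B * eLpNorm (fderiv ℝ v) 2 μ := by
    simpa using hmaximal _ (hv.continuous_fderiv one_ne_zero).enorm.measurable
  calc eLpNorm v (ENNReal.ofReal (2 * (s + 4) / (s + 2))) μ ^ (s + 4)
      ≤ (∫⁻ x, D * W x ∂μ) * eLpNorm M (ENNReal.ofReal 2) μ ^ s :=
        eLpNorm_rpow_le_of_enorm_rpow_le (hW.const_mul D).aemeasurable
          (measurable_maximalFunction _).aemeasurable two_pos hs.le (by positivity)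
          (hpointwise v hv hfin)
    _ ≤ D * (A * rieszEnergy μ γ fun x => ‖v x‖ₑ ^ 2) * (B * eLpNorm (fderiv ℝ v) 2 μ) ^ s := by
        rw [lintegral_const_mul _ hW]
        gcongr
    _ = D * A * B ^ s * eLpNorm (fderiv ℝ v) 2 μ ^ s * rieszEnergy μ γ fun x => ‖v x‖ₑ ^ 2 := by
        rw [ENNReal.mul_rpow_of_nonneg _ _ hs.le]
        ring
    _ ≤ _ := by
        gcongr
        exact (ENNReal.ofReal_toReal hK).ge.trans
          (ENNReal.ofReal_le_ofReal (le_add_of_nonneg_right zero_le_one))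

end Hartree

/-- For `d ≥ 5`, there is `C > 0` such that every smooth compactly supported
`v : ℝ^d → ℝ` satisfies
`‖v‖^d_{L^{2d/(d-2)}} ≤ C ‖∇v‖^{d-4}_{L²} ∬ v(x)² v(y)² |x-y|^{-4} dx dy`. -/
theorem Lp_norm_pow_le_gradient_hartree (d : ℕ) (hd : 5 ≤ d) :
    ∃ C : ℝ, 0 < C ∧
      ∀ v : EuclideanSpace ℝ (Fin d) → ℝ, ContDiff ℝ (⊤ : ℕ∞) v → HasCompactSupport v →
        eLpNorm v (ENNReal.ofReal (2 * d / (d - 2))) volume ^ d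
          ≤ ENNReal.ofReal C *
              eLpNorm (fun x => ‖fderiv ℝ v x‖) 2 volume ^ (d - 4) *
              ∫⁻ x, ∫⁻ y, ENNReal.ofReal ((v x) ^ 2) * ENNReal.ofReal ((v y) ^ 2) *
                ENNReal.ofReal (‖x - y‖ ^ (-4 : ℝ)) := by
  have : Nonempty (Fin d) := ⟨⟨0, by lia⟩⟩
  have hfinrank : finrank ℝ (EuclideanSpace ℝ (Fin d)) = d := finrank_euclideanSpace_fin
  obtain ⟨C, hC, hbound⟩ := Lp_norm_pow_le_gradient_hartree_general
    (E := EuclideanSpace ℝ (Fin d)) (F := ℝ) volume zero_lt_four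
    (by rw [hfinrank]; exact_mod_cast hd)
  refine ⟨C, hC, fun v hv hsupp => ?_⟩
  have h := hbound v (hv.of_le (by simp)) fun ε hε =>
    ((hv.continuous.memLp_of_hasCompactSupport (p := 1) hsupp).meas_ge_lt_top'_enorm one_ne_zero
      one_ne_top hε (by simp)).ne
  have hcast : (d : ℝ) - 4 = (d - 4 : ℕ) := by rw [Nat.cast_sub (by lia), Nat.cast_ofNat]
  have hdenom : (d : ℝ) - 4 + 2 = d - 2 := by ring
  have hsq (x : EuclideanSpace ℝ (Fin d)) : ENNReal.ofReal (v x ^ 2) = ‖v x‖ₑ ^ 2 := by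
    rw [← sq_abs, ENNReal.ofReal_pow (abs_nonneg _), ← Real.norm_eq_abs, ofReal_norm]
  simp_rw [hsq, eLpNorm_norm, ← rieszEnergy_eq_lintegral_ofReal]
  rw [hfinrank, hdenom, sub_add_cancel, hcast] at h
  exact_mod_cast h
end

section
/- Let d ≥ 5. There exists a constant C > 0 such that for every smooth compactly supported function v : ℝ^d → ℝ, ‖v‖_{L^{2d/(d−2)}(ℝ^d)} ≤ C ( ‖∇v‖²_{L²(ℝ^d)} + ∬_{ℝ^d×ℝ^d} v(x)² v(y)² |x − y|^{-4} dx dy )^{(d−2)/(2d)}; that is, the L^{2d/(d−2)} norm of v is controlled by the energy functional (kinetic gradient part plus Hartree potential part) raised to the power (d−2)/(2d). -/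
open MeasureTheory ENNReal

/-!
Put `α = 2 / (d - 2)` and `p = 2d / (d - 2)`, so that `p = 2 + 2α = αd`. After taking `p`-th powers
the claim is the additive bound `∫ ‖v‖ᵖ ≤ K (‖∇v‖² + H(v))`. All three integrals are invariant under
`v ↦ λ v(λ^α ·)`, and this scaling attaches to a point `x` with `a = ‖v x‖ > 0` the length `a^(-α)`.

The ball of that radius has volume `ω a^(-p)`, where `ω` is the volume of the unit ball, so
`ω ∫ ‖v‖ᵖ` is the integral of `‖v x‖^(2p)` over the pairs `(x, h)` with `‖h‖ < ‖v x‖^(-α)`. These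
pairs are of two kinds.

* If `‖v (x + h)‖ ≥ a / 2`, the Hartree integrand at `(x, x + h)` is at least `a^(2p) / 4`.
* Otherwise `‖v‖` falls from `a` to `a / 2` along the segment from `x` to `x + h`, so by
  Cauchy–Schwarz `a² ≤ 4 ‖h‖² ∫ ‖∇v(x + th)‖² dt`, the integral being over those `t ∈ [0, 1]` for
  which `b = ‖v(x + th)‖` lies in `[a / 2, a]`. There `‖h‖ < b^(-α)`, so `a^(2p)` is at most a
  constant times the integral of `b^p ‖∇v(x + th)‖²`. After the translation `z = x + th`,
  integrating over the ball `‖h‖ < ‖v z‖^(-α)` cancels the weight `b^p` and leaves `‖∇v‖²`.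
-/

open Set Metric Module

lemma exists_Icc_mapsTo_Icc {α β : Type*} [ConditionallyCompleteLinearOrder α] [TopologicalSpace α]
    [OrderTopology α] [DenselyOrdered α] [LinearOrder β] [TopologicalSpace β]
    [OrderClosedTopology β] {f : α → β} {a b : α} {c d : β} (hab : a ≤ b)
    (hf : ContinuousOn f (Icc a b)) (hcd : c ≤ d) (ha : d ≤ f a) (hb : f b ≤ c) :
    ∃ s t, a ≤ s ∧ s ≤ t ∧ t ≤ b ∧ f s = d ∧ f t = c ∧ MapsTo f (Icc s t) (Icc c d) := by
  have first_time : ∃ t, IsLeast (Icc a b ∩ f ⁻¹' Iic c) t :=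
    (isCompact_Icc.of_isClosed_subset (hf.preimage_isClosed_of_isClosed isClosed_Icc isClosed_Iic)
      inter_subset_left).exists_isLeast ⟨b, right_mem_Icc.2 hab, hb⟩
  obtain ⟨t, ⟨⟨hat, htb⟩, htc⟩, ht_least⟩ := first_time
  have hft : ContinuousOn f (Icc a t) := hf.mono (Icc_subset_Icc_right htb)
  have last_time : ∃ s, IsGreatest (Icc a t ∩ f ⁻¹' Ici d) s :=
    (isCompact_Icc.of_isClosed_subset (hft.preimage_isClosed_of_isClosed isClosed_Icc isClosed_Ici)
      inter_subset_left).exists_isGreatest ⟨a, left_mem_Icc.2 hat, ha⟩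
  obtain ⟨s, ⟨⟨has, hst⟩, hsd⟩, hs_greatest⟩ := last_time
  have hfs : ContinuousOn f (Icc s t) := hft.mono (Icc_subset_Icc_left has)
  have ht_eq : f t = c := by
    obtain ⟨u, hu, rfl⟩ := intermediate_value_Icc' hat hft ⟨htc, hcd.trans ha⟩
    rw [hu.2.antisymm (ht_least ⟨⟨hu.1, hu.2.trans htb⟩, le_rfl⟩)]
  have hs_eq : f s = d := by
    obtain ⟨u, hu, rfl⟩ := intermediate_value_Icc' hst hfs ⟨ht_eq.trans_le hcd, hsd⟩
    rw [hu.1.antisymm (hs_greatest ⟨⟨has.trans hu.1, hu.2⟩, le_rfl⟩)]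
  refine ⟨s, t, has, hst, htb, hs_eq, ht_eq, fun u hu => ⟨?_, ?_⟩⟩
  · by_contra! hlt
    have : u = t := hu.2.antisymm (ht_least ⟨⟨has.trans hu.1, hu.2.trans htb⟩, hlt.le⟩)
    exact hlt.ne (this ▸ ht_eq)
  · by_contra! hlt
    have : u = s := (hs_greatest ⟨⟨has.trans hu.1, hu.2⟩, hlt.le⟩).antisymm hu.1
    exact hlt.ne' (this ▸ hs_eq)

lemma sq_lintegral_le_measure_univ_mul {X : Type*} [MeasurableSpace X] {μ : Measure X}
    {f : X → ℝ≥0∞} (hf : AEMeasurable f μ) :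
    (∫⁻ x, f x ∂μ) ^ 2 ≤ μ univ * ∫⁻ x, f x ^ 2 ∂μ := by
  have holder := ENNReal.lintegral_mul_le_Lp_mul_Lq μ Real.HolderConjugate.two_two
    (aemeasurable_const (b := (1 : ℝ≥0∞))) hf
  simp only [Pi.mul_apply, one_mul, lintegral_const, ENNReal.rpow_ofNat, one_pow] at holder
  calc (∫⁻ x, f x ∂μ) ^ 2
      ≤ (μ univ ^ (1 / 2 : ℝ) * (∫⁻ x, f x ^ 2 ∂μ) ^ (1 / 2 : ℝ)) ^ 2 := by gcongr
    _ = μ univ * ∫⁻ x, f x ^ 2 ∂μ := by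
      rw [mul_pow, ← ENNReal.rpow_mul_natCast, ← ENNReal.rpow_mul_natCast]
      norm_num

lemma sq_ofReal_sub_le_lintegral_deriv {F : Type*} [NormedAddCommGroup F] [NormedSpace ℝ F]
    {γ : ℝ → F} (hγ : ContDiff ℝ 1 γ) {σ τ a b : ℝ} (hστ : σ ≤ τ) (hab : b ≤ a)
    (hσ : a ≤ ‖γ σ‖) (hτ : ‖γ τ‖ ≤ b) :
    ENNReal.ofReal (a - b) ^ 2 ≤
      ENNReal.ofReal (τ - σ) * ∫⁻ t in Icc σ τ ∩ {t | ‖γ t‖ ∈ Icc b a}, ‖deriv γ t‖ₑ ^ 2 := by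
  obtain ⟨s, t, hσs, hst, htτ, hs, ht, hmaps⟩ :=
    exists_Icc_mapsTo_Icc hστ hγ.continuous.norm.continuousOn hab hσ hτ
  have hsub : Icc s t ⊆ Icc σ τ ∩ {t | ‖γ t‖ ∈ Icc b a} := fun u hu =>
    ⟨Icc_subset_Icc hσs htτ hu, hmaps hu⟩
  have hdrop : ENNReal.ofReal (a - b) ≤ ∫⁻ u in Icc s t, ‖deriv γ u‖ₑ := by
    refine le_trans ?_ (enorm_sub_le_lintegral_deriv_of_contDiffOn_Icc hγ.contDiffOn hst)
    rw [← ofReal_norm, ← hs, ← ht, norm_sub_rev]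
    exact ENNReal.ofReal_le_ofReal (norm_sub_norm_le _ _)
  have hmeas : Measurable fun u => ‖deriv γ u‖ₑ :=
    (hγ.continuous_deriv le_rfl).enorm.measurable
  calc ENNReal.ofReal (a - b) ^ 2
      ≤ (∫⁻ u in Icc s t, ‖deriv γ u‖ₑ) ^ 2 := by gcongr
    _ ≤ ENNReal.ofReal (t - s) * ∫⁻ u in Icc s t, ‖deriv γ u‖ₑ ^ 2 := by
      simpa using sq_lintegral_le_measure_univ_mul (μ := volume.restrict (Icc s t))
        hmeas.aemeasurable
    _ ≤ _ := by gcongr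

lemma ofReal_rpow_mul_addHaar_ball {E : Type*} [NormedAddCommGroup E] [NormedSpace ℝ E]
    [FiniteDimensional ℝ E] [MeasurableSpace E] [BorelSpace E] (μ : Measure E)
    [μ.IsAddHaarMeasure] (α : ℝ) {a : ℝ} (ha : 0 < a) :
    ENNReal.ofReal (a ^ (α * finrank ℝ E)) * μ (ball 0 (a ^ (-α))) = μ (ball 0 1) := by
  rw [μ.addHaar_ball_of_pos _ (by positivity), ← mul_assoc, ← ENNReal.ofReal_mul (by positivity),
    ← Real.rpow_mul_natCast ha.le, ← Real.rpow_add ha]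
  simp

lemma lintegral_lintegral_lintegral_comp_add_smul {E : Type*} [AddCommGroup E] [Module ℝ E]
    [MeasurableSpace E] [MeasurableAdd₂ E] [MeasurableSMul₂ ℝ E] (μ : Measure E) [SFinite μ]
    [μ.IsAddRightInvariant] (ν : Measure ℝ) [SFinite ν] {Φ : E → E → ℝ≥0∞}
    (hΦ : Measurable Φ.uncurry) :
    ∫⁻ x, ∫⁻ h, ∫⁻ t, Φ (x + t • h) h ∂ν ∂μ ∂μ = ν univ * ∫⁻ x, ∫⁻ h, Φ x h ∂μ ∂μ := by
  have hinner (h : E) : ∫⁻ x, ∫⁻ t, Φ (x + t • h) h ∂ν ∂μ = ν univ * ∫⁻ x, Φ x h ∂μ := by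
    rw [lintegral_lintegral_swap (f := fun x t => Φ (x + t • h) h)
      (hΦ.comp (by fun_prop : Measurable fun q : E × ℝ => (q.1 + q.2 • h, h))).aemeasurable]
    simp only [lintegral_add_right_eq_self (fun x => Φ x h), lintegral_const, mul_comm]
  have hmeas : Measurable fun q : E × E => ∫⁻ t, Φ (q.1 + t • q.2) q.2 ∂ν :=
    Measurable.lintegral_prod_right' (f := fun q : (E × E) × ℝ => Φ (q.1.1 + q.2 • q.1.2) q.1.2)
      (hΦ.comp (by fun_prop : Measurable fun q : (E × E) × ℝ => (q.1.1 + q.2 • q.1.2, q.1.2)))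
  rw [lintegral_lintegral_swap hmeas.aemeasurable, lintegral_lintegral_swap hΦ.aemeasurable]
  simp only [hinner]
  exact lintegral_const_mul _ (hΦ.comp measurable_swap).lintegral_prod_right'

lemma pos_of_lt_rpow_neg {α a r : ℝ} (hα : α ≠ 0) (ha : 0 ≤ a) (hr : 0 ≤ r) (h : r < a ^ (-α)) :
    0 < a := by
  refine ha.lt_of_ne' ?_
  rintro rfl
  rw [Real.zero_rpow (neg_ne_zero.2 hα)] at h
  exact hr.not_gt h

lemma sq_eLpNorm_two_norm {X F : Type*} [MeasurableSpace X] [NormedAddCommGroup F] (f : X → F)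
    (μ : Measure X) : eLpNorm (fun x => ‖f x‖) 2 μ ^ 2 = ∫⁻ x, ‖f x‖ₑ ^ 2 ∂μ := by
  simpa using eLpNorm_nnreal_pow_eq_lintegral (μ := μ) (f := fun x => ‖f x‖)
    (two_ne_zero (α := NNReal))

section Energy

variable {E F : Type*} [NormedAddCommGroup E] [NormedAddCommGroup F]

/-- The integrand `‖v x‖² ‖v y‖² ‖x - y‖⁻⁴` of the Hartree energy. On the diagonal the kernel takes
the value `0 ^ (-4) = 0`. -/
noncomputable def hartreeDensity (v : E → F) (x y : E) : ℝ≥0∞ :=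
  ENNReal.ofReal (‖v x‖ ^ 2) * ENNReal.ofReal (‖v y‖ ^ 2) * ENNReal.ofReal (‖x - y‖ ^ (-4 : ℝ))

/-- The Hartree potential energy `H(v) = ∬ ‖v x‖² ‖v y‖² ‖x - y‖⁻⁴ dμ(x) dμ(y)`. -/
noncomputable def hartreeEnergy [MeasurableSpace E] (μ : Measure E) (v : E → F) : ℝ≥0∞ :=
  ∫⁻ x, ∫⁻ y, hartreeDensity v x y ∂μ ∂μ

lemma measurable_hartreeDensity [MeasurableSpace E] [BorelSpace E] [SecondCountableTopology E]
    {v : E → F} (hv : Continuous v) : Measurable (hartreeDensity v).uncurry := by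
  have hfst : Measurable fun q : E × E => ‖v q.1‖ := hv.norm.measurable.comp measurable_fst
  have hsnd : Measurable fun q : E × E => ‖v q.2‖ := hv.norm.measurable.comp measurable_snd
  simp only [Function.uncurry_def, hartreeDensity]
  fun_prop

lemma ofReal_rpow_le_hartreeDensity {α : ℝ} (hα : α ≠ 0) {v : E → F} {x h : E} (hh : h ≠ 0)
    (hhα : ‖h‖ < ‖v x‖ ^ (-α)) (hv : ‖v x‖ / 2 ≤ ‖v (x + h)‖) :
    ENNReal.ofReal (‖v x‖ ^ (4 + 4 * α)) ≤ 4 * hartreeDensity v x (x + h) := by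
  have ha : 0 < ‖v x‖ := pos_of_lt_rpow_neg hα (norm_nonneg _) (norm_nonneg _) hhα
  have hkernel : (‖v x‖ ^ (-α)) ^ (-4 : ℝ) ≤ ‖h‖ ^ (-4 : ℝ) :=
    Real.rpow_le_rpow_of_nonpos (norm_pos_iff.2 hh) hhα.le (by norm_num)
  have hsq : ‖v x‖ ^ 2 ≤ 4 * ‖v (x + h)‖ ^ 2 := by nlinarith
  have hsplit : ‖v x‖ ^ (4 + 4 * α) = ‖v x‖ ^ 2 * ‖v x‖ ^ 2 * (‖v x‖ ^ (-α)) ^ (-4 : ℝ) := by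
    rw [← pow_add, ← Real.rpow_natCast, ← Real.rpow_mul ha.le, ← Real.rpow_add ha]
    congr 1; push_cast; ring
  rw [hartreeDensity, sub_add_cancel_left, norm_neg, ← ENNReal.ofReal_mul (by positivity),
    ← ENNReal.ofReal_mul (by positivity), ← ENNReal.ofReal_ofNat 4,
    ← ENNReal.ofReal_mul (by positivity)]
  refine ENNReal.ofReal_le_ofReal ?_
  calc ‖v x‖ ^ (4 + 4 * α) ≤ ‖v x‖ ^ 2 * (4 * ‖v (x + h)‖ ^ 2) * ‖h‖ ^ (-4 : ℝ) := by
        rw [hsplit]; gcongr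
    _ = 4 * (‖v x‖ ^ 2 * ‖v (x + h)‖ ^ 2 * ‖h‖ ^ (-4 : ℝ)) := by ring

variable [NormedSpace ℝ E] [NormedSpace ℝ F]

/-- The weighted gradient density `‖v z‖^(2 + 2α) ‖∇v z‖²` at the point `z`, restricted to the
displacements `h` shorter than the length `‖v z‖^(-α)` which scaling attaches to `z`. Where
`v z = 0` that length is `0 ^ (-α) = 0`, and no displacement is kept. -/
noncomputable def gradDensity (α : ℝ) (v : E → F) (z h : E) : ℝ≥0∞ :=
  (ball 0 (‖v z‖ ^ (-α))).indicator
    (fun _ => ENNReal.ofReal (‖v z‖ ^ (2 + 2 * α)) * ‖fderiv ℝ v z‖ₑ ^ 2) h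

lemma measurable_gradDensity [MeasurableSpace E] [BorelSpace E] [SecondCountableTopology E]
    (α : ℝ) {v : E → F} (hv : ContDiff ℝ 1 v) : Measurable (gradDensity α v).uncurry := by
  have hnorm : Measurable fun q : E × E => ‖v q.1‖ :=
    hv.continuous.norm.measurable.comp measurable_fst
  have : Measurable fun q : E × E => ‖fderiv ℝ v q.1‖ₑ :=
    (hv.continuous_fderiv one_ne_zero).enorm.measurable.comp measurable_fst
  have hball : MeasurableSet {q : E × E | q.2 ∈ ball 0 (‖v q.1‖ ^ (-α))} := by
    simp only [mem_ball_zero_iff]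
    exact measurableSet_lt (by fun_prop) (by fun_prop)
  exact Measurable.indicator (f := fun q : E × E =>
    ENNReal.ofReal (‖v q.1‖ ^ (2 + 2 * α)) * ‖fderiv ℝ v q.1‖ₑ ^ 2) (by fun_prop) hball

lemma four_mul_rpow_mul_sq_le {α a b r : ℝ} (hα : 0 ≤ α) (ha : 0 ≤ a) (hb : 0 < b)
    (hab : a ≤ 2 * b) (hr : 0 ≤ r) (hrb : r ≤ b ^ (-α)) :
    4 * a ^ (2 + 4 * α) * r ^ 2 ≤ 2 ^ (4 + 4 * α) * b ^ (2 + 2 * α) := by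
  have htwo : (4 : ℝ) * 2 ^ (2 + 4 * α) = 2 ^ (4 + 4 * α) := by
    rw [show 4 + 4 * α = 2 + 4 * α + (2 : ℕ) by push_cast; ring, Real.rpow_add_natCast two_ne_zero]
    ring
  have hexp : b ^ (2 + 4 * α) * (b ^ (-α)) ^ 2 = b ^ (2 + 2 * α) := by
    rw [← Real.rpow_mul_natCast hb.le, ← Real.rpow_add hb]
    congr 1; push_cast; ring
  calc 4 * a ^ (2 + 4 * α) * r ^ 2 ≤ 4 * (2 * b) ^ (2 + 4 * α) * (b ^ (-α)) ^ 2 := by gcongr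
    _ = 4 * 2 ^ (2 + 4 * α) * (b ^ (2 + 4 * α) * (b ^ (-α)) ^ 2) := by
      rw [Real.mul_rpow two_pos.le hb.le]; ring
    _ = 2 ^ (4 + 4 * α) * b ^ (2 + 2 * α) := by rw [htwo, hexp]

lemma ofReal_mul_sq_enorm_fderiv_apply_le {α a : ℝ} (hα : 0 ≤ α) {v : E → F} {z h : E}
    (ha : 0 < a) (hza : ‖v z‖ ∈ Icc (a / 2) a) (hh : ‖h‖ < a ^ (-α)) :
    ENNReal.ofReal (4 * a ^ (2 + 4 * α)) * ‖fderiv ℝ v z h‖ₑ ^ 2 ≤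
      ENNReal.ofReal (2 ^ (4 + 4 * α)) * gradDensity α v z h := by
  have hb : 0 < ‖v z‖ := (half_pos ha).trans_le hza.1
  have hhb : ‖h‖ < ‖v z‖ ^ (-α) :=
    hh.trans_le (Real.rpow_le_rpow_of_nonpos hb hza.2 (neg_nonpos.2 hα))
  have hweight : ENNReal.ofReal (4 * a ^ (2 + 4 * α)) * ‖h‖ₑ ^ 2 ≤
      ENNReal.ofReal (2 ^ (4 + 4 * α)) * ENNReal.ofReal (‖v z‖ ^ (2 + 2 * α)) := by
    rw [← ofReal_norm, ← ENNReal.ofReal_pow (norm_nonneg _), ← ENNReal.ofReal_mul (by positivity),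
      ← ENNReal.ofReal_mul (by positivity)]
    exact ENNReal.ofReal_le_ofReal (four_mul_rpow_mul_sq_le hα ha.le hb (by linarith [hza.1])
      (norm_nonneg _) hhb.le)
  rw [gradDensity, indicator_of_mem (mem_ball_zero_iff.2 hhb)]
  calc ENNReal.ofReal (4 * a ^ (2 + 4 * α)) * ‖fderiv ℝ v z h‖ₑ ^ 2
      ≤ ENNReal.ofReal (4 * a ^ (2 + 4 * α)) * (‖fderiv ℝ v z‖ₑ * ‖h‖ₑ) ^ 2 := by
        gcongr; exact (fderiv ℝ v z).le_opENorm h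
    _ = ENNReal.ofReal (4 * a ^ (2 + 4 * α)) * ‖h‖ₑ ^ 2 * ‖fderiv ℝ v z‖ₑ ^ 2 := by ring
    _ ≤ ENNReal.ofReal (2 ^ (4 + 4 * α)) * ENNReal.ofReal (‖v z‖ ^ (2 + 2 * α)) *
          ‖fderiv ℝ v z‖ₑ ^ 2 := by gcongr
    _ = _ := mul_assoc _ _ _

lemma ofReal_rpow_le_lintegral_gradDensity {α : ℝ} (hα : 0 < α) {v : E → F} (hv : ContDiff ℝ 1 v)
    {x h : E} (hh : ‖h‖ < ‖v x‖ ^ (-α)) (hdrop : ‖v (x + h)‖ ≤ ‖v x‖ / 2) :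
    ENNReal.ofReal (‖v x‖ ^ (4 + 4 * α)) ≤ ENNReal.ofReal (2 ^ (4 + 4 * α)) *
      ∫⁻ t in Icc (0 : ℝ) 1, gradDensity α v (x + t • h) h := by
  set a := ‖v x‖ with ha_def
  have ha : 0 < a := pos_of_lt_rpow_neg hα.ne' (norm_nonneg _) (norm_nonneg _) hh
  set γ : ℝ → F := fun t => v (x + t • h) with hγ_def
  have hγ : ContDiff ℝ 1 γ := hv.comp (by fun_prop)
  have hγ' (t : ℝ) : deriv γ t = fderiv ℝ v (x + t • h) h := by
    have hline : HasDerivAt (fun t : ℝ => x + t • h) h t := by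
      simpa using ((hasDerivAt_id t).smul_const h).const_add x
    exact ((hv.differentiable one_ne_zero _).hasFDerivAt.comp_hasDerivAt t hline).deriv
  set S : Set ℝ := Icc 0 1 ∩ {t | ‖γ t‖ ∈ Icc (a / 2) a}
  have hS : MeasurableSet S :=
    measurableSet_Icc.inter (hγ.continuous.norm.measurable measurableSet_Icc)
  have hsegment : ENNReal.ofReal (a - a / 2) ^ 2 ≤ ∫⁻ t in S, ‖deriv γ t‖ₑ ^ 2 := by
    simpa only [sub_zero, ENNReal.ofReal_one, one_mul] using
      sq_ofReal_sub_le_lintegral_deriv hγ zero_le_one (half_le_self ha.le)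
        (by simp [hγ_def, ha_def]) (by simpa [hγ_def] using hdrop)
  calc ENNReal.ofReal (a ^ (4 + 4 * α))
      = ENNReal.ofReal (4 * a ^ (2 + 4 * α)) * ENNReal.ofReal (a - a / 2) ^ 2 := by
        rw [_root_.sub_half, ← ENNReal.ofReal_pow (by positivity),
          ← ENNReal.ofReal_mul (by positivity),
          show 4 + 4 * α = 2 + 4 * α + (2 : ℕ) by push_cast; ring, Real.rpow_add_natCast ha.ne']
        congr 1; ring
    _ ≤ ENNReal.ofReal (4 * a ^ (2 + 4 * α)) * ∫⁻ t in S, ‖deriv γ t‖ₑ ^ 2 := by gcongr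
    _ = ∫⁻ t in S, ENNReal.ofReal (4 * a ^ (2 + 4 * α)) * ‖fderiv ℝ v (x + t • h) h‖ₑ ^ 2 := by
        simp only [hγ', lintegral_const_mul' _ _ ENNReal.ofReal_ne_top]
    _ ≤ ∫⁻ t in S, ENNReal.ofReal (2 ^ (4 + 4 * α)) * gradDensity α v (x + t • h) h :=
        setLIntegral_mono' hS fun t ht => ofReal_mul_sq_enorm_fderiv_apply_le hα.le ha ht.2 hh
    _ ≤ ∫⁻ t in Icc 0 1, ENNReal.ofReal (2 ^ (4 + 4 * α)) * gradDensity α v (x + t • h) h :=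
        lintegral_mono_set inter_subset_left
    _ = _ := lintegral_const_mul' _ _ ENNReal.ofReal_ne_top

variable [FiniteDimensional ℝ E] [MeasurableSpace E] [BorelSpace E] (μ : Measure E)
  [μ.IsAddHaarMeasure] {α : ℝ}

lemma lintegral_gradDensity_le (hα : 0 < α) (hd : α * finrank ℝ E = 2 + 2 * α) (v : E → F)
    (z : E) : ∫⁻ h, gradDensity α v z h ∂μ ≤ μ (ball 0 1) * ‖fderiv ℝ v z‖ₑ ^ 2 := by
  simp only [gradDensity]
  rw [lintegral_indicator_const measurableSet_ball]
  rcases (norm_nonneg (v z)).eq_or_lt with hz | hz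
  · simp [← hz, Real.zero_rpow (by positivity : 2 + 2 * α ≠ 0)]
  · rw [mul_right_comm, ← hd, ofReal_rpow_mul_addHaar_ball μ α hz]

lemma measure_ball_mul_ofReal_rpow_le (hα : 0 < α) (hd : α * finrank ℝ E = 2 + 2 * α)
    {v : E → F} (hv : ContDiff ℝ 1 v) (x : E) :
    μ (ball 0 1) * ENNReal.ofReal (‖v x‖ ^ (2 + 2 * α)) ≤
      4 * ∫⁻ y, hartreeDensity v x y ∂μ + ENNReal.ofReal (2 ^ (4 + 4 * α)) *
        ∫⁻ h, (∫⁻ t in Icc (0 : ℝ) 1, gradDensity α v (x + t • h) h) ∂μ := by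
  rcases (norm_nonneg (v x)).eq_or_lt with hx | hx
  · simp [← hx, Real.zero_rpow (by positivity : 2 + 2 * α ≠ 0)]
  have : Nontrivial E := by
    refine Module.nontrivial_of_finrank_pos (R := ℝ) (Nat.cast_pos (α := ℝ).1 ?_)
    exact pos_of_mul_pos_right (hd ▸ by positivity) hα.le
  set Ψ : E → ℝ≥0∞ := fun h => 4 * hartreeDensity v x (x + h) +
    ENNReal.ofReal (2 ^ (4 + 4 * α)) * ∫⁻ t in Icc (0 : ℝ) 1, gradDensity α v (x + t • h) h
  have hpointwise : ∀ᵐ h ∂μ.restrict (ball 0 (‖v x‖ ^ (-α))),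
      ENNReal.ofReal (‖v x‖ ^ (4 + 4 * α)) ≤ Ψ h := by
    filter_upwards [ae_restrict_mem measurableSet_ball, Measure.ae_ne _ 0] with h hball hh
    rw [mem_ball_zero_iff] at hball
    rcases le_total (‖v x‖ / 2) ‖v (x + h)‖ with hlarge | hdrop
    · exact (ofReal_rpow_le_hartreeDensity hα.ne' hh hball hlarge).trans le_self_add
    · exact (ofReal_rpow_le_lintegral_gradDensity hα hv hball hdrop).trans le_add_self
  have hmeas : Measurable fun h => hartreeDensity v x (x + h) :=
    (measurable_hartreeDensity hv.continuous).of_uncurry_left.comp (measurable_const_add x)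
  have hsplit : ‖v x‖ ^ (4 + 4 * α) = ‖v x‖ ^ (2 + 2 * α) * ‖v x‖ ^ (2 + 2 * α) := by
    rw [← Real.rpow_add hx]; ring_nf
  calc μ (ball 0 1) * ENNReal.ofReal (‖v x‖ ^ (2 + 2 * α))
      = ∫⁻ _ in ball 0 (‖v x‖ ^ (-α)), ENNReal.ofReal (‖v x‖ ^ (4 + 4 * α)) ∂μ := by
        rw [setLIntegral_const, hsplit, ENNReal.ofReal_mul (by positivity), mul_assoc,
          ← ofReal_rpow_mul_addHaar_ball μ α hx, hd, mul_comm]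
    _ ≤ ∫⁻ h in ball 0 (‖v x‖ ^ (-α)), Ψ h ∂μ := lintegral_mono_ae hpointwise
    _ ≤ ∫⁻ h, Ψ h ∂μ := setLIntegral_le_lintegral _ _
    _ = _ := by
        simp only [Ψ]
        rw [lintegral_add_left (hmeas.const_mul 4), lintegral_const_mul _ hmeas,
          lintegral_add_left_eq_self (hartreeDensity v x),
          lintegral_const_mul' _ _ ENNReal.ofReal_ne_top]

theorem lintegral_rpow_enorm_le_energy (hα : 0 < α) (hd : α * finrank ℝ E = 2 + 2 * α)
    {v : E → F} (hv : ContDiff ℝ 1 v) :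
    ∫⁻ x, ‖v x‖ₑ ^ (2 + 2 * α) ∂μ ≤
      ENNReal.ofReal (2 ^ (4 + 4 * α)) * ∫⁻ x, ‖fderiv ℝ v x‖ₑ ^ 2 ∂μ +
        4 / μ (ball 0 1) * hartreeEnergy μ v := by
  set ω := μ (ball 0 1)
  have hω_pos : ω ≠ 0 := (measure_ball_pos _ _ one_pos).ne'
  have hω_top : ω ≠ ∞ := measure_ball_lt_top.ne
  have hgrad : ∫⁻ x, ∫⁻ h, (∫⁻ t in Icc (0 : ℝ) 1, gradDensity α v (x + t • h) h) ∂μ ∂μ ≤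
      ω * ∫⁻ x, ‖fderiv ℝ v x‖ₑ ^ 2 ∂μ := by
    rw [lintegral_lintegral_lintegral_comp_add_smul μ _ (measurable_gradDensity α hv),
      ← lintegral_const_mul' _ _ hω_top]
    simpa using lintegral_mono (lintegral_gradDensity_le μ hα hd v)
  rw [← ENNReal.mul_le_mul_iff_right hω_pos hω_top, ← lintegral_const_mul' _ _ hω_top]
  have hmeas : Measurable fun x => ∫⁻ y, hartreeDensity v x y ∂μ :=
    (measurable_hartreeDensity hv.continuous).lintegral_prod_right'
  calc ∫⁻ x, ω * ‖v x‖ₑ ^ (2 + 2 * α) ∂μ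
      = ∫⁻ x, ω * ENNReal.ofReal (‖v x‖ ^ (2 + 2 * α)) ∂μ := by
        simp only [← ofReal_norm,
          ENNReal.ofReal_rpow_of_nonneg (norm_nonneg _) (by positivity : 0 ≤ 2 + 2 * α)]
    _ ≤ ∫⁻ x, (4 * ∫⁻ y, hartreeDensity v x y ∂μ + ENNReal.ofReal (2 ^ (4 + 4 * α)) *
          ∫⁻ h, (∫⁻ t in Icc (0 : ℝ) 1, gradDensity α v (x + t • h) h) ∂μ) ∂μ :=
        lintegral_mono (measure_ball_mul_ofReal_rpow_le μ hα hd hv)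
    _ = 4 * hartreeEnergy μ v + ENNReal.ofReal (2 ^ (4 + 4 * α)) *
          ∫⁻ x, ∫⁻ h, (∫⁻ t in Icc (0 : ℝ) 1, gradDensity α v (x + t • h) h) ∂μ ∂μ := by
        rw [lintegral_add_left (hmeas.const_mul 4), lintegral_const_mul _ hmeas,
          lintegral_const_mul' _ _ ENNReal.ofReal_ne_top, hartreeEnergy]
    _ ≤ 4 * hartreeEnergy μ v + ENNReal.ofReal (2 ^ (4 + 4 * α)) *
          (ω * ∫⁻ x, ‖fderiv ℝ v x‖ₑ ^ 2 ∂μ) := by gcongr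
    _ = _ := by
        rw [mul_add, ← mul_assoc ω (4 / ω), ENNReal.mul_div_cancel hω_pos hω_top]
        ring

lemma exists_lintegral_rpow_enorm_le_energy (hα : 0 < α) (hd : α * finrank ℝ E = 2 + 2 * α) :
    ∃ K : ℝ, 0 < K ∧ ∀ v : E → F, ContDiff ℝ 1 v →
      ∫⁻ x, ‖v x‖ₑ ^ (2 + 2 * α) ∂μ ≤
        ENNReal.ofReal K * (∫⁻ x, ‖fderiv ℝ v x‖ₑ ^ 2 ∂μ + hartreeEnergy μ v) := by
  have hω : 0 < μ.real (ball 0 1) :=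
    ENNReal.toReal_pos (measure_ball_pos _ _ one_pos).ne' measure_ball_lt_top.ne
  refine ⟨2 ^ (4 + 4 * α) + 4 / μ.real (ball 0 1), by positivity, fun v hv => ?_⟩
  refine (lintegral_rpow_enorm_le_energy μ hα hd hv).trans ?_
  rw [mul_add]
  gcongr
  · exact le_add_of_nonneg_right (by positivity)
  · rw [← ofReal_measureReal measure_ball_lt_top.ne, ← ENNReal.ofReal_ofNat 4,
      ← ENNReal.ofReal_div_of_pos hω]
    exact ENNReal.ofReal_le_ofReal (le_add_of_nonneg_left (by positivity))

theorem Lp_norm_le_energy_pow_general {d : ℕ} (hE : finrank ℝ E = d) (hd : 2 < d) :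
    ∃ C : ℝ, 0 < C ∧ ∀ v : E → F, ContDiff ℝ 1 v →
      eLpNorm v (ENNReal.ofReal (2 * d / (d - 2))) μ
        ≤ ENNReal.ofReal C *
            (eLpNorm (fun x => ‖fderiv ℝ v x‖) 2 μ ^ 2 + hartreeEnergy μ v)
              ^ (((d : ℝ) - 2) / (2 * d)) := by
  have hd' : (0 : ℝ) < d - 2 := sub_pos.2 (by exact_mod_cast hd)
  obtain ⟨α, hα_def⟩ : ∃ α : ℝ, α = 2 / (d - 2) := ⟨_, rfl⟩
  have hα : 0 < α := hα_def ▸ by positivity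
  have hp : (2 * d / (d - 2) : ℝ) = 2 + 2 * α := by rw [hα_def]; field_simp; ring
  have hp_inv : ((d : ℝ) - 2) / (2 * d) = 1 / (2 + 2 * α) := by rw [← hp, one_div_div]
  have hαd : α * finrank ℝ E = 2 + 2 * α := by rw [← hp, hE, hα_def]; ring
  obtain ⟨K, hK, hbound⟩ := exists_lintegral_rpow_enorm_le_energy (F := F) μ hα hαd
  refine ⟨K ^ (1 / (2 + 2 * α)), by positivity, fun v hv => ?_⟩
  rw [hp, hp_inv, ← ENNReal.ofReal_rpow_of_pos hK, ← ENNReal.mul_rpow_of_nonneg _ _ (by positivity),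
    eLpNorm_eq_lintegral_rpow_enorm_toReal (ENNReal.ofReal_pos.2 (by positivity)).ne'
      ENNReal.ofReal_ne_top, ENNReal.toReal_ofReal (by positivity), sq_eLpNorm_two_norm]
  gcongr
  exact hbound v hv

end Energy

/-- For `d ≥ 5`, there is `C > 0` such that every smooth compactly supported
`v : ℝ^d → ℝ` satisfies
`‖v‖_{L^{2d/(d-2)}} ≤ C (‖∇v‖²_{L²} + ∬ v(x)² v(y)² |x-y|^{-4} dx dy)^{(d-2)/(2d)}`. -/
theorem Lp_norm_le_energy_pow (d : ℕ) (hd : 5 ≤ d) :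
    ∃ C : ℝ, 0 < C ∧
      ∀ v : EuclideanSpace ℝ (Fin d) → ℝ, ContDiff ℝ (⊤ : ℕ∞) v → HasCompactSupport v →
        eLpNorm v (ENNReal.ofReal (2 * d / (d - 2))) volume
          ≤ ENNReal.ofReal C *
              (eLpNorm (fun x => ‖fderiv ℝ v x‖) 2 volume ^ 2
                + ∫⁻ x, ∫⁻ y, ENNReal.ofReal ((v x) ^ 2) * ENNReal.ofReal ((v y) ^ 2) *
                    ENNReal.ofReal (‖x - y‖ ^ (-4 : ℝ)))
                ^ (((d : ℝ) - 2) / (2 * d)) := by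
  obtain ⟨C, hC, hbound⟩ := Lp_norm_le_energy_pow_general (F := ℝ)
    (volume : Measure (EuclideanSpace ℝ (Fin d))) finrank_euclideanSpace_fin (by omega)
  refine ⟨C, hC, fun v hv _ => ?_⟩
  simpa only [hartreeEnergy, hartreeDensity, Real.norm_eq_abs, sq_abs] using
    hbound v (hv.of_le (by simp))
end
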